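/- arXiv:1504.03457 — 2 statements merged into one kernel-verified Lean document; each statement's English description precedes it below -/
import Mathlib

section
/- Let T > 0 and let g : ℝ × [0,∞) → ℝ be continuous and T-periodic in its first variable. Let N > 0 be an integer and assume there exists a constant η̂ such that μ_N x − η̂ ≤ g(t,x) ≤ μ_{N+1} x + η̂ for every t ∈ [0,T] and every x > 0. Assume moreover that for every τ ∈ [0,T]: ∫₀ᵀ limsup_{x→+∞} ( g(t,x) − μ_{N+1} x ) ψ_{N+1}(t+τ) dt < 0 and ∫₀ᵀ liminf_{x→+∞} ( g(t,x) − μ_N x ) ψ_N(t+τ) dt > 0. Then there exists a T-periodic 0-bouncing solution of the equation x'' + g(t,x) = 0. -/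
open Real Filter Set

/-- A `w`-bouncing solution of `x'' + p(t,x) = 0` (Bonheure–Fabry), defined on all of `ℝ`. -/
def IsBouncingSolution (w : ℝ) (p : ℝ → ℝ → ℝ) (x : ℝ → ℝ) : Prop :=
  Continuous x ∧
  (∀ t, w ≤ x t) ∧
  (∀ t0, w < x t0 →
    ∃ x' : ℝ → ℝ, (∀ᶠ s in nhds t0, HasDerivAt x (x' s) s) ∧
      HasDerivAt x' (-(p t0 (x t0))) t0) ∧
  (∀ t0, x t0 = w → (∀ᶠ s in nhdsWithin t0 {t0}ᶜ, w < x s) →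
    ∃ v : ℝ, HasDerivWithinAt x v (Iic t0) t0 ∧ HasDerivWithinAt x (-v) (Ici t0) t0) ∧
  (∀ t0 v, x t0 = w → v ≠ 0 →
    (HasDerivWithinAt x v (Iic t0) t0 ∨ HasDerivWithinAt x v (Ici t0) t0) →
    ∀ᶠ s in nhdsWithin t0 {t0}ᶜ, w < x s) ∧
  (∀ a b : ℝ, a < b → (∀ t ∈ Ioo a b, x t = w) → ∀ t ∈ Ioo a b, 0 ≤ p t w)

/-- `μ_j = (jπ/T)²`, the asymptote of the `j`-th Dancer–Fučík curve. -/
noncomputable def muEig (T : ℝ) (j : ℕ) : ℝ := ((j : ℝ) * π / T) ^ 2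

/-- `ψ_j(t) = sin(√μ_j t)` on `[0, T/j]`, extended by `(T/j)`-periodicity. -/
noncomputable def psiEig (T : ℝ) (j : ℕ) (t : ℝ) : ℝ :=
  Real.sin (Real.sqrt (muEig T j) * (Int.fract (t / (T / (j : ℝ))) * (T / (j : ℝ))))

/-!
A bouncing motion `x ≥ 0` is made regular by the Levi-Civita squaring `z = (x' + i x)²`, which
identifies the states `(0, v)` and `(0, -v)` before and after an impact. Replacing the impacts by a
weak repulsive force, `x'' + f t x = L² / x³`, gives motions whose squared coordinates converge to
bouncing ones as `L → 0`. By the Poincaré–Bohl theorem there is a periodic motion for each small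
`L > 0`, hence a periodic bouncing motion, unless some bouncing motion starting on a given circle
`‖z‖ = R` is carried by the period map outwards along its own ray.

In that case the angle of `z` grows over the period by a multiple `2πn` of `2π`. The angle can be
measured in the ellipses of any harmonic oscillator of frequency `ω` without changing `n`; it then
grows at the rate `2ω` up to a relative excess. For `ω = √μ_N` the excess has positive integral over
the period when `R` is large, so that `n > N`, and for `ω = √μ_{N+1}` it has negative integral, so
that `n < N + 1`. Otherwise there would be motions of arbitrarily large energy whose excess has the
wrong sign on average; such motions stay close in shape to `|sin (ω t + β)|`, and in the limit they
contradict the Landesman–Lazer conditions.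
-/

section PoincareBohl

lemma eq_of_exp_eq_one {α : Type*} [TopologicalSpace α] {s : Set α} (hs : IsPreconnected s)
    {f : α → ℂ} (hf : ContinuousOn f s) (hexp : ∀ x ∈ s, Complex.exp (f x) = 1)
    {x y : α} (hx : x ∈ s) (hy : y ∈ s) : f x = f y := by
  refine hs.constant_of_mapsTo (T := AddSubgroup.zmultiples (2 * π * Complex.I))
    ⟨NormedSpace.discreteTopology_zmultiples _⟩ hf (fun z hz => ?_) hx hy
  obtain ⟨n, hn⟩ := Complex.exp_eq_one_iff.mp (hexp z hz)
  exact AddSubgroup.mem_zmultiples_iff.mpr ⟨n, by rw [hn, zsmul_eq_mul]⟩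

lemma exists_eq_zero_of_eq_self_on_sphere {Q : ℂ → ℂ} (hQ : Continuous Q) {r : ℝ} (hr : 0 < r)
    (hcircle : ∀ z, ‖z‖ = r → Q z = z) : ∃ z, Q z = 0 := by
  by_contra! hne
  obtain ⟨F, ⟨-, hF⟩, -⟩ := Complex.isCoveringMapOn_exp.existsUnique_continuousMap_lifts ⟨Q, hQ⟩
    (a₀ := 0) (Complex.exp_log (hne 0)) hne
  let γ : ℝ → ℂ := fun θ => r * Complex.exp (θ * Complex.I)
  let d : ℝ → ℂ := fun θ => F (γ θ) - (Real.log r + θ * Complex.I)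
  have hd : Continuous d := by fun_prop
  have hexp_d : ∀ θ, Complex.exp (d θ) = 1 := fun θ => by
    have hγ : ‖γ θ‖ = r := by
      rw [norm_mul, Complex.norm_exp_ofReal_mul_I, Complex.norm_real, mul_one, norm_of_nonneg hr.le]
    have hγ0 : γ θ ≠ 0 := norm_pos_iff.mp (hγ.symm ▸ hr)
    have hlift : Complex.exp (F (γ θ)) = γ θ := (congrFun hF _).trans (hcircle _ hγ)
    rw [Complex.exp_sub, hlift, Complex.exp_add, ← Complex.ofReal_exp, Real.exp_log hr,
      div_self hγ0]
  have hconst : d 0 = d (2 * π) := eq_of_exp_eq_one isPreconnected_univ hd.continuousOn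
    (fun θ _ => hexp_d θ) (mem_univ 0) (mem_univ (2 * π))
  have hγ_period : γ (2 * π) = γ 0 := by simp [γ]
  simp [d, hγ_period] at hconst

/-- The pairs `(z, l * z)` with `‖z‖ = R` and `1 ≤ l`, described without the factor `l` so that
the set is visibly closed. -/
def outwardPairs (R : ℝ) : Set (ℂ × ℂ) :=
  {q | ‖q.1‖ = R ∧ R ≤ ‖q.2‖ ∧ R * q.2 = ‖q.2‖ * q.1}

lemma isClosed_outwardPairs (R : ℝ) : IsClosed (outwardPairs R) := by
  simp only [outwardPairs, ofPred_and]
  exact (isClosed_eq (by fun_prop) (by fun_prop)).inter <|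
    (isClosed_le (by fun_prop) (by fun_prop)).inter (isClosed_eq (by fun_prop) (by fun_prop))

lemma mk_mul_mem_outwardPairs {z : ℂ} {l : ℝ} (hl : 1 ≤ l) : (z, l * z) ∈ outwardPairs ‖z‖ := by
  have hnorm : ‖(l : ℂ) * z‖ = l * ‖z‖ := by
    rw [norm_mul, Complex.norm_real, norm_of_nonneg (zero_le_one.trans hl)]
  refine ⟨rfl, ?_, ?_⟩
  · exact hnorm ▸ le_mul_of_one_le_left (norm_nonneg z) hl
  · change (‖z‖ : ℂ) * (l * z) = ‖(l : ℂ) * z‖ * z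
    rw [hnorm]
    push_cast
    ring

lemma exists_eq_mul_of_mem_outwardPairs {R : ℝ} (hR : 0 < R) {q : ℂ × ℂ}
    (hq : q ∈ outwardPairs R) : ∃ l : ℝ, 1 ≤ l ∧ q.2 = l * q.1 := by
  obtain ⟨-, hle, heq⟩ := hq
  refine ⟨‖q.2‖ / R, (one_le_div hR).mpr hle, ?_⟩
  have hR0 : (R : ℂ) ≠ 0 := Complex.ofReal_ne_zero.mpr hR.ne'
  rw [Complex.ofReal_div, div_mul_eq_mul_div, ← heq, mul_div_cancel_left₀ _ hR0]

/-- The pairs `(z, w)` allowed by the Poincaré–Bohl alternative on the disc of radius `R`: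
either `w = z`, or `z` lies on the circle and `w` points outwards along it. -/
def bohlPairs (R : ℝ) : Set (ℂ × ℂ) :=
  {q | ‖q.1‖ ≤ R ∧ (q.2 = q.1 ∨ q ∈ outwardPairs R)}

lemma isClosed_bohlPairs (R : ℝ) : IsClosed (bohlPairs R) := by
  simp only [bohlPairs, ofPred_and, ofPred_or, ofPred_mem_eq]
  exact (isClosed_le (by fun_prop) (by fun_prop)).inter <|
    (isClosed_eq (by fun_prop) (by fun_prop)).union (isClosed_outwardPairs R)

lemma radialProj_mem_outwardPairs {R s : ℝ} (hR : 0 < R) (hs : 0 ≤ s) (hs1 : s ≤ 1) {z w : ℂ}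
    (hRz : R ≤ ‖z‖) (hz : z = s * w) : ((R / ‖z‖ : ℝ) * z, w) ∈ outwardPairs R := by
  have hz0 : 0 < ‖z‖ := hR.trans_le hRz
  have hs0 : s ≠ 0 := fun h => by simp [hz, h] at hz0
  have hl : 1 ≤ ‖z‖ / (R * s) :=
    (one_le_div (mul_pos hR (lt_of_le_of_ne hs hs0.symm))).mpr (by nlinarith)
  have hnorm : ‖((R / ‖z‖ : ℝ) : ℂ) * z‖ = R := by
    rw [norm_mul, Complex.norm_real, norm_of_nonneg (by positivity), div_mul_cancel₀ R hz0.ne']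
  have hw : w = (‖z‖ / (R * s) : ℝ) * ((R / ‖z‖ : ℝ) * z) := by
    have hsC : (s : ℂ) ≠ 0 := Complex.ofReal_ne_zero.mpr hs0
    calc w = ((1 / s : ℝ) : ℂ) * z := by rw [hz]; push_cast; field_simp
      _ = (‖z‖ / (R * s) : ℝ) * ((R / ‖z‖ : ℝ) * z) := by
        rw [← mul_assoc, ← Complex.ofReal_mul]
        congr 2
        field_simp
  have hout := mk_mul_mem_outwardPairs (z := (R / ‖z‖ : ℝ) * z) hl
  rwa [← hw, hnorm] at hout

-- With `r` the radial retraction onto the disc and `s` a cutoff vanishing for `2 * R ≤ ‖z‖`, the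
-- map `z ↦ z - s z * P (r z)` is the identity on a large circle, hence has a zero.
theorem exists_mem_bohlPairs {P : ℂ → ℂ} (hP : Continuous P) {R : ℝ} (hR : 0 < R) :
    ∃ z, (z, P z) ∈ bohlPairs R := by
  let r : ℂ → ℂ := fun z => (R / max R ‖z‖ : ℝ) * z
  let s : ℂ → ℝ := fun z => max 0 (min 1 (2 - ‖z‖ / R))
  have hr : Continuous r := by
    have : Continuous fun z : ℂ => R / max R ‖z‖ :=
      continuous_const.div (by fun_prop) fun z => (hR.trans_le (le_max_left _ _)).ne'
    fun_prop
  obtain ⟨z, hz⟩ := exists_eq_zero_of_eq_self_on_sphere (Q := fun z => z - s z * P (r z))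
    (by fun_prop) (r := 2 * R) (by positivity) fun z hz => by
      have hs : s z = 0 := by simp [s, hz, hR.ne']
      simp [hs]
  rw [sub_eq_zero] at hz
  rcases le_total ‖z‖ R with hzR | hRz
  · have hrz : r z = z := by simp [r, max_eq_left hzR, hR.ne']
    have hsz : s z = 1 := by
      have : ‖z‖ / R ≤ 1 := (div_le_one hR).mpr hzR
      simp only [s]
      rw [min_eq_left (by linarith), max_eq_right zero_le_one]
    rw [hrz, hsz, Complex.ofReal_one, one_mul] at hz
    exact ⟨z, hzR, Or.inl hz.symm⟩
  · have hout := radialProj_mem_outwardPairs hR (le_max_left _ _)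
      (max_le zero_le_one (min_le_left _ _)) hRz hz
    have hrz : r z = (R / ‖z‖ : ℝ) * z := by simp only [r, max_eq_right hRz]
    rw [← hrz] at hout
    exact ⟨r z, hout.1.le, Or.inr hout⟩

end PoincareBohl

open scoped Topology

section IntegralEquations

variable {E : Type*} [NormedAddCommGroup E]

lemma exists_subseq_tendsto_of_lipschitzOnWith [ProperSpace E] {a b : ℝ} (hab : a ≤ b)
    {f : ℕ → ℝ → E} {C : NNReal} {M : ℝ} (hLip : ∀ k, LipschitzOnWith C (f k) (Icc a b))
    (hM : ∀ k, ∀ t ∈ Icc a b, ‖f k t‖ ≤ M) :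
    ∃ φ : ℕ → ℕ, StrictMono φ ∧ ∃ Z : ℝ → E, Continuous Z ∧
      ∀ t ∈ Icc a b, Tendsto (fun k => f (φ k) t) atTop (𝓝 (Z t)) := by
  let G : ℕ → BoundedContinuousFunction (Icc a b) E := fun k =>
    BoundedContinuousFunction.mkOfCompact
      ⟨(Icc a b).domRestrict (f k), (hLip k).continuousOn.domRestrict⟩
  have hequi : UniformEquicontinuous
      (fun (g : range G) (t : Icc a b) => (g : BoundedContinuousFunction (Icc a b) E) t) := by
    apply LipschitzWith.uniformEquicontinuous _ C
    rintro ⟨_, k, rfl⟩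
    exact fun x y => hLip k x.2 y.2
  have hcomp : IsCompact (closure (range G)) :=
    BoundedContinuousFunction.arzela_ascoli (Metric.closedBall (0 : E) M)
      (isCompact_closedBall _ _) _ (by
        rintro _ t ⟨k, rfl⟩
        exact mem_closedBall_zero_iff.mpr (hM k t.1 t.2)) hequi.equicontinuous
  obtain ⟨g, -, φ, hφ, hlim⟩ :=
    hcomp.tendsto_subseq (x := G) fun k => subset_closure (mem_range_self k)
  refine ⟨φ, hφ, IccExtend hab g, g.continuous.Icc_extend', fun t ht => ?_⟩
  rw [IccExtend_of_mem hab g ht]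
  exact (BoundedContinuousFunction.tendsto_iff_tendstoUniformly.mp hlim).tendsto_at ⟨t, ht⟩

lemma tendsto_intervalIntegral_comp [ProperSpace E] {F : Type*} [NormedAddCommGroup F]
    [NormedSpace ℝ F] {H : ℝ → E → F} (hH : Continuous (Function.uncurry H)) {a b M : ℝ}
    {p : ℕ → ℝ → E} {q : ℝ → E} (hp : ∀ k, ContinuousOn (p k) (uIcc a b))
    (hM : ∀ k, ∀ s ∈ uIcc a b, ‖p k s‖ ≤ M)
    (hlim : ∀ s ∈ uIcc a b, Tendsto (fun k => p k s) atTop (𝓝 (q s))) :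
    Tendsto (fun k => ∫ s in a..b, H s (p k s)) atTop (𝓝 (∫ s in a..b, H s (q s))) := by
  have hcomp : IsCompact (uIcc a b ×ˢ Metric.closedBall (0 : E) M) :=
    isCompact_uIcc.prod (isCompact_closedBall 0 M)
  obtain ⟨C, hC⟩ := hcomp.exists_bound_of_continuousOn hH.continuousOn
  have hmeas : ∀ k, MeasureTheory.AEStronglyMeasurable (fun s => H s (p k s))
      (MeasureTheory.volume.restrict (uIoc a b)) := fun k =>
    ((hH.comp_continuousOn (continuousOn_id.prodMk (hp k))).mono
      uIoc_subset_uIcc).aestronglyMeasurable measurableSet_uIoc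
  refine intervalIntegral.tendsto_integral_filter_of_dominated_convergence (fun _ => C)
    (Eventually.of_forall hmeas) ?_ intervalIntegrable_const ?_
  · exact Eventually.of_forall fun k => Eventually.of_forall fun s hs =>
      hC (s, p k s) ⟨uIoc_subset_uIcc hs,
        mem_closedBall_zero_iff.mpr (hM k s (uIoc_subset_uIcc hs))⟩
  · exact Eventually.of_forall fun s hs => (hH.tendsto (s, q s)).comp
      (tendsto_const_nhds.prodMk_nhds (hlim s (uIoc_subset_uIcc hs)))

variable [NormedSpace ℝ E]

lemma continuousOn_intervalIntegral_of_continuousOn_prod {X : Type*} [TopologicalSpace X]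
    {g : X → ℝ → E} {s : Set X} {a b : ℝ} (hab : a ≤ b)
    (hg : ContinuousOn (Function.uncurry g) (s ×ˢ Icc a b)) :
    ContinuousOn (fun x => ∫ t in a..b, g x t) s := by
  have hproj : Continuous (Function.uncurry fun (x : s) (t : ℝ) => g x (projIcc a b hab t)) :=
    hg.comp_continuous (f := fun q : s × ℝ => ((q.1 : X), (projIcc a b hab q.2 : ℝ))) (by fun_prop)
      fun q => ⟨q.1.2, (projIcc a b hab q.2).2⟩
  rw [continuousOn_iff_continuous_domRestrict]
  refine (intervalIntegral.continuous_parametric_intervalIntegral_of_continuous'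
    (μ := MeasureTheory.volume) hproj a b).congr fun x =>
      intervalIntegral.integral_congr fun t ht => ?_
  rw [uIcc_of_le hab] at ht
  simp only [projIcc_of_mem hab ht]

lemma lipschitzOnWith_of_eq_add_integral {Y G : ℝ → E} {a b : ℝ} {C : NNReal}
    (hG : Continuous G) (hC : ∀ s ∈ Icc a b, ‖G s‖ ≤ C)
    (hY : ∀ t ∈ Icc a b, Y t = Y a + ∫ s in a..t, G s) : LipschitzOnWith C Y (Icc a b) := by
  refine LipschitzOnWith.of_dist_le_mul fun x hx y hy => ?_
  rw [dist_eq_norm, Real.dist_eq, hY x hx, hY y hy, add_sub_add_left_eq_sub,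
    intervalIntegral.integral_interval_sub_left (hG.intervalIntegrable _ _)
      (hG.intervalIntegrable _ _)]
  exact intervalIntegral.norm_integral_le_of_norm_le_const fun s hs =>
    hC s (ordConnected_Icc.uIcc_subset hy hx (uIoc_subset_uIcc hs))

lemma hasDerivAt_of_eq_add_integral [CompleteSpace E] {Y G : ℝ → E} {a b t : ℝ}
    (hG : Continuous G) (hY : ∀ t ∈ Icc a b, Y t = Y a + ∫ s in a..t, G s) (ht : t ∈ Ioo a b) :
    HasDerivAt Y (G t) t := by
  refine ((hG.integral_hasStrictDerivAt a t).hasDerivAt.const_add (Y a)).congr_of_eventuallyEq ?_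
  filter_upwards [Ioo_mem_nhds ht.1 ht.2] with s hs using hY s (Ioo_subset_Icc_self hs)

/-- Integral form of the differential equation `Z' = F t Z` on `[a, b]`. The solution is a
function on all of `ℝ`, whose values outside `[a, b]` are irrelevant. -/
structure IsIntegralSolutionOn (F : ℝ → E → E) (a b : ℝ) (Z : ℝ → E) : Prop where
  continuous : Continuous Z
  eq_add_integral : ∀ t ∈ Icc a b, Z t = Z a + ∫ s in a..t, F s (Z s)

/-- Integral form on `[0, T]` of the retarded equation `Y' t = F t (Y (t - δ))`, with `Y` frozen at
`Y 0` for negative times. -/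
structure IsDelayedSolutionOn (F : ℝ → E → E) (δ T : ℝ) (Y : ℝ → E) : Prop where
  continuous : Continuous Y
  eq_add_integral : ∀ t ∈ Icc 0 T, Y t = Y 0 + ∫ s in (0 : ℝ)..t, F s (Y (max (s - δ) 0))

/-- The method of steps for the retarded equation started at `z`: after `m` iterations the
function solves the equation up to time `m * δ`. -/
noncomputable def tonelli (F : ℝ → E → E) (δ : ℝ) : ℕ → E → ℝ → E
  | 0, z, _ => z
  | m + 1, z, t => z + ∫ s in (0 : ℝ)..t, F s (tonelli F δ m z (max (s - δ) 0))

section Tonelli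

variable {F : ℝ → E → E} {δ K T : ℝ}

lemma tonelli_apply_zero (m : ℕ) (z : E) : tonelli F δ m z 0 = z := by
  cases m <;> simp [tonelli]

lemma continuous_tonelli (hF : Continuous (Function.uncurry F)) (m : ℕ) :
    Continuous (Function.uncurry (tonelli F δ m)) := by
  induction m with
  | zero => exact continuous_fst
  | succ m ih =>
    have hint : Continuous (Function.uncurry fun (z : E) (s : ℝ) =>
        F s (tonelli F δ m z (max (s - δ) 0))) :=
      hF.comp (by fun_prop : Continuous fun q : E × ℝ =>
        (q.2, Function.uncurry (tonelli F δ m) (q.1, max (q.2 - δ) 0)))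
    exact continuous_fst.add (intervalIntegral.continuous_parametric_primitive_of_continuous
      (μ := MeasureTheory.volume) (a₀ := 0) hint)

lemma tonelli_succ_apply (hδ : 0 ≤ δ) (m : ℕ) (z : E) {t : ℝ} (ht : t ∈ Icc 0 (m * δ)) :
    tonelli F δ (m + 1) z t = tonelli F δ m z t := by
  induction m generalizing t with
  | zero =>
    have : t = 0 := by simpa using ht
    simp [tonelli, this]
  | succ m ih =>
    rw [tonelli, tonelli]
    congr 1
    refine intervalIntegral.integral_congr fun s hs => ?_
    rw [uIcc_of_le ht.1] at hs
    have hmem : max (s - δ) 0 ∈ Icc 0 (m * δ) := by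
      have := ht.2
      push_cast at this
      exact ⟨le_max_right _ _, max_le (by linarith [hs.2]) (by positivity)⟩
    simp only [ih hmem]

lemma isDelayedSolutionOn_tonelli (hF : Continuous (Function.uncurry F)) (hδ : 0 ≤ δ) {m : ℕ}
    (hT : T ≤ m * δ) (z : E) : IsDelayedSolutionOn F δ T (tonelli F δ m z) where
  continuous := (continuous_tonelli hF m).comp (by fun_prop : Continuous fun t : ℝ => (z, t))
  eq_add_integral t ht := by
    rw [← tonelli_succ_apply hδ m z ⟨ht.1, ht.2.trans hT⟩, tonelli, tonelli_apply_zero]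

lemma one_add_norm_tonelli_le (hK : ∀ t z, ‖F t z‖ ≤ K * (1 + ‖z‖)) (hδ : 0 ≤ δ) (m : ℕ) (z : E)
    {t : ℝ} (ht : 0 ≤ t) : 1 + ‖tonelli F δ m z t‖ ≤ (1 + ‖z‖) * Real.exp (K * t) := by
  have hK0 : 0 ≤ K := by simpa using (norm_nonneg _).trans (hK 0 0)
  induction m generalizing t with
  | zero => exact le_mul_of_one_le_right (by positivity) (Real.one_le_exp (by positivity))
  | succ m ih =>
    have hbound : ∀ s ∈ Ioc 0 t, ‖F s (tonelli F δ m z (max (s - δ) 0))‖ ≤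
        (1 + ‖z‖) * (K * Real.exp (K * s)) := fun s hs =>
      calc _ ≤ K * ((1 + ‖z‖) * Real.exp (K * max (s - δ) 0)) :=
            (hK _ _).trans (by gcongr; exact ih (le_max_right _ _))
        _ ≤ K * ((1 + ‖z‖) * Real.exp (K * s)) := by
            gcongr; exact max_le (by linarith) hs.1.le
        _ = _ := by ring
    have hprim : ∫ s in (0 : ℝ)..t, (1 + ‖z‖) * (K * Real.exp (K * s)) =
        (1 + ‖z‖) * (Real.exp (K * t) - 1) := by
      have hderiv : ∀ s ∈ uIcc 0 t,
          HasDerivAt (fun s => Real.exp (K * s)) (K * Real.exp (K * s)) s := fun s _ => by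
        simpa [mul_comm] using ((hasDerivAt_id s).const_mul K).exp
      rw [intervalIntegral.integral_const_mul, intervalIntegral.integral_eq_sub_of_hasDerivAt
        hderiv (Continuous.intervalIntegrable (by fun_prop) _ _)]
      simp
    have hint := intervalIntegral.norm_integral_le_of_norm_le
      (μ := MeasureTheory.volume) ht (Eventually.of_forall hbound)
      (Continuous.intervalIntegrable (by fun_prop) _ _)
    rw [hprim] at hint
    rw [tonelli]
    linarith [norm_add_le z (∫ s in (0 : ℝ)..t, F s (tonelli F δ m z (max (s - δ) 0)))]

end Tonelli

variable {F : ℝ → E → E} {K T : ℝ}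

lemma max_sub_zero_mem_Icc {δ s : ℝ} (hδ : 0 ≤ δ) (hs : s ∈ Icc 0 T) :
    max (s - δ) 0 ∈ Icc 0 T :=
  ⟨le_max_right _ _, max_le (by linarith [hs.2]) (hs.1.trans hs.2)⟩

lemma IsDelayedSolutionOn.lipschitzOnWith (hF : Continuous (Function.uncurry F))
    (hK : ∀ t z, ‖F t z‖ ≤ K * (1 + ‖z‖)) {δ M : ℝ} {Y : ℝ → E} (hδ : 0 ≤ δ)
    (hY : IsDelayedSolutionOn F δ T Y) (hM : ∀ t ∈ Icc 0 T, 1 + ‖Y t‖ ≤ M) :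
    LipschitzOnWith (K * M).toNNReal Y (Icc 0 T) := by
  have hK0 : 0 ≤ K := by simpa using (norm_nonneg _).trans (hK 0 0)
  have hcont := hY.continuous
  refine lipschitzOnWith_of_eq_add_integral
    (hF.comp (by fun_prop : Continuous fun s => (s, Y (max (s - δ) 0)))) (fun s hs => ?_)
    hY.eq_add_integral
  exact ((hK _ _).trans (mul_le_mul_of_nonneg_left (hM _ (max_sub_zero_mem_Icc hδ hs)) hK0)).trans
    (Real.le_coe_toNNReal _)

lemma isIntegralSolutionOn_of_tendsto_delayed [ProperSpace E] (hF : Continuous (Function.uncurry F))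
    {δ : ℕ → ℝ} (hδ : ∀ k, 0 ≤ δ k) (hδlim : Tendsto δ atTop (𝓝 0)) {Y : ℕ → ℝ → E} {Z : ℝ → E}
    (hY : ∀ k, IsDelayedSolutionOn F (δ k) T (Y k)) {C : NNReal} {M : ℝ}
    (hLip : ∀ k, LipschitzOnWith C (Y k) (Icc 0 T)) (hM : ∀ k, ∀ t ∈ Icc 0 T, ‖Y k t‖ ≤ M)
    (hZ : Continuous Z) (hlim : ∀ t ∈ Icc 0 T, Tendsto (fun k => Y k t) atTop (𝓝 (Z t))) :
    IsIntegralSolutionOn F 0 T Z := by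
  have hdelay : ∀ s ∈ Icc 0 T, Tendsto (fun k => Y k (max (s - δ k) 0)) atTop (𝓝 (Z s)) := by
    intro s hs
    have hshift : Tendsto (fun k => max (s - δ k) 0) atTop (𝓝[Icc 0 T] s) := by
      refine tendsto_nhdsWithin_iff.mpr
        ⟨?_, Eventually.of_forall fun k => max_sub_zero_mem_Icc (hδ k) hs⟩
      simpa [hs.1] using ((tendsto_const_nhds (x := s)).sub hδlim).max
        (tendsto_const_nhds (x := (0 : ℝ)))
    have hdist : Tendsto (fun k => dist (Y k (max (s - δ k) 0)) (Y k s)) atTop (𝓝 0) := by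
      have hto : Tendsto (fun k => C * dist (max (s - δ k) 0) s) atTop (𝓝 0) := by
        simpa using (tendsto_iff_dist_tendsto_zero.mp
          (tendsto_nhds_of_tendsto_nhdsWithin hshift)).const_mul (C : ℝ)
      exact squeeze_zero (fun _ => dist_nonneg) (fun k =>
        (hLip k).dist_le_mul _ (max_sub_zero_mem_Icc (hδ k) hs) s hs) hto
    exact (hlim s hs).congr_dist (by simpa only [dist_comm] using hdist)
  refine ⟨hZ, fun t ht => ?_⟩
  have hsub : uIcc 0 t ⊆ Icc 0 T := uIcc_of_le ht.1 ▸ Icc_subset_Icc_right ht.2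
  have hint := tendsto_intervalIntegral_comp hF (a := 0) (b := t)
    (p := fun k s => Y k (max (s - δ k) 0)) (q := Z) (M := M)
    (fun k => ((hY k).continuous.comp (by fun_prop)).continuousOn)
    (fun k s hs => hM k _ (max_sub_zero_mem_Icc (hδ k) (hsub hs))) fun s hs => hdelay s (hsub hs)
  have h0 := hlim 0 ⟨le_rfl, ht.1.trans ht.2⟩
  exact tendsto_nhds_unique (hlim t ht)
    ((h0.add hint).congr fun k => ((hY k).eq_add_integral t ht).symm)

theorem exists_isIntegralSolutionOn_endpoints_mem [ProperSpace E]
    (hF : Continuous (Function.uncurry F)) (hK : ∀ t z, ‖F t z‖ ≤ K * (1 + ‖z‖)) (hT : 0 ≤ T)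
    {S : Set (E × E)} (hS : IsClosed S) {R : ℝ} (hR : ∀ q ∈ S, ‖q.1‖ ≤ R)
    (hP : ∀ P : E → E, Continuous P → ∃ z, (z, P z) ∈ S) :
    ∃ Z, IsIntegralSolutionOn F 0 T Z ∧ (Z 0, Z T) ∈ S := by
  have hK0 : 0 ≤ K := by simpa using (norm_nonneg _).trans (hK 0 0)
  let δ : ℕ → ℝ := fun k => T * (1 / (k + 1))
  have hδ : ∀ k, 0 ≤ δ k := fun k => by positivity
  have hδlim : Tendsto δ atTop (𝓝 0) := by
    simpa only [mul_zero] using (tendsto_one_div_add_atTop_nhds_zero_nat (𝕜 := ℝ)).const_mul T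
  choose z hz using fun k => hP (fun z => tonelli F (δ k) (k + 1) z T)
    ((continuous_tonelli hF (k + 1)).comp (by fun_prop : Continuous fun z : E => (z, T)))
  let Y : ℕ → ℝ → E := fun k => tonelli F (δ k) (k + 1) (z k)
  have hY : ∀ k, IsDelayedSolutionOn F (δ k) T (Y k) := fun k =>
    isDelayedSolutionOn_tonelli hF (hδ k) (by simp only [δ]; push_cast; field_simp; rfl) (z k)
  have hM : ∀ k, ∀ t ∈ Icc 0 T, 1 + ‖Y k t‖ ≤ (1 + R) * Real.exp (K * T) := fun k t ht =>
    (one_add_norm_tonelli_le hK (hδ k) _ _ ht.1).trans <|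
      mul_le_mul (by linarith [hR _ (hz k)])
        (Real.exp_le_exp.mpr (mul_le_mul_of_nonneg_left ht.2 hK0)) (Real.exp_nonneg _)
        (by linarith [norm_nonneg (z 0), hR _ (hz 0)])
  have hM' : ∀ k, ∀ t ∈ Icc 0 T, ‖Y k t‖ ≤ (1 + R) * Real.exp (K * T) := fun k t ht =>
    by linarith [hM k t ht]
  have hLip := fun k => (hY k).lipschitzOnWith hF hK (hδ k) (hM k)
  obtain ⟨φ, hφ, Z, hZ, hlim⟩ := exists_subseq_tendsto_of_lipschitzOnWith hT hLip hM'
  refine ⟨Z, isIntegralSolutionOn_of_tendsto_delayed hF (fun k => hδ (φ k))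
    (hδlim.comp hφ.tendsto_atTop) (fun k => hY (φ k)) (fun k => hLip (φ k)) (fun k => hM' (φ k))
    hZ hlim, ?_⟩
  refine hS.mem_of_tendsto ((hlim 0 ⟨le_rfl, hT⟩).prodMk_nhds (hlim T ⟨hT, le_rfl⟩))
    (Eventually.of_forall fun k => ?_)
  simpa only [Y, tonelli_apply_zero] using hz (φ k)

end IntegralEquations

section LeviCivitaCoordinates

/-- The regularised norm of the Levi-Civita coordinate `z`. A point moving on `(0, ∞)` under the
repulsive force `L² / x³` is represented by `z = (x'² + L² / x² - x²) + 2 x x' i`; this quantity is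
then `x'² + L² / x² + x²`. -/
noncomputable def regNorm (L : ℝ) (z : ℂ) : ℝ := √(z.re ^ 2 + z.im ^ 2 + 4 * L ^ 2)

/-- The squared velocity, including the centrifugal term: `x'² + L² / x²`. -/
noncomputable def speedSq (L : ℝ) (z : ℂ) : ℝ := (regNorm L z + z.re) / 2

/-- The squared position `x²`. -/
noncomputable def posSq (L : ℝ) (z : ℂ) : ℝ := (regNorm L z - z.re) / 2

/-- The position `x`. -/
noncomputable def position (L : ℝ) (z : ℂ) : ℝ := √(posSq L z)

/-- The energy `x'² + L² / x² + ω² x²` of the oscillator of frequency `ω`. -/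
noncomputable def oscEnergy (L ω : ℝ) (z : ℂ) : ℝ := speedSq L z + ω ^ 2 * posSq L z

/-- The equation `x'' + f t x = L² / x³` in the coordinate `z`. -/
noncomputable def bounceField (f : ℝ → ℝ → ℝ) (L t : ℝ) (z : ℂ) : ℂ :=
  ⟨-(z.im / position L z * f t (position L z)) - z.im,
    2 * speedSq L z - 2 * (position L z * f t (position L z))⟩

@[fun_prop]
lemma continuous_regNorm : Continuous fun q : ℝ × ℂ => regNorm q.1 q.2 := by
  unfold regNorm; fun_prop

@[fun_prop]
lemma continuous_speedSq : Continuous fun q : ℝ × ℂ => speedSq q.1 q.2 := by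
  unfold speedSq; fun_prop

@[fun_prop]
lemma continuous_posSq : Continuous fun q : ℝ × ℂ => posSq q.1 q.2 := by
  unfold posSq; fun_prop

@[fun_prop]
lemma continuous_position : Continuous fun q : ℝ × ℂ => position q.1 q.2 := by
  unfold position; fun_prop

@[fun_prop]
lemma continuous_oscEnergy : Continuous fun q : ℝ × ℝ × ℂ => oscEnergy q.1 q.2.1 q.2.2 := by
  unfold oscEnergy; fun_prop

variable (L : ℝ) (z : ℂ)

lemma regNorm_sq : regNorm L z ^ 2 = z.re ^ 2 + z.im ^ 2 + 4 * L ^ 2 := Real.sq_sqrt (by positivity)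

lemma regNorm_nonneg : 0 ≤ regNorm L z := Real.sqrt_nonneg _

lemma abs_re_le_regNorm : |z.re| ≤ regNorm L z :=
  Real.abs_le_sqrt (by nlinarith [sq_nonneg z.im, sq_nonneg L])

lemma abs_im_le_regNorm : |z.im| ≤ regNorm L z :=
  Real.abs_le_sqrt (by nlinarith [sq_nonneg z.re, sq_nonneg L])

lemma speedSq_nonneg : 0 ≤ speedSq L z := by
  have := neg_le_of_abs_le (abs_re_le_regNorm L z)
  unfold speedSq; linarith

lemma posSq_nonneg : 0 ≤ posSq L z := by
  have := le_of_abs_le (abs_re_le_regNorm L z)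
  unfold posSq; linarith

lemma speedSq_add_posSq : speedSq L z + posSq L z = regNorm L z := by unfold speedSq posSq; ring

lemma speedSq_mul_posSq : speedSq L z * posSq L z = z.im ^ 2 / 4 + L ^ 2 := by
  unfold speedSq posSq; linear_combination regNorm_sq L z / 4

lemma position_nonneg : 0 ≤ position L z := Real.sqrt_nonneg _

lemma position_sq : position L z ^ 2 = posSq L z := Real.sq_sqrt (posSq_nonneg L z)

lemma oscEnergy_nonneg (ω : ℝ) : 0 ≤ oscEnergy L ω z := by
  have := speedSq_nonneg L z
  have := posSq_nonneg L z
  unfold oscEnergy; positivity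

lemma oscEnergy_one : oscEnergy L 1 z = regNorm L z := by
  rw [oscEnergy, one_pow, one_mul, speedSq_add_posSq]

lemma norm_le_regNorm : ‖z‖ ≤ regNorm L z :=
  Real.le_sqrt_of_sq_le (by rw [Complex.sq_norm, Complex.normSq_apply]; nlinarith [sq_nonneg L])

lemma regNorm_zero : regNorm 0 z = ‖z‖ := by
  rw [regNorm, Complex.norm_eq_sqrt_sq_add_sq]; simp

lemma sqrt_speedSq_mul_le : √(speedSq L z) * (1 + position L z) ≤ regNorm L z + 1 := by
  have hspeed := Real.sq_sqrt (speedSq_nonneg L z)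
  nlinarith [sq_nonneg (√(speedSq L z) - position L z), sq_nonneg (√(speedSq L z) - 1),
    position_sq L z, speedSq_add_posSq L z, speedSq_nonneg L z]

lemma position_mul_le : position L z * (1 + position L z) ≤ 2 * (regNorm L z + 1) := by
  nlinarith [sq_nonneg (position L z - 1), position_sq L z, speedSq_add_posSq L z,
    speedSq_nonneg L z]

variable {L}

lemma regNorm_le (hL : 0 ≤ L) : regNorm L z ≤ ‖z‖ + 2 * L := by
  refine Real.sqrt_le_iff.mpr ⟨by positivity, ?_⟩
  nlinarith [Complex.sq_norm z, Complex.normSq_apply z, mul_nonneg (norm_nonneg z) hL]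

lemma posSq_pos (hL : 0 < L) : 0 < posSq L z := by
  have hmul : 0 < speedSq L z * posSq L z := by rw [speedSq_mul_posSq]; positivity
  exact pos_of_mul_pos_right hmul (speedSq_nonneg L z)

lemma position_pos (hL : 0 < L) : 0 < position L z := Real.sqrt_pos.mpr (posSq_pos z hL)

lemma abs_im_div_position_le (hL : 0 < L) : |z.im / position L z| ≤ 2 * √(speedSq L z) := by
  have hx := position_pos z hL
  refine abs_le_of_sq_le_sq ?_ (by positivity)
  rw [div_pow, mul_pow, Real.sq_sqrt (speedSq_nonneg L z), div_le_iff₀ (by positivity), position_sq]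
  nlinarith [speedSq_mul_posSq L z, sq_nonneg L]

variable {f : ℝ → ℝ → ℝ}

lemma continuous_bounceField (hf : Continuous (Function.uncurry f)) (hL : 0 < L) :
    Continuous (Function.uncurry (bounceField f L)) := by
  have hvel : Continuous fun q : ℝ × ℂ => q.2.im / position L q.2 :=
    Continuous.div (by fun_prop) (by fun_prop) fun q => (position_pos q.2 hL).ne'
  exact Complex.equivRealProdCLM.symm.continuous.comp (f := fun q : ℝ × ℂ =>
    (-(q.2.im / position L q.2 * f q.1 (position L q.2)) - q.2.im,
      2 * speedSq L q.2 - 2 * (position L q.2 * f q.1 (position L q.2)))) (by fun_prop)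

lemma norm_bounceField_le {K : ℝ} (hK : ∀ t x, 0 ≤ x → |f t x| ≤ K * (1 + x)) (hL : 0 < L)
    (hL1 : L ≤ 1) (t : ℝ) : ‖bounceField f L t z‖ ≤ (18 * K + 9) * (1 + ‖z‖) := by
  have hK0 : 0 ≤ K := by simpa using (abs_nonneg _).trans (hK 0 0 le_rfl)
  have hx := position_nonneg L z
  have hre : |(bounceField f L t z).re| ≤ K * (2 * (regNorm L z + 1)) + regNorm L z := by
    refine (abs_sub _ _).trans (add_le_add ?_ (abs_im_le_regNorm L z))
    rw [abs_neg, abs_mul]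
    calc _ ≤ 2 * √(speedSq L z) * (K * (1 + position L z)) := by
          gcongr; exacts [abs_im_div_position_le z hL, hK t _ hx]
      _ = K * (2 * (√(speedSq L z) * (1 + position L z))) := by ring
      _ ≤ _ := by gcongr; exact sqrt_speedSq_mul_le L z
  have him : |(bounceField f L t z).im| ≤ 2 * regNorm L z + K * (4 * (regNorm L z + 1)) := by
    refine (abs_sub _ _).trans (add_le_add ?_ ?_)
    · rw [abs_of_nonneg (by have := speedSq_nonneg L z; positivity)]
      linarith [speedSq_add_posSq L z, posSq_nonneg L z]
    · rw [abs_mul, abs_mul, abs_two, abs_of_nonneg hx]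
      calc _ ≤ 2 * (position L z * (K * (1 + position L z))) := by gcongr; exact hK t _ hx
        _ = K * (2 * (position L z * (1 + position L z))) := by ring
        _ ≤ K * (2 * (2 * (regNorm L z + 1))) := by
          gcongr K * (2 * ?_); exact position_mul_le L z
        _ = _ := by ring
  have hS : K * (regNorm L z + 1) ≤ K * (3 * (1 + ‖z‖)) := by
    gcongr; linarith [regNorm_le z hL.le, norm_nonneg z]
  linarith [Complex.norm_le_abs_re_add_abs_im (bounceField f L t z), regNorm_le z hL.le,
    norm_nonneg z]

end LeviCivitaCoordinates

lemma hasDerivAt_integral_sub_mul {h : ℝ → ℝ} (hh : Continuous h) (a t : ℝ) :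
    HasDerivAt (fun t => ∫ r in a..t, (t - r) * h r) (∫ r in a..t, h r) t := by
  have hsplit : (fun t => ∫ r in a..t, (t - r) * h r) =
      fun t => t * (∫ r in a..t, h r) - ∫ r in a..t, r * h r := by
    funext t
    simp_rw [sub_mul]
    rw [intervalIntegral.integral_sub (Continuous.intervalIntegrable (by fun_prop) _ _)
      (Continuous.intervalIntegrable (by fun_prop) _ _), intervalIntegral.integral_const_mul]
  have hmoment : Continuous fun r => r * h r := by fun_prop
  rw [hsplit]
  exact (((hasDerivAt_id t).mul (hh.integral_hasStrictDerivAt a t).hasDerivAt).sub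
    (hmoment.integral_hasStrictDerivAt a t).hasDerivAt).congr_deriv (by simp)

/-- The relations between the Levi-Civita coordinates of a solution of `x'' + f t x = L² / x³` on
`[a, b]` that persist in the limit `L → 0`, where the vector field becomes singular. For `L = 0`
this is a weak form of the bouncing motion: a bounce leaves all these relations intact. -/
structure IsWeakBounce (f : ℝ → ℝ → ℝ) (L a b : ℝ) (Z : ℝ → ℂ) : Prop where
  continuous : Continuous Z
  posSq_eq : ∀ t ∈ Icc a b, posSq L (Z t) = posSq L (Z a) + ∫ r in a..t, (Z r).im
  im_eq : ∀ t ∈ Icc a b, (Z t).im = (Z a).im +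
    ∫ r in a..t, (2 * speedSq L (Z r) - 2 * (position L (Z r) * f r (position L (Z r))))
  abs_log_sub_le : ∀ ω, ∀ t ∈ Icc a b,
    |Real.log (oscEnergy L ω (Z t) + 1) - Real.log (oscEnergy L ω (Z a) + 1)| ≤
      ∫ r in a..t, 2 * √(speedSq L (Z r)) * |f r (position L (Z r)) - ω ^ 2 * position L (Z r)| /
        (oscEnergy L ω (Z r) + 1)
  convexOn : ConvexOn ℝ (Icc a b)
    fun t => position L (Z t) + ∫ r in a..t, (t - r) * f r (position L (Z r))

section Derivatives

variable {f : ℝ → ℝ → ℝ} {L t : ℝ} {Z : ℝ → ℂ} (hZ : HasDerivAt Z (bounceField f L t (Z t)) t)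
include hZ

lemma hasDerivAt_re : HasDerivAt (fun t => (Z t).re)
    (-((Z t).im / position L (Z t) * f t (position L (Z t))) - (Z t).im) t :=
  Complex.reCLM.hasFDerivAt.comp_hasDerivAt t hZ

lemma hasDerivAt_im : HasDerivAt (fun t => (Z t).im)
    (2 * speedSq L (Z t) - 2 * (position L (Z t) * f t (position L (Z t)))) t :=
  Complex.imCLM.hasFDerivAt.comp_hasDerivAt t hZ

lemma hasDerivAt_regNorm (hL : 0 < L) : HasDerivAt (fun t => regNorm L (Z t))
    ((Z t).im - (Z t).im / position L (Z t) * f t (position L (Z t))) t := by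
  have hpos : 0 < (Z t).re ^ 2 + (Z t).im ^ 2 + 4 * L ^ 2 := by positivity
  have hS : 0 < regNorm L (Z t) := Real.sqrt_pos.mpr hpos
  have hx := position_pos (Z t) hL
  refine (((((hasDerivAt_re hZ).pow 2).add ((hasDerivAt_im hZ).pow 2)).add_const
    (4 * L ^ 2)).sqrt hpos.ne').congr_deriv ?_
  have hspeed : 2 * speedSq L (Z t) - (Z t).re = regNorm L (Z t) := by unfold speedSq; ring
  have hposSq : (Z t).re + 2 * position L (Z t) ^ 2 = regNorm L (Z t) := by
    rw [position_sq]; unfold posSq; ring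
  change _ / (2 * regNorm L (Z t)) = _
  rw [div_eq_iff (by positivity)]
  field_simp
  simp only [Nat.cast_ofNat, Nat.add_one_sub_one, pow_one]
  linear_combination (2 * (Z t).im * position L (Z t)) * hspeed -
    (2 * (Z t).im * f t (position L (Z t))) * hposSq

lemma hasDerivAt_posSq (hL : 0 < L) : HasDerivAt (fun t => posSq L (Z t)) (Z t).im t :=
  (((hasDerivAt_regNorm hZ hL).sub (hasDerivAt_re hZ)).div_const 2).congr_deriv (by ring)

lemma hasDerivAt_speedSq (hL : 0 < L) : HasDerivAt (fun t => speedSq L (Z t))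
    (-((Z t).im / position L (Z t) * f t (position L (Z t)))) t :=
  (((hasDerivAt_regNorm hZ hL).add (hasDerivAt_re hZ)).div_const 2).congr_deriv (by ring)

lemma hasDerivAt_position (hL : 0 < L) :
    HasDerivAt (fun t => position L (Z t)) ((Z t).im / (2 * position L (Z t))) t :=
  (hasDerivAt_posSq hZ hL).sqrt (posSq_pos (Z t) hL).ne'

lemma hasDerivAt_oscEnergy (hL : 0 < L) (ω : ℝ) : HasDerivAt (fun t => oscEnergy L ω (Z t))
    (-((Z t).im / position L (Z t) * (f t (position L (Z t)) - ω ^ 2 * position L (Z t)))) t := by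
  have hx := position_pos (Z t) hL
  refine ((hasDerivAt_speedSq hZ hL).add
    ((hasDerivAt_posSq hZ hL).const_mul (ω ^ 2))).congr_deriv ?_
  field_simp
  ring

end Derivatives

section OfIntegralSolution

variable {f : ℝ → ℝ → ℝ} {L a b : ℝ} {Z : ℝ → ℂ} (hf : Continuous (Function.uncurry f))
  (hL : 0 < L) (hZ : IsIntegralSolutionOn (bounceField f L) a b Z)
include hf hL hZ

lemma hasDerivAt_of_isIntegralSolutionOn_bounceField {t : ℝ} (ht : t ∈ Ioo a b) :
    HasDerivAt Z (bounceField f L t (Z t)) t :=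
  hasDerivAt_of_eq_add_integral
    ((continuous_bounceField hf hL).comp (continuous_id.prodMk hZ.continuous)) hZ.eq_add_integral ht

lemma abs_log_oscEnergy_sub_le (ω : ℝ) {t : ℝ} (ht : t ∈ Icc a b) :
    |Real.log (oscEnergy L ω (Z t) + 1) - Real.log (oscEnergy L ω (Z a) + 1)| ≤
      ∫ r in a..t, 2 * √(speedSq L (Z r)) * |f r (position L (Z r)) - ω ^ 2 * position L (Z r)| /
        (oscEnergy L ω (Z r) + 1) := by
  have hZc := hZ.continuous
  have hpos : ∀ r, 0 < oscEnergy L ω (Z r) + 1 := fun r => by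
    linarith [oscEnergy_nonneg L (Z r) ω]
  have hvel : Continuous fun r => (Z r).im / position L (Z r) :=
    Continuous.div (by fun_prop) (by fun_prop) fun r => (position_pos (Z r) hL).ne'
  rw [← intervalIntegral.integral_eq_sub_of_hasDerivAt_of_le ht.1
    (ContinuousOn.log (by fun_prop) fun r _ => (hpos r).ne')
    (fun r hr => ((hasDerivAt_oscEnergy (hasDerivAt_of_isIntegralSolutionOn_bounceField hf hL hZ
      ⟨hr.1, hr.2.trans_le ht.2⟩) hL ω).add_const 1).log (hpos r).ne')
    (Continuous.intervalIntegrable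
      (Continuous.div (by fun_prop) (by fun_prop) fun r => (hpos r).ne') _ _), ← Real.norm_eq_abs]
  refine intervalIntegral.norm_integral_le_of_norm_le ht.1 (Eventually.of_forall fun r _ => ?_)
    (Continuous.intervalIntegrable
      (Continuous.div (by fun_prop) (by fun_prop) fun r => (hpos r).ne') _ _)
  rw [Real.norm_eq_abs, abs_div, abs_of_pos (hpos r), abs_neg, abs_mul]
  gcongr
  exacts [(hpos r).le, abs_im_div_position_le (Z r) hL]

lemma convexOn_position_add_integral : ConvexOn ℝ (Icc a b)
    fun t => position L (Z t) + ∫ r in a..t, (t - r) * f r (position L (Z r)) := by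
  have hZc := hZ.continuous
  have hforce : Continuous fun r => f r (position L (Z r)) := by fun_prop
  have hderiv : ∀ t ∈ interior (Icc a b), HasDerivAt Z (bounceField f L t (Z t)) t := fun t ht =>
    hasDerivAt_of_isIntegralSolutionOn_bounceField hf hL hZ (interior_Icc (a := a) ▸ ht)
  have hint : Continuous fun t => ∫ r in a..t, (t - r) * f r (position L (Z r)) :=
    continuous_iff_continuousAt.mpr fun t => (hasDerivAt_integral_sub_mul hforce a t).continuousAt
  refine convexOn_of_hasDerivWithinAt2_nonneg (convex_Icc a b)
    (f' := fun t => (Z t).im / (2 * position L (Z t)) + ∫ r in a..t, f r (position L (Z r)))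
    (f'' := fun t => L ^ 2 / position L (Z t) ^ 3) (Continuous.add (by fun_prop) hint).continuousOn
    (fun t ht => ?_) (fun t ht => ?_) fun t _ => by have := position_nonneg L (Z t); positivity
  · exact ((hasDerivAt_position (hderiv t ht) hL).add
      (hasDerivAt_integral_sub_mul hforce a t)).hasDerivWithinAt
  · have hx := position_pos (Z t) hL
    refine ((((hasDerivAt_im (hderiv t ht)).div ((hasDerivAt_position (hderiv t ht) hL).const_mul 2)
      (by positivity)).add (hforce.integral_hasStrictDerivAt a t).hasDerivAt).congr_deriv
        ?_).hasDerivWithinAt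
    have hmul := speedSq_mul_posSq L (Z t)
    rw [← position_sq] at hmul
    field_simp
    linear_combination 4 * hmul

lemma isWeakBounce_of_isIntegralSolutionOn : IsWeakBounce f L a b Z where
  continuous := hZ.continuous
  posSq_eq t ht := by
    have hZc := hZ.continuous
    rw [intervalIntegral.integral_eq_sub_of_hasDerivAt_of_le (f := fun t => posSq L (Z t)) ht.1
      (by fun_prop) (fun r hr => hasDerivAt_posSq
        (hasDerivAt_of_isIntegralSolutionOn_bounceField hf hL hZ ⟨hr.1, hr.2.trans_le ht.2⟩) hL)
      (Continuous.intervalIntegrable (by fun_prop) _ _), add_sub_cancel]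
  im_eq t ht := by
    have hZc := hZ.continuous
    rw [intervalIntegral.integral_eq_sub_of_hasDerivAt_of_le (f := fun t => (Z t).im) ht.1
      (by fun_prop) (fun r hr => hasDerivAt_im
        (hasDerivAt_of_isIntegralSolutionOn_bounceField hf hL hZ ⟨hr.1, hr.2.trans_le ht.2⟩))
      (Continuous.intervalIntegrable (by fun_prop) _ _), add_sub_cancel]
  abs_log_sub_le ω _ ht := abs_log_oscEnergy_sub_le hf hL hZ ω ht
  convexOn := convexOn_position_add_integral hf hL hZ

end OfIntegralSolution

section LimitOfWeakBounces

variable {a b : ℝ}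

lemma tendsto_intervalIntegral_comp_prodMk {h : ℝ → ℝ × ℂ → ℝ}
    (hh : Continuous (Function.uncurry h)) {L : ℕ → ℝ} {L₀ : ℝ} (hL : Tendsto L atTop (𝓝 L₀))
    {Y : ℕ → ℝ → ℂ} (hY : ∀ k, Continuous (Y k)) {M : ℝ} (hM : ∀ k, ∀ t ∈ Icc a b, ‖Y k t‖ ≤ M)
    {Z : ℝ → ℂ} (hlim : ∀ t ∈ Icc a b, Tendsto (fun k => Y k t) atTop (𝓝 (Z t)))
    {t : ℝ} (ht : t ∈ Icc a b) :
    Tendsto (fun k => ∫ r in a..t, h r (L k, Y k r)) atTop (𝓝 (∫ r in a..t, h r (L₀, Z r))) := by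
  obtain ⟨C, hC⟩ := hL.norm.bddAbove_range
  have hsub : uIcc a t ⊆ Icc a b := uIcc_of_le ht.1 ▸ Icc_subset_Icc_right ht.2
  exact tendsto_intervalIntegral_comp hh (M := max C M) (p := fun k r => (L k, Y k r))
    (fun k => (continuous_const.prodMk (hY k)).continuousOn)
    (fun k r hr => max_le_max (hC (mem_range_self k)) (hM k r (hsub hr)))
    fun r hr => hL.prodMk_nhds (hlim r (hsub hr))

variable {f : ℝ → ℝ → ℝ} (hf : Continuous (Function.uncurry f))
include hf

lemma isWeakBounce_of_tendsto {L : ℕ → ℝ} {L₀ : ℝ} (hL : Tendsto L atTop (𝓝 L₀)) {Y : ℕ → ℝ → ℂ}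
    (hY : ∀ k, IsWeakBounce f (L k) a b (Y k)) {M : ℝ} (hM : ∀ k, ∀ t ∈ Icc a b, ‖Y k t‖ ≤ M)
    {Z : ℝ → ℂ} (hZ : Continuous Z)
    (hlim : ∀ t ∈ Icc a b, Tendsto (fun k => Y k t) atTop (𝓝 (Z t))) :
    IsWeakBounce f L₀ a b Z := by
  have hpoint {h : ℝ × ℂ → ℝ} (hh : Continuous h) {t : ℝ} (ht : t ∈ Icc a b) :
      Tendsto (fun k => h (L k, Y k t)) atTop (𝓝 (h (L₀, Z t))) :=
    (hh.tendsto _).comp (hL.prodMk_nhds (hlim t ht))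
  have hint {h : ℝ → ℝ × ℂ → ℝ} (hh : Continuous (Function.uncurry h)) {t : ℝ} (ht : t ∈ Icc a b) :
      Tendsto (fun k => ∫ r in a..t, h r (L k, Y k r)) atTop
        (𝓝 (∫ r in a..t, h r (L₀, Z r))) :=
    tendsto_intervalIntegral_comp_prodMk hh hL (fun k => (hY k).continuous) hM hlim ht
  have hleft {t : ℝ} (ht : t ∈ Icc a b) : a ∈ Icc a b := left_mem_Icc.mpr (ht.1.trans ht.2)
  have hE : ∀ (ω : ℝ) (q : ℝ × ℂ), oscEnergy q.1 ω q.2 + 1 ≠ 0 := fun ω q => by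
    linarith [oscEnergy_nonneg q.1 q.2 ω]
  refine ⟨hZ, fun t ht => ?_, fun t ht => ?_, fun ω t ht => ?_, convex_Icc a b, ?_⟩
  · refine tendsto_nhds_unique (hpoint continuous_posSq ht) ?_
    refine ((hpoint continuous_posSq (hleft ht)).add (hint (h := fun _ q => q.2.im)
      (by fun_prop) ht)).congr fun k => ((hY k).posSq_eq t ht).symm
  · have him : Continuous fun q : ℝ × ℂ => q.2.im := by fun_prop
    refine tendsto_nhds_unique (hpoint him ht) ?_
    refine ((hpoint him (hleft ht)).add (hint (h := fun r q => 2 * speedSq q.1 q.2 -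
      2 * (position q.1 q.2 * f r (position q.1 q.2))) (by fun_prop) ht)).congr
      fun k => ((hY k).im_eq t ht).symm
  · have hlog : Continuous fun q : ℝ × ℂ => Real.log (oscEnergy q.1 ω q.2 + 1) :=
      Continuous.log (by fun_prop) (hE ω)
    exact le_of_tendsto_of_tendsto' ((hpoint hlog ht).sub (hpoint hlog (hleft ht))).abs
      (hint (h := fun r q => 2 * √(speedSq q.1 q.2) * |f r (position q.1 q.2) -
        ω ^ 2 * position q.1 q.2| / (oscEnergy q.1 ω q.2 + 1))
        (Continuous.div (by fun_prop) (by fun_prop) fun q => hE ω q.2) ht)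
      fun k => (hY k).abs_log_sub_le ω t ht
  · have hconv : ∀ t ∈ Icc a b, Tendsto (fun k => position (L k) (Y k t) +
        ∫ r in a..t, (t - r) * f r (position (L k) (Y k r))) atTop
        (𝓝 (position L₀ (Z t) + ∫ r in a..t, (t - r) * f r (position L₀ (Z r)))) := fun t ht =>
      (hpoint continuous_position ht).add
        (hint (h := fun r q => (t - r) * f r (position q.1 q.2)) (by fun_prop) ht)
    intro x hx y hy p q hp hq hpq
    exact le_of_tendsto_of_tendsto' (hconv _ (convex_Icc a b hx hy hp hq hpq))
      (((hconv x hx).const_smul p).add ((hconv y hy).const_smul q))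
      fun k => (hY k).convexOn.2 hx hy hp hq hpq

end LimitOfWeakBounces

section Growth

lemma le_exp_mul_of_log_sub_le {x y c : ℝ} (hx : 0 < x) (hy : 0 < y)
    (h : Real.log x - Real.log y ≤ c) : x ≤ Real.exp c * y := by
  rw [← Real.log_div hx.ne' hy.ne', Real.log_le_iff_le_exp (div_pos hx hy)] at h
  exact (div_le_iff₀ hy).mp h

variable {f : ℝ → ℝ → ℝ} {K : ℝ} (hK : ∀ t x, 0 ≤ x → |f t x| ≤ K * (1 + x)) {L a b t : ℝ}
  {Z : ℝ → ℂ} (hZ : IsWeakBounce f L a b Z) (ht : t ∈ Icc a b)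
include hK hZ ht

lemma abs_log_regNorm_sub_le :
    |Real.log (regNorm L (Z t) + 1) - Real.log (regNorm L (Z a) + 1)| ≤ 2 * (K + 1) * (b - a) := by
  have hK0 : 0 ≤ K := by simpa using (abs_nonneg _).trans (hK 0 0 le_rfl)
  have hbound : ∀ r ∈ uIoc a t, ‖2 * √(speedSq L (Z r)) *
      |f r (position L (Z r)) - 1 ^ 2 * position L (Z r)| / (regNorm L (Z r) + 1)‖ ≤
        2 * (K + 1) := by
    intro r _
    have hS := regNorm_nonneg L (Z r)
    have hx := position_nonneg L (Z r)
    have hdev : |f r (position L (Z r)) - 1 ^ 2 * position L (Z r)| ≤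
        (K + 1) * (1 + position L (Z r)) := by
      refine (abs_sub _ _).trans ?_
      rw [one_pow, one_mul, abs_of_nonneg hx]
      linarith [hK r _ hx]
    rw [Real.norm_of_nonneg (by positivity), div_le_iff₀ (by positivity)]
    calc _ ≤ 2 * √(speedSq L (Z r)) * ((K + 1) * (1 + position L (Z r))) := by gcongr
      _ = 2 * (K + 1) * (√(speedSq L (Z r)) * (1 + position L (Z r))) := by ring
      _ ≤ _ := by gcongr; exact sqrt_speedSq_mul_le L (Z r)
  have hlog := hZ.abs_log_sub_le 1 t ht
  simp only [oscEnergy_one] at hlog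
  refine (hlog.trans (le_abs_self _)).trans
    ((intervalIntegral.norm_integral_le_of_norm_le_const hbound).trans ?_)
  rw [abs_of_nonneg (sub_nonneg.mpr ht.1)]
  gcongr
  exact ht.2

lemma regNorm_add_one_le :
    regNorm L (Z t) + 1 ≤ Real.exp (2 * (K + 1) * (b - a)) * (regNorm L (Z a) + 1) := by
  exact le_exp_mul_of_log_sub_le (by linarith [regNorm_nonneg L (Z t)])
    (by linarith [regNorm_nonneg L (Z a)]) (le_of_abs_le (abs_log_regNorm_sub_le hK hZ ht))

lemma regNorm_left_add_one_le :
    regNorm L (Z a) + 1 ≤ Real.exp (2 * (K + 1) * (b - a)) * (regNorm L (Z t) + 1) := by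
  refine le_exp_mul_of_log_sub_le (by linarith [regNorm_nonneg L (Z a)])
    (by linarith [regNorm_nonneg L (Z t)]) ?_
  linarith [neg_le_of_abs_le (abs_log_regNorm_sub_le hK hZ ht)]

end Growth

lemma exists_subseq_tendsto_isWeakBounce {f : ℝ → ℝ → ℝ} (hf : Continuous (Function.uncurry f))
    {K : ℝ} (hK : ∀ t x, 0 ≤ x → |f t x| ≤ K * (1 + x)) {a b R : ℝ} (hab : a ≤ b) {L : ℕ → ℝ}
    (hL : ∀ k, L k ∈ Ioc (0 : ℝ) 1) (hL0 : Tendsto L atTop (𝓝 0)) {Y : ℕ → ℝ → ℂ}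
    (hY : ∀ k, IsIntegralSolutionOn (bounceField f (L k)) a b (Y k)) (hR : ∀ k, ‖Y k a‖ ≤ R) :
    ∃ M, (∀ k, ∀ t ∈ Icc a b, ‖Y k t‖ ≤ M) ∧ ∃ φ : ℕ → ℕ, StrictMono φ ∧ ∃ Z : ℝ → ℂ,
      IsWeakBounce f 0 a b Z ∧ ∀ t ∈ Icc a b, Tendsto (fun k => Y (φ k) t) atTop (𝓝 (Z t)) := by
  have hK0 : 0 ≤ K := by simpa using (abs_nonneg _).trans (hK 0 0 le_rfl)
  have hweak : ∀ k, IsWeakBounce f (L k) a b (Y k) := fun k =>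
    isWeakBounce_of_isIntegralSolutionOn hf (hL k).1 (hY k)
  let M := Real.exp (2 * (K + 1) * (b - a)) * (R + 2 + 1)
  have hM : ∀ k, ∀ t ∈ Icc a b, ‖Y k t‖ ≤ M := fun k t ht =>
    calc ‖Y k t‖ ≤ regNorm (L k) (Y k t) + 1 := by linarith [norm_le_regNorm (L k) (Y k t)]
      _ ≤ Real.exp (2 * (K + 1) * (b - a)) * (regNorm (L k) (Y k a) + 1) :=
          regNorm_add_one_le hK (hweak k) ht
      _ ≤ M := by
          refine mul_le_mul_of_nonneg_left ?_ (Real.exp_nonneg _)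
          linarith [regNorm_le (Y k a) (hL k).1.le, hR k, (hL k).2]
  have hLip : ∀ k, LipschitzOnWith ((18 * K + 9) * (1 + M)).toNNReal (Y k) (Icc a b) := fun k =>
    lipschitzOnWith_of_eq_add_integral
      ((continuous_bounceField hf (hL k).1).comp (continuous_id.prodMk (hY k).continuous))
      (fun s hs => (norm_bounceField_le (Y k s) hK (hL k).1 (hL k).2 s).trans
        ((mul_le_mul_of_nonneg_left (by linarith [hM k s hs]) (by linarith)).trans
          (Real.le_coe_toNNReal _))) (hY k).eq_add_integral
  obtain ⟨φ, hφ, Z, hZ, hlim⟩ := exists_subseq_tendsto_of_lipschitzOnWith hab hLip hM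
  exact ⟨M, hM, φ, hφ, Z, isWeakBounce_of_tendsto hf (hL0.comp hφ.tendsto_atTop)
    (fun k => hweak (φ k)) (fun k => hM (φ k)) hZ hlim, hlim⟩

section PeriodicExtension

variable {E : Type*} [NormedAddCommGroup E] {T : ℝ} (hT : 0 < T)
include hT

lemma exists_periodic_eqOn {Z : ℝ → E} (hZ : Continuous Z) (hZT : Z T = Z 0) :
    ∃ Y : ℝ → E, Continuous Y ∧ Function.Periodic Y T ∧ EqOn Y Z (Icc 0 T) := by
  have := Fact.mk hT
  let Y : ℝ → E := fun t => AddCircle.liftIco T 0 Z t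
  have hper : Function.Periodic Y T := fun t => by simp only [Y, AddCircle.coe_add_period]
  have hIco : EqOn Y Z (Ico 0 T) := fun t ht => AddCircle.liftIco_zero_coe_apply ht
  refine ⟨Y, ?_, hper, fun t ht => ?_⟩
  · exact (AddCircle.liftIco_continuous (by rw [zero_add, hZT]) hZ.continuousOn).comp
      (AddCircle.continuous_mk' T)
  · rcases ht.2.eq_or_lt with rfl | hlt
    · rw [hZT, ← hIco ⟨le_rfl, hT⟩, ← hper 0, zero_add]
    · exact hIco ⟨ht.1, hlt⟩

lemma tendsto_of_periodic {Y : ℕ → ℝ → E} {Z : ℝ → E} (hY : ∀ k, Function.Periodic (Y k) T)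
    (hZ : Function.Periodic Z T)
    (hlim : ∀ t ∈ Icc 0 T, Tendsto (fun k => Y k t) atTop (𝓝 (Z t))) (t : ℝ) :
    Tendsto (fun k => Y k t) atTop (𝓝 (Z t)) := by
  have hmod {W : ℝ → E} (hW : Function.Periodic W T) : W (toIcoMod hT 0 t) = W t :=
    hW.sub_zsmul_eq _
  simpa only [hmod (hY _), hmod hZ] using hlim _ (Ico_subset_Icc_self (toIcoMod_mem_Ico' hT t))

lemma isIntegralSolutionOn_of_periodic [NormedSpace ℝ E] {F : ℝ → E → E}
    (hF : Continuous (Function.uncurry F)) (hFper : ∀ t z, F (t + T) z = F t z) {Z : ℝ → E}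
    (hZ : IsIntegralSolutionOn F 0 T Z) (hZper : Function.Periodic Z T) (a b : ℝ) :
    IsIntegralSolutionOn F a b Z := by
  have hcont : Continuous fun s => F s (Z s) := hF.comp (continuous_id.prodMk hZ.continuous)
  have hFZ : Function.Periodic (fun s => F s (Z s)) T := fun s => by
    simp only [hFper, hZper s]
  have hmean : ∫ s in (0 : ℝ)..T, F s (Z s) = 0 := by
    have hZT : Z T = Z 0 := by simpa using hZper 0
    simpa [hZT] using hZ.eq_add_integral T ⟨hT.le, le_rfl⟩
  have hdiff : Function.Periodic (fun t => Z t - ∫ s in (0 : ℝ)..t, F s (Z s)) T := fun t => by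
    simp only [hZper t, hFZ.intervalIntegral_add_eq_add 0 t fun _ _ =>
      hcont.intervalIntegrable _ _, zero_add, hmean, add_zero]
  have hall : ∀ t, Z t - ∫ s in (0 : ℝ)..t, F s (Z s) = Z 0 := fun t => by
    obtain ⟨y, hy, hty⟩ := hdiff.exists_mem_Ico₀ hT t
    simp only [hty, hZ.eq_add_integral y (Ico_subset_Icc_self hy), add_sub_cancel_right]
  refine ⟨hZ.continuous, fun t _ => ?_⟩
  rw [← intervalIntegral.integral_interval_sub_left (hcont.intervalIntegrable 0 t)
    (hcont.intervalIntegrable 0 a), ← add_sub_assoc, eq_sub_iff_add_eq]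
  exact sub_eq_sub_iff_add_eq_add.mp ((hall t).trans (hall a).symm)

lemma exists_periodic_isIntegralSolutionOn [NormedSpace ℝ E] {F : ℝ → E → E}
    (hF : Continuous (Function.uncurry F)) (hFper : ∀ t z, F (t + T) z = F t z) {Z : ℝ → E}
    (hZ : IsIntegralSolutionOn F 0 T Z) (hZT : Z T = Z 0) :
    ∃ Y : ℝ → E, Function.Periodic Y T ∧ EqOn Y Z (Icc 0 T) ∧
      ∀ a b, IsIntegralSolutionOn F a b Y := by
  obtain ⟨Y, hY, hYper, hYZ⟩ := exists_periodic_eqOn hT hZ.continuous hZT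
  refine ⟨Y, hYper, hYZ, isIntegralSolutionOn_of_periodic hT hF hFper ⟨hY, fun t ht => ?_⟩ hYper⟩
  have hint : ∫ s in (0 : ℝ)..t, F s (Y s) = ∫ s in (0 : ℝ)..t, F s (Z s) := by
    refine intervalIntegral.integral_congr fun s hs => ?_
    rw [uIcc_of_le ht.1] at hs
    simp only [hYZ ⟨hs.1, hs.2.trans ht.2⟩]
  rw [hint, hYZ ht, hYZ ⟨le_rfl, hT.le⟩, hZ.eq_add_integral t ht]

end PeriodicExtension

lemma exists_periodic_isWeakBounce_of_tendsto {f : ℝ → ℝ → ℝ}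
    (hf : Continuous (Function.uncurry f)) {T : ℝ} (hT : 0 < T)
    (hper : ∀ t x, f (t + T) x = f t x) {L : ℕ → ℝ} (hL : ∀ k, 0 < L k)
    (hL0 : Tendsto L atTop (𝓝 0)) {Y : ℕ → ℝ → ℂ}
    (hY : ∀ k, IsIntegralSolutionOn (bounceField f (L k)) 0 T (Y k))
    (hYT : ∀ k, Y k T = Y k 0) {M : ℝ} (hM : ∀ k, ∀ t ∈ Icc 0 T, ‖Y k t‖ ≤ M) {Z : ℝ → ℂ}
    (hZ : Continuous Z) (hlim : ∀ t ∈ Icc 0 T, Tendsto (fun k => Y k t) atTop (𝓝 (Z t))) :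
    ∃ W, Function.Periodic W T ∧ ∀ a b, IsWeakBounce f 0 a b W := by
  have hZT : Z T = Z 0 := tendsto_nhds_unique (hlim T ⟨hT.le, le_rfl⟩) <|
    (hlim 0 ⟨le_rfl, hT.le⟩).congr fun k => (hYT k).symm
  obtain ⟨W, hW, hWper, hWZ⟩ := exists_periodic_eqOn hT hZ hZT
  choose P hPper hPY hP using fun k => exists_periodic_isIntegralSolutionOn hT
    (continuous_bounceField hf (hL k)) (fun t z => by simp only [bounceField, hper])
    (hY k) (hYT k)
  refine ⟨W, hWper, fun a b => isWeakBounce_of_tendsto hf hL0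
    (fun k => isWeakBounce_of_isIntegralSolutionOn hf (hL k) (hP k a b)) (M := M)
    (fun k t _ => ?_) hW fun t _ => tendsto_of_periodic hT hPper hWper (fun t ht => ?_) t⟩
  · obtain ⟨s, hs, hts⟩ := (hPper k).exists_mem_Ico₀ hT t
    rw [hts, hPY k (Ico_subset_Icc_self hs)]
    exact hM _ s (Ico_subset_Icc_self hs)
  · simpa only [hPY _ ht, hWZ ht] using hlim t ht

theorem exists_periodic_isWeakBounce {f : ℝ → ℝ → ℝ} (hf : Continuous (Function.uncurry f))
    {K : ℝ} (hK : ∀ t x, 0 ≤ x → |f t x| ≤ K * (1 + x)) {T R : ℝ} (hT : 0 < T) (hR : 0 < R)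
    (hper : ∀ t x, f (t + T) x = f t x)
    (hout : ∀ Z, IsWeakBounce f 0 0 T Z → (Z 0, Z T) ∉ outwardPairs R) :
    ∃ Z, Function.Periodic Z T ∧ ∀ a b, IsWeakBounce f 0 a b Z := by
  let L : ℕ → ℝ := fun k => 1 / (k + 1)
  have hL : ∀ k, L k ∈ Ioc (0 : ℝ) 1 := fun k =>
    ⟨by positivity, div_le_one_of_le₀ (by simp) (by positivity)⟩
  have hL0 : Tendsto L atTop (𝓝 0) := tendsto_one_div_add_atTop_nhds_zero_nat
  choose Y hY hYmem using fun k => exists_isIntegralSolutionOn_endpoints_mem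
    (continuous_bounceField hf (hL k).1) (fun t z => norm_bounceField_le z hK (hL k).1 (hL k).2 t)
    hT.le (isClosed_bohlPairs R) (fun _ hq => hq.1) fun _ hP => exists_mem_bohlPairs hP hR
  obtain ⟨M, hM, φ, hφ, Z, hZ, hlim⟩ :=
    exists_subseq_tendsto_isWeakBounce hf hK hT.le hL hL0 hY fun k => (hYmem k).1
  have hends := (hlim 0 ⟨le_rfl, hT.le⟩).prodMk_nhds (hlim T ⟨hT.le, le_rfl⟩)
  have hYT : ∀ᶠ k in atTop, Y (φ k) T = Y (φ k) 0 := by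
    filter_upwards [hends.eventually ((isClosed_outwardPairs R).isOpen_compl.mem_nhds (hout Z hZ))]
      with k hk using (hYmem (φ k)).2.resolve_right hk
  obtain ⟨k₀, hk₀⟩ := eventually_atTop.mp hYT
  have hψ : Tendsto (fun k => φ (k + k₀)) atTop atTop :=
    hφ.tendsto_atTop.comp (tendsto_add_atTop_nat k₀)
  exact exists_periodic_isWeakBounce_of_tendsto hf hT hper (fun k => (hL (φ (k + k₀))).1)
    (hL0.comp hψ) (fun k => hY _) (fun k => hk₀ _ (Nat.le_add_left _ _)) (fun k => hM _)
    hZ.continuous fun t ht => (hlim t ht).comp (tendsto_add_atTop_nat k₀)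

section Phase

/-- The phase of the harmonic oscillator of frequency `ω`: the unit complex number
`(x' + i ω x)² / (x'² + ω² x²)`, which is insensitive to a reversal of the velocity at `x = 0`. -/
noncomputable def phase (ω : ℝ) (z : ℂ) : ℂ :=
  ⟨(speedSq 0 z - ω ^ 2 * posSq 0 z) / oscEnergy 0 ω z, ω * z.im / oscEnergy 0 ω z⟩

/-- The speed at which the phase rotates along the solutions of `x'' + f t x = 0`. -/
noncomputable def angularSpeed (f : ℝ → ℝ → ℝ) (ω t : ℝ) (z : ℂ) : ℝ :=
  2 * ω * (speedSq 0 z + position 0 z * f t (position 0 z)) / oscEnergy 0 ω z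

variable {ω : ℝ} {z : ℂ}

lemma im_sq_eq (z : ℂ) : z.im ^ 2 = 4 * (speedSq 0 z * posSq 0 z) := by
  rw [speedSq_mul_posSq]; ring

lemma oscEnergy_pos (hω : ω ≠ 0) (hz : z ≠ 0) : 0 < oscEnergy 0 ω z := by
  have hnorm := norm_pos_iff.mpr hz
  rw [← regNorm_zero, ← speedSq_add_posSq] at hnorm
  have hspeed := speedSq_nonneg 0 z
  rcases (posSq_nonneg 0 z).eq_or_lt with hpos | hpos
  · rw [oscEnergy, ← hpos]; linarith
  · unfold oscEnergy; positivity

lemma speedSq_ofReal_mul {l : ℝ} (hl : 0 ≤ l) (z : ℂ) : speedSq 0 (l * z) = l * speedSq 0 z := by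
  simp only [speedSq, regNorm_zero, norm_mul, Complex.norm_of_nonneg hl, Complex.re_ofReal_mul]
  ring

lemma posSq_ofReal_mul {l : ℝ} (hl : 0 ≤ l) (z : ℂ) : posSq 0 (l * z) = l * posSq 0 z := by
  simp only [posSq, regNorm_zero, norm_mul, Complex.norm_of_nonneg hl, Complex.re_ofReal_mul]
  ring

lemma norm_phase (hω : ω ≠ 0) (hz : z ≠ 0) : ‖phase ω z‖ = 1 := by
  have hS := (oscEnergy_pos hω hz).ne'
  rw [Complex.norm_eq_sqrt_sq_add_sq, Real.sqrt_eq_one, phase, div_pow, div_pow, ← add_div,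
    div_eq_one_iff_eq (pow_ne_zero 2 hS), oscEnergy]
  linear_combination ω ^ 2 * im_sq_eq z

lemma phase_ofReal_mul (ω : ℝ) {l : ℝ} (hl : 0 < l) (z : ℂ) : phase ω (l * z) = phase ω z := by
  simp only [phase, oscEnergy, speedSq_ofReal_mul hl.le, posSq_ofReal_mul hl.le,
    Complex.im_ofReal_mul, mul_left_comm _ l, ← mul_sub, ← mul_add, mul_div_mul_left _ _ hl.ne']

lemma one_sub_re_phase (hω : ω ≠ 0) (hz : z ≠ 0) :
    1 - (phase ω z).re = 2 * (ω ^ 2 * posSq 0 z / oscEnergy 0 ω z) := by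
  have hS := (oscEnergy_pos hω hz).ne'
  change 1 - (speedSq 0 z - ω ^ 2 * posSq 0 z) / oscEnergy 0 ω z = _
  rw [eq_comm, eq_sub_iff_add_eq, ← mul_div_assoc, ← add_div, div_eq_one_iff_eq hS, oscEnergy]
  ring

lemma continuousOn_phase (hω : ω ≠ 0) : ContinuousOn (phase ω) {z | z ≠ 0} := by
  have hS : ∀ z ∈ {z : ℂ | z ≠ 0}, oscEnergy 0 ω z ≠ 0 := fun z hz => (oscEnergy_pos hω hz).ne'
  exact Complex.equivRealProdCLM.symm.continuous.comp_continuousOn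
    ((ContinuousOn.div (by fun_prop) (by fun_prop) hS).prodMk
      (ContinuousOn.div (by fun_prop) (by fun_prop) hS))

lemma phase_eq_div (hω : ω ≠ 0) (hz : posSq 0 z ≠ 0) : phase ω z =
    ((z.im / 2 : ℝ) + (ω * posSq 0 z : ℝ) * Complex.I) /
      ((z.im / 2 : ℝ) - (ω * posSq 0 z : ℝ) * Complex.I) := by
  have hB := (posSq_nonneg 0 z).lt_of_ne' hz
  have hA := speedSq_nonneg 0 z
  have hS : 0 < oscEnergy 0 ω z := by unfold oscEnergy; positivity
  have hden : ((z.im / 2 : ℝ) - (ω * posSq 0 z : ℝ) * Complex.I) ≠ 0 := fun h => by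
    simpa [hω, hz] using congrArg Complex.im h
  have hre : (phase ω z).re * (z.im / 2) + (phase ω z).im * (ω * posSq 0 z) = z.im / 2 := by
    simp only [phase]; field_simp; rw [oscEnergy]; ring
  have him : -((phase ω z).re * (ω * posSq 0 z)) + (phase ω z).im * (z.im / 2) =
      ω * posSq 0 z := by
    simp only [phase]; field_simp; rw [oscEnergy]; linear_combination im_sq_eq z
  rw [eq_div_iff hden]
  exact Complex.ext (by simpa using hre) (by simpa using him)

lemma hasDerivAt_div_conj {u v : ℝ → ℝ} {u' v' t : ℝ} (hu : HasDerivAt u u' t)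
    (hv : HasDerivAt v v' t) (h : u t ^ 2 + v t ^ 2 ≠ 0) :
    HasDerivAt (fun t => ((u t : ℂ) + v t * Complex.I) / (u t - v t * Complex.I))
      ((2 * (u t * v' - u' * v t) / (u t ^ 2 + v t ^ 2) : ℝ) * Complex.I *
        (((u t : ℂ) + v t * Complex.I) / (u t - v t * Complex.I))) t := by
  have hsq : ((u t : ℂ) + v t * Complex.I) * (u t - v t * Complex.I) =
      ((u t ^ 2 + v t ^ 2 : ℝ) : ℂ) := by
    push_cast; linear_combination (-(v t : ℂ) ^ 2) * Complex.I_sq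
  have hne := mul_ne_zero_iff.mp (hsq ▸ Complex.ofReal_ne_zero.mpr h)
  refine ((hu.ofReal_comp.add (hv.ofReal_comp.mul_const Complex.I)).div
    (hu.ofReal_comp.sub (hv.ofReal_comp.mul_const Complex.I)) hne.2).congr_deriv ?_
  simp only [Pi.add_apply, Pi.sub_apply]
  rw [Complex.ofReal_div, ← hsq, div_mul_eq_mul_div, div_mul_div_comm,
    div_eq_div_iff (pow_ne_zero 2 hne.2) (mul_ne_zero (hsq ▸ Complex.ofReal_ne_zero.mpr h) hne.2)]
  push_cast
  ring

end Phase

section PhaseRotation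

variable {f : ℝ → ℝ → ℝ} {a b ω : ℝ} {Z : ℝ → ℂ}

lemma hasDerivAt_posSq_of_isWeakBounce (hZ : IsWeakBounce f 0 a b Z) {t : ℝ} (ht : t ∈ Ioo a b) :
    HasDerivAt (fun t => posSq 0 (Z t)) (Z t).im t :=
  hasDerivAt_of_eq_add_integral (Complex.continuous_im.comp hZ.continuous) hZ.posSq_eq ht

variable (hf : Continuous (Function.uncurry f))
include hf

lemma continuousOn_angularSpeed (hZ : Continuous Z) {s : Set (ℝ × ℝ)}
    (hs : ∀ q ∈ s, q.1 ≠ 0 ∧ Z q.2 ≠ 0) :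
    ContinuousOn (fun q : ℝ × ℝ => angularSpeed f q.1 q.2 (Z q.2)) s := by
  exact ContinuousOn.div (by fun_prop) (by fun_prop)
    fun q hq => (oscEnergy_pos (hs q hq).1 (hs q hq).2).ne'

variable (hZ : IsWeakBounce f 0 a b Z)
include hZ

lemma hasDerivAt_im_of_isWeakBounce {t : ℝ} (ht : t ∈ Ioo a b) :
    HasDerivAt (fun t => (Z t).im)
      (2 * speedSq 0 (Z t) - 2 * (position 0 (Z t) * f t (position 0 (Z t)))) t := by
  have := hZ.continuous
  exact hasDerivAt_of_eq_add_integral (Y := fun t => (Z t).im) (G := fun r =>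
    2 * speedSq 0 (Z r) - 2 * (position 0 (Z r) * f r (position 0 (Z r))))
    (by fun_prop) hZ.im_eq ht

lemma hasDerivAt_phase (hω : ω ≠ 0) {t : ℝ} (ht : t ∈ Ioo a b) (hpos : posSq 0 (Z t) ≠ 0) :
    HasDerivAt (fun t => phase ω (Z t))
      (angularSpeed f ω t (Z t) * Complex.I * phase ω (Z t)) t := by
  have hZc := hZ.continuous
  have hposc : Continuous fun t => posSq 0 (Z t) := by fun_prop
  have hB := (posSq_nonneg 0 (Z t)).lt_of_ne' hpos
  have hE : 0 < oscEnergy 0 ω (Z t) := by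
    have := speedSq_nonneg 0 (Z t)
    unfold oscEnergy; positivity
  have hmod : ((Z t).im / 2) ^ 2 + (ω * posSq 0 (Z t)) ^ 2 =
      posSq 0 (Z t) * oscEnergy 0 ω (Z t) := by
    rw [oscEnergy]; linear_combination im_sq_eq (Z t) / 4
  rw [phase_eq_div hω hpos]
  refine ((hasDerivAt_div_conj ((hasDerivAt_im_of_isWeakBounce hf hZ ht).div_const 2)
    ((hasDerivAt_posSq_of_isWeakBounce hZ ht).const_mul ω)
    (by rw [hmod]; positivity)).congr_of_eventuallyEq ?_).congr_deriv ?_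
  · filter_upwards [hposc.continuousAt.eventually_ne hpos] with s hs using phase_eq_div hω hs
  · congr 3
    rw [hmod, angularSpeed, div_eq_div_iff (by positivity) (by positivity)]
    linear_combination ω * oscEnergy 0 ω (Z t) * im_sq_eq (Z t)

lemma countable_posSq_eq_zero (hne : ∀ t ∈ Icc a b, Z t ≠ 0) :
    {t ∈ Ioo a b | posSq 0 (Z t) = 0}.Countable := by
  set S := {t ∈ Ioo a b | posSq 0 (Z t) = 0}
  refine (countable_setOfPred_isolated_right_within (s := S)).mono fun t ⟨ht, hpos⟩ => ?_
  have hspeed : speedSq 0 (Z t) ≠ 0 := by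
    have hnorm := norm_ne_zero_iff.mpr (hne t (Ioo_subset_Icc_self ht))
    rwa [← regNorm_zero, ← speedSq_add_posSq, hpos, add_zero] at hnorm
  have hderiv := hasDerivAt_im_of_isWeakBounce hf hZ ht
  have hx : position 0 (Z t) = 0 := by rw [position, hpos, Real.sqrt_zero]
  have him : ∀ᶠ s in 𝓝[S ∩ Ioi t] t, (Z s).im ≠ 0 :=
    (hderiv.eventually_ne (c := 0) (by simpa [hx] using hspeed)).filter_mono
      (nhdsWithin_mono _ fun s hs => ne_of_gt hs.2)
  refine ⟨⟨ht, hpos⟩, empty_mem_iff_bot.mp ?_⟩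
  filter_upwards [him, self_mem_nhdsWithin] with s hs hsS
  exact hs (pow_eq_zero_iff two_ne_zero |>.mp (by rw [im_sq_eq, hsS.1.2, mul_zero, mul_zero]))

theorem phase_eq_phase_mul_exp (hω : ω ≠ 0) (hne : ∀ t ∈ Icc a b, Z t ≠ 0) {t : ℝ}
    (ht : t ∈ Icc a b) : phase ω (Z t) =
      phase ω (Z a) * Complex.exp ((∫ s in a..t, angularSpeed f ω s (Z s) : ℝ) * Complex.I) := by
  have hZc := hZ.continuous
  have hk : ContinuousOn (fun s => angularSpeed f ω s (Z s)) (Icc a t) :=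
    (continuousOn_angularSpeed hf hZc (s := {ω} ×ˢ Icc a b) fun q hq =>
      ⟨hq.1 ▸ hω, hne _ hq.2⟩).comp (f := fun s => (ω, s)) (by fun_prop)
      fun s hs => ⟨rfl, hs.1, hs.2.trans ht.2⟩
  let E : ℝ → ℂ := fun s =>
    Complex.exp (-((∫ r in a..s, angularSpeed f ω r (Z r) : ℝ) * Complex.I))
  have hE : ContinuousOn E (Icc a t) := by
    have := uIcc_of_le ht.1 ▸ intervalIntegral.continuousOn_primitive_interval
      (μ := MeasureTheory.volume) ((uIcc_of_le ht.1).symm ▸ hk.integrableOn_Icc)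
    fun_prop
  have hderiv : ∀ s ∈ Ioo a t, HasDerivAt (fun s => ∫ r in a..s, angularSpeed f ω r (Z r))
      (angularSpeed f ω s (Z s)) s := fun s hs =>
    intervalIntegral.integral_hasDerivAt_right
      ((hk.mono (Icc_subset_Icc_right hs.2.le)).intervalIntegrable_of_Icc hs.1.le)
      ((hk.mono Ioo_subset_Icc_self).stronglyMeasurableAtFilter isOpen_Ioo s hs)
      (hk.continuousAt (Icc_mem_nhds hs.1 hs.2))
  have hFTC := MeasureTheory.integral_eq_of_hasDerivAt_off_countable_of_le
    (fun s => phase ω (Z s) * E s) (fun _ => 0) ht.1 (countable_posSq_eq_zero hf hZ hne)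
    (((continuousOn_phase hω).comp hZc.continuousOn fun s hs =>
      hne s ⟨hs.1, hs.2.trans ht.2⟩).mul hE) (fun s hs => ?_) (by simp)
  · have hE_a : E a = 1 := by simp [E]
    have hE_t :
        E t * Complex.exp ((∫ s in a..t, angularSpeed f ω s (Z s) : ℝ) * Complex.I) = 1 := by
      rw [← Complex.exp_add, neg_add_cancel, Complex.exp_zero]
    rw [intervalIntegral.integral_zero, eq_comm, sub_eq_zero, hE_a, mul_one] at hFTC
    rw [← hFTC, mul_assoc, hE_t, mul_one]
  · have hs' : s ∈ Ioo a b := ⟨hs.1.1, hs.1.2.trans_le ht.2⟩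
    refine ((hasDerivAt_phase hf hZ hω hs' fun h => hs.2 ⟨hs', h⟩).mul
      ((hderiv s hs.1).ofReal_comp.mul_const Complex.I).neg.cexp).congr_deriv ?_
    ring

/-- Along a solution whose end point is a positive multiple of its starting point the phase makes
whole turns, and their number cannot jump as `ω` varies. -/
theorem exists_integral_angularSpeed_eq (hab : a ≤ b) (hne : ∀ t ∈ Icc a b, Z t ≠ 0) {l : ℝ}
    (hl : 0 < l) (hlZ : Z b = l * Z a) : ∃ n : ℤ, ∀ ω, 0 < ω →
      ∫ t in a..b, angularSpeed f ω t (Z t) = 2 * π * n := by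
  have hexp : ∀ ω ∈ Ioi (0 : ℝ),
      Complex.exp ((∫ t in a..b, angularSpeed f ω t (Z t) : ℝ) * Complex.I) = 1 := fun ω hω => by
    have hrot := phase_eq_phase_mul_exp hf hZ (ne_of_gt hω) hne (right_mem_Icc.mpr hab)
    rw [hlZ, phase_ofReal_mul ω hl] at hrot
    have hphase : phase ω (Z a) ≠ 0 := norm_ne_zero_iff.mp <| by
      rw [norm_phase (ne_of_gt hω) (hne a (left_mem_Icc.mpr hab))]; exact one_ne_zero
    exact (mul_eq_left₀ hphase).mp hrot.symm
  have hcont : ContinuousOn (fun ω => ∫ t in a..b, angularSpeed f ω t (Z t)) (Ioi 0) :=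
    continuousOn_intervalIntegral_of_continuousOn_prod hab <|
      continuousOn_angularSpeed hf hZ.continuous fun q hq => ⟨ne_of_gt hq.1, hne _ hq.2⟩
  obtain ⟨n, hn⟩ := Complex.exp_eq_one_iff.mp (hexp 1 (mem_Ioi.mpr one_pos))
  refine ⟨n, fun ω hω => ?_⟩
  have hconst := eq_of_exp_eq_one isPreconnected_Ioi (by fun_prop) hexp hω (mem_Ioi.mpr one_pos)
  rw [hn, ← mul_assoc] at hconst
  have := mul_right_cancel₀ Complex.I_ne_zero hconst
  rw [mul_comm]
  exact_mod_cast this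

end PhaseRotation

section Excess

/-- The deviation of the force `f` from the linear one of frequency `ω`, counted positively on the
side given by the sign `σ`. -/
def deviation (f : ℝ → ℝ → ℝ) (ω σ t x : ℝ) : ℝ := σ * (f t x - ω ^ 2 * x)

/-- The relative excess, on the side of `σ`, of the angular speed over that of the harmonic
oscillator of frequency `ω`. -/
noncomputable def excess (f : ℝ → ℝ → ℝ) (ω σ t : ℝ) (z : ℂ) : ℝ :=
  position 0 z * deviation f ω σ t (position 0 z) / oscEnergy 0 ω z

lemma neg_mul_le_integral {u : ℝ → ℝ} {a b c : ℝ} (hab : a ≤ b)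
    (hu : IntervalIntegrable u MeasureTheory.volume a b) (hlow : ∀ t ∈ Icc a b, -c ≤ u t) :
    -(c * (b - a)) ≤ ∫ t in a..b, u t := by
  have := intervalIntegral.integral_mono_on hab intervalIntegrable_const hu hlow
  rw [intervalIntegral.integral_const, smul_eq_mul] at this
  linarith

lemma abs_integral_le_of_integral_nonpos {u : ℝ → ℝ} {a b c t : ℝ} (ht : t ∈ Icc a b)
    (hu : IntervalIntegrable u MeasureTheory.volume a b) (hlow : ∀ t ∈ Icc a b, -c ≤ u t)
    (hint : ∫ t in a..b, u t ≤ 0) (hc : 0 ≤ c) : |∫ s in a..t, u s| ≤ c * (b - a) := by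
  have hleft : IntervalIntegrable u MeasureTheory.volume a t :=
    hu.mono_set (uIcc_subset_uIcc_left (Icc_subset_uIcc ht))
  have hright : IntervalIntegrable u MeasureTheory.volume t b :=
    hu.mono_set (uIcc_subset_uIcc_right (Icc_subset_uIcc ht))
  have hge := neg_mul_le_integral ht.1 hleft fun s hs => hlow s ⟨hs.1, hs.2.trans ht.2⟩
  have hge' := neg_mul_le_integral ht.2 hright fun s hs => hlow s ⟨ht.1.trans hs.1, hs.2⟩
  have hadd := intervalIntegral.integral_add_adjacent_intervals hleft hright
  have hc_left := mul_nonneg hc (sub_nonneg.mpr ht.1)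
  have hc_right := mul_nonneg hc (sub_nonneg.mpr ht.2)
  exact abs_le.mpr ⟨by linarith, by linarith⟩

variable {f : ℝ → ℝ → ℝ} {ω σ : ℝ} {z : ℂ}

lemma abs_deviation (hσ : |σ| = 1) (t x : ℝ) : |deviation f ω σ t x| = |f t x - ω ^ 2 * x| := by
  rw [deviation, abs_mul, hσ, one_mul]

lemma abs_deviation_le {K t x : ℝ} (hσ : |σ| = 1) (hx : 0 ≤ x) (hK : |f t x| ≤ K * (1 + x)) :
    |deviation f ω σ t x| ≤ (K + ω ^ 2) * (1 + x) := by
  rw [abs_deviation hσ]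
  refine (abs_sub _ _).trans ?_
  rw [abs_of_nonneg (by positivity : 0 ≤ ω ^ 2 * x)]
  nlinarith [sq_nonneg ω]

lemma angularSpeed_eq (hσ : |σ| = 1) (hω : ω ≠ 0) (t : ℝ) (hz : z ≠ 0) :
    angularSpeed f ω t z = 2 * ω * (1 + σ * excess f ω σ t z) := by
  have hS := (oscEnergy_pos hω hz).ne'
  have hσσ : σ * σ = 1 := by rw [← abs_mul_abs_self, hσ, one_mul]
  unfold angularSpeed excess deviation
  field_simp
  rw [oscEnergy, ← position_sq]
  linear_combination -(position 0 z * (f t (position 0 z) - ω ^ 2 * position 0 z)) * hσσ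

lemma speedSq_le_oscEnergy (ω : ℝ) (z : ℂ) : speedSq 0 z ≤ oscEnergy 0 ω z :=
  le_add_of_nonneg_right (mul_nonneg (sq_nonneg ω) (posSq_nonneg 0 z))

lemma mul_position_le_sqrt_oscEnergy (ω : ℝ) (z : ℂ) : ω * position 0 z ≤ √(oscEnergy 0 ω z) := by
  apply Real.le_sqrt_of_sq_le
  rw [mul_pow, position_sq]
  exact le_add_of_nonneg_left (speedSq_nonneg 0 z)

lemma position_div_oscEnergy_le (hω : 0 < ω) (z : ℂ) :
    position 0 z / oscEnergy 0 ω z ≤ 1 / (ω * √(oscEnergy 0 ω z)) := by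
  rcases (oscEnergy_nonneg 0 z ω).eq_or_lt with hS | hS
  · simp [← hS]
  · have hs := Real.sqrt_pos.mpr hS
    rw [div_le_div_iff₀ hS (by positivity)]
    nlinarith [mul_position_le_sqrt_oscEnergy ω z, Real.sq_sqrt hS.le]

variable {η K q t : ℝ}

lemma neg_div_le_excess (hω : 0 < ω) (hη : 0 ≤ η) (hq : 0 < q) (hqS : q ^ 4 ≤ oscEnergy 0 ω z)
    (hlow : ∀ x, 0 ≤ x → -η ≤ deviation f ω σ t x) : -(η / (ω * q ^ 2)) ≤ excess f ω σ t z := by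
  have hS := oscEnergy_nonneg 0 z ω
  have hs : q ^ 2 ≤ √(oscEnergy 0 ω z) := Real.le_sqrt_of_sq_le (by linarith [pow_mul q 2 2])
  calc -(η / (ω * q ^ 2)) = -η * (1 / (ω * q ^ 2)) := by ring
    _ ≤ -η * (1 / (ω * √(oscEnergy 0 ω z))) :=
        mul_le_mul_of_nonpos_left (by gcongr) (neg_nonpos.mpr hη)
    _ ≤ -η * (position 0 z / oscEnergy 0 ω z) :=
        mul_le_mul_of_nonpos_left (position_div_oscEnergy_le hω z) (neg_nonpos.mpr hη)
    _ ≤ deviation f ω σ t (position 0 z) * (position 0 z / oscEnergy 0 ω z) :=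
        mul_le_mul_of_nonneg_right (hlow _ (position_nonneg 0 z))
          (div_nonneg (position_nonneg 0 z) hS)
    _ = excess f ω σ t z := by unfold excess; ring

/-- Where `x` is at least `√S / q` the excess itself controls `|deviation| / √S`; where `x` is
smaller, linear growth does. -/
lemma abs_deviation_div_sqrt_oscEnergy_le (hω : 0 < ω) (hη : 0 ≤ η) (hq : 1 ≤ q)
    (hqS : q ^ 4 ≤ oscEnergy 0 ω z) (hlow : ∀ x, 0 ≤ x → -η ≤ deviation f ω σ t x)
    (hup : ∀ x, 0 ≤ x → |deviation f ω σ t x| ≤ K * (1 + x)) :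
    |deviation f ω σ t (position 0 z)| / √(oscEnergy 0 ω z) ≤
      q * excess f ω σ t z + 2 * (η / ω + K) / q := by
  have hexc := neg_div_le_excess hω hη (by linarith) hqS hlow
  have hx := position_nonneg 0 z
  have hd := hlow _ hx
  have hd' := hup _ hx
  have hxS := position_div_oscEnergy_le hω z
  have hS : 0 < oscEnergy 0 ω z := lt_of_lt_of_le (by positivity) hqS
  have hs : q ^ 2 ≤ √(oscEnergy 0 ω z) := Real.le_sqrt_of_sq_le (by linarith [pow_mul q 2 2])
  have hss := Real.mul_self_sqrt hS.le
  have hK : 0 ≤ K := by simpa using (abs_nonneg _).trans (hup 0 le_rfl)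
  unfold excess at hexc ⊢
  set d := deviation f ω σ t (position 0 z)
  set x := position 0 z
  set S := oscEnergy 0 ω z
  set s := √S
  have hs0 : 0 < s := lt_of_lt_of_le (by positivity) hs
  rcases le_total s (q * x) with hsx | hsx
  · have habs : |d| ≤ d + 2 * η := abs_le.mpr ⟨by linarith, by linarith⟩
    calc |d| / s = s * |d| / S := by rw [← hss]; field_simp
      _ ≤ q * x * (d + 2 * η) / S := by gcongr
      _ = q * (x * d / S) + 2 * η * q * (x / S) := by ring
      _ ≤ q * (x * d / S) + 2 * η * q * (1 / (ω * q ^ 2)) := by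
          have := hxS.trans (by gcongr : _ ≤ 1 / (ω * q ^ 2))
          gcongr q * (x * d / S) + 2 * η * q * ?_
      _ = q * (x * d / S) + 2 * (η / ω) / q := by field_simp
      _ ≤ _ := by gcongr; linarith
  · have hexc' := mul_le_mul_of_nonneg_left hexc (by linarith : 0 ≤ q)
    have hxs : x / s ≤ 1 / q := by rw [div_le_div_iff₀ hs0 (by positivity)]; linarith
    have h1s : 1 / s ≤ 1 / q := by gcongr; nlinarith
    calc |d| / s ≤ K * (1 + x) / s := by gcongr
      _ = K * (1 / s + x / s) := by ring
      _ ≤ K * (1 / q + 1 / q) := by gcongr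
      _ = q * -(η / (ω * q ^ 2)) + (η / ω + 2 * K) / q := by field_simp; ring
      _ ≤ q * (x * d / S) + 2 * (η / ω + K) / q := by
          gcongr
          have : 0 ≤ η / ω := by positivity
          linarith

lemma two_mul_sqrt_speedSq_mul_div_le (hσ : |σ| = 1) (hω : 0 < ω) (hη : 0 ≤ η) (hq : 1 ≤ q)
    (hqS : q ^ 4 ≤ oscEnergy 0 ω z) (hlow : ∀ x, 0 ≤ x → -η ≤ deviation f ω σ t x)
    (hup : ∀ x, 0 ≤ x → |deviation f ω σ t x| ≤ K * (1 + x)) :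
    2 * √(speedSq 0 z) * |f t (position 0 z) - ω ^ 2 * position 0 z| / (oscEnergy 0 ω z + 1) ≤
      2 * (q * excess f ω σ t z + 2 * (η / ω + K) / q) := by
  have hS : 0 < oscEnergy 0 ω z := lt_of_lt_of_le (by positivity) hqS
  have := Real.sqrt_pos.mpr hS
  rw [← abs_deviation hσ]
  calc 2 * √(speedSq 0 z) * |deviation f ω σ t (position 0 z)| / (oscEnergy 0 ω z + 1)
      ≤ 2 * √(oscEnergy 0 ω z) * |deviation f ω σ t (position 0 z)| / oscEnergy 0 ω z := by
        gcongr
        · exact speedSq_le_oscEnergy ω z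
        · linarith
    _ = 2 * (|deviation f ω σ t (position 0 z)| / √(oscEnergy 0 ω z)) := by
        rw [div_eq_iff hS.ne']
        nth_rw 3 [← Real.mul_self_sqrt hS.le]
        field_simp
    _ ≤ _ := by
        gcongr
        exact abs_deviation_div_sqrt_oscEnergy_le hω hη hq hqS hlow hup

lemma continuousOn_excess (hf : Continuous (Function.uncurry f)) (ω σ : ℝ) (hω : ω ≠ 0)
    {Z : ℝ → ℂ} (hZ : Continuous Z) {s : Set ℝ} (hs : ∀ t ∈ s, Z t ≠ 0) :
    ContinuousOn (fun t => excess f ω σ t (Z t)) s := by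
  unfold excess deviation
  exact ContinuousOn.div (by fun_prop) (by fun_prop) fun t ht => (oscEnergy_pos hω (hs t ht)).ne'

variable {Z : ℝ → ℂ} {a b : ℝ}

lemma integral_angularSpeed_eq (hf : Continuous (Function.uncurry f)) (hσ : |σ| = 1) (hω : ω ≠ 0)
    (hZ : Continuous Z) (hab : a ≤ b) (hne : ∀ t ∈ Icc a b, Z t ≠ 0) :
    ∫ t in a..b, angularSpeed f ω t (Z t) =
      2 * ω * (b - a + σ * ∫ t in a..b, excess f ω σ t (Z t)) := by
  have hint : IntervalIntegrable (fun t => excess f ω σ t (Z t)) MeasureTheory.volume a b :=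
    (continuousOn_excess hf ω σ hω hZ (uIcc_of_le hab ▸ hne)).intervalIntegrable
  calc ∫ t in a..b, angularSpeed f ω t (Z t)
      = ∫ t in a..b, 2 * ω * (1 + σ * excess f ω σ t (Z t)) :=
        intervalIntegral.integral_congr fun t ht =>
          angularSpeed_eq hσ hω t (hne t (uIcc_of_le hab ▸ ht))
    _ = _ := by
        rw [intervalIntegral.integral_const_mul,
          intervalIntegral.integral_add intervalIntegrable_const (hint.const_mul σ),
          intervalIntegral.integral_const_mul, intervalIntegral.integral_const, smul_eq_mul,
          mul_one]

theorem abs_log_oscEnergy_sub_le_of_integral_excess_nonpos (hf : Continuous (Function.uncurry f))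
    (hσ : |σ| = 1) (hω : 0 < ω) (hη : 0 ≤ η)
    (hlow : ∀ t x, 0 ≤ x → -η ≤ deviation f ω σ t x)
    (hup : ∀ t x, 0 ≤ x → |deviation f ω σ t x| ≤ K * (1 + x)) (hZ : IsWeakBounce f 0 a b Z)
    (hne : ∀ t ∈ Icc a b, Z t ≠ 0) (hq : 1 ≤ q)
    (hqS : ∀ t ∈ Icc a b, q ^ 4 ≤ oscEnergy 0 ω (Z t))
    (hint : ∫ t in a..b, excess f ω σ t (Z t) ≤ 0) (ht : t ∈ Icc a b) :
    |Real.log (oscEnergy 0 ω (Z t) + 1) - Real.log (oscEnergy 0 ω (Z a) + 1)| ≤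
      4 * (η / ω + K) * (b - a) / q := by
  have hab := ht.1.trans ht.2
  have hZc := hZ.continuous
  have hS : ∀ r, 0 ≤ oscEnergy 0 ω (Z r) := fun r => oscEnergy_nonneg 0 (Z r) ω
  let G : ℝ → ℝ := fun r => 2 * √(speedSq 0 (Z r)) *
    |f r (position 0 (Z r)) - ω ^ 2 * position 0 (Z r)| / (oscEnergy 0 ω (Z r) + 1)
  let H : ℝ → ℝ := fun r => 2 * q * excess f ω σ r (Z r) + 4 * (η / ω + K) / q
  have hG : Continuous G :=
    Continuous.div (by fun_prop) (by fun_prop) fun r => by linarith [hS r]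
  have hexc : IntervalIntegrable (fun r => excess f ω σ r (Z r)) MeasureTheory.volume a b :=
    (continuousOn_excess hf ω σ hω.ne' hZc (uIcc_of_le hab ▸ hne)).intervalIntegrable
  have hGH : ∀ r ∈ Icc a b, G r ≤ H r := fun r hr => by
    have := two_mul_sqrt_speedSq_mul_div_le hσ hω hη hq (hqS r hr) (hlow r) (hup r)
    exact this.trans_eq (by simp only [H]; ring)
  refine (hZ.abs_log_sub_le ω t ht).trans ?_
  calc ∫ r in a..t, G r ≤ ∫ r in a..b, G r :=
        intervalIntegral.integral_mono_interval le_rfl ht.1 ht.2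
          (Eventually.of_forall fun r => by have := hS r; positivity) (hG.intervalIntegrable _ _)
    _ ≤ ∫ r in a..b, H r := intervalIntegral.integral_mono_on hab (hG.intervalIntegrable _ _)
        ((hexc.const_mul _).add intervalIntegrable_const) hGH
    _ = 2 * q * (∫ r in a..b, excess f ω σ r (Z r)) + 4 * (η / ω + K) * (b - a) / q := by
        rw [intervalIntegral.integral_add (hexc.const_mul _) intervalIntegrable_const,
          intervalIntegral.integral_const_mul, intervalIntegral.integral_const, smul_eq_mul]
        ring
    _ ≤ _ := by nlinarith

end Excess

section ResonantSequence

/-- A one-sided version of Fatou's lemma, which needs no measurability of `u`: if `u` is not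
integrable its integral is `0`. -/
lemma integral_nonpos_of_eventually_lt {h : ℕ → ℝ → ℝ} {u : ℝ → ℝ} {a b C : ℝ} (hab : a ≤ b)
    (hh : ∀ k, IntervalIntegrable (h k) MeasureTheory.volume a b)
    (hlow : ∀ k, ∀ t ∈ Icc a b, -C ≤ h k t) (hint : ∀ k, ∫ t in a..b, h k t ≤ 0)
    (hlim : ∀ t ∈ Icc a b, ∀ c < u t, ∀ᶠ k in atTop, c < h k t) : ∫ t in a..b, u t ≤ 0 := by
  by_cases hu : IntervalIntegrable u MeasureTheory.volume a b
  swap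
  · rw [intervalIntegral.integral_undef hu]
  have hmin : Tendsto (fun k => ∫ t in a..b, min (h k t) (u t)) atTop (𝓝 (∫ t in a..b, u t)) := by
    refine intervalIntegral.tendsto_integral_filter_of_dominated_convergence
      (fun t => |u t| + |C|) (.of_forall fun k =>
        (hh k).def'.aestronglyMeasurable.inf hu.def'.aestronglyMeasurable)
      (.of_forall fun k => .of_forall fun t ht => ?_) (hu.abs.add intervalIntegrable_const)
      (.of_forall fun t ht => ?_)
    · have := hlow k t (uIcc_of_le hab ▸ uIoc_subset_uIcc ht)
      rw [Real.norm_eq_abs, abs_le]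
      constructor
      · exact le_min (by linarith [abs_nonneg (u t), le_abs_self C])
          (by linarith [neg_abs_le (u t), abs_nonneg C])
      · exact (min_le_right _ _).trans (by linarith [le_abs_self (u t), abs_nonneg C])
    · refine tendsto_order.mpr ⟨fun c hc => ?_, fun c hc =>
        .of_forall fun k => (min_le_right _ _).trans_lt hc⟩
      filter_upwards [hlim t (uIcc_of_le hab ▸ uIoc_subset_uIcc ht) c hc] with k hk
      exact lt_min hk hc
  refine le_of_tendsto' hmin fun k => le_trans ?_ (hint k)
  exact intervalIntegral.integral_mono_on hab
    (intervalIntegrable_iff.mpr ((hh k).def'.inf hu.def')) (hh k) fun t _ => min_le_left _ _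

/-- A sequence of solutions on `[0, T]` with energies at least `q k ^ 4 → ∞` that do not rotate, on
the side of `σ`, faster on average than the harmonic oscillator of frequency `ω`. -/
structure IsResonantSequence (f : ℝ → ℝ → ℝ) (ω σ T : ℝ) (q : ℕ → ℝ) (Z : ℕ → ℝ → ℂ) : Prop where
  isWeakBounce : ∀ k, IsWeakBounce f 0 0 T (Z k)
  one_le : ∀ k, 1 ≤ q k
  tendsto_atTop : Tendsto q atTop atTop
  pow_le_oscEnergy : ∀ k, ∀ t ∈ Icc 0 T, q k ^ 4 ≤ oscEnergy 0 ω (Z k t)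
  integral_excess_nonpos : ∀ k, ∫ t in 0..T, excess f ω σ t (Z k t) ≤ 0

lemma exists_cexp_mul_I_eq {u : ℂ} (hu : ‖u‖ = 1) :
    ∃ θ ∈ Ico (0 : ℝ) (2 * π), Complex.exp (θ * Complex.I) = u := by
  obtain ⟨θ, rfl⟩ := (Complex.norm_eq_one_iff u).mp hu
  have hper : Function.Periodic (fun θ : ℝ => Complex.exp (θ * Complex.I)) (2 * π) := fun θ => by
    simpa using Complex.exp_mul_I_periodic θ
  obtain ⟨θ', hθ', h⟩ := hper.exists_mem_Ico₀ two_pi_pos θ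
  exact ⟨θ', hθ', h.symm⟩

lemma mul_position_div_sqrt_oscEnergy {ω : ℝ} (hω : 0 < ω) {z : ℂ} (hz : z ≠ 0) :
    ω * position 0 z / √(oscEnergy 0 ω z) = √((1 - (phase ω z).re) / 2) := by
  rw [one_sub_re_phase hω.ne' hz, mul_div_cancel_left₀ _ two_ne_zero,
    Real.sqrt_div (mul_nonneg (sq_nonneg ω) (posSq_nonneg 0 z)), Real.sqrt_mul (sq_nonneg ω),
    Real.sqrt_sq hω.le, position]

lemma mul_sqrt_mul_excess {f : ℝ → ℝ → ℝ} {ω σ t E : ℝ} {z : ℂ} (hE : 0 ≤ E)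
    (hS : 0 < oscEnergy 0 ω z) : ω * √E * excess f ω σ t z =
      √(E / oscEnergy 0 ω z) * (ω * position 0 z / √(oscEnergy 0 ω z)) *
        deviation f ω σ t (position 0 z) := by
  have := Real.sqrt_pos.mpr hS
  rw [excess, Real.sqrt_div hE]
  nth_rw 1 [← Real.mul_self_sqrt hS.le]
  field_simp

lemma add_one_div_eq_exp_mul {x y : ℝ} (hx : 0 ≤ x) (hy : 0 < y) :
    (x + 1) / y = Real.exp (Real.log (x + 1) - Real.log (y + 1)) * (1 + y⁻¹) := by
  rw [Real.exp_sub, Real.exp_log (by positivity), Real.exp_log (by positivity)]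
  field_simp

/-- Where the weights `w k` tend to `0`, the lower bound on `d k` suffices. -/
lemma eventually_lt_mul {w d : ℕ → ℝ} {W l η : ℝ} (hw : Tendsto w atTop (𝓝 W))
    (hw0 : ∀ k, 0 ≤ w k) (hd : ∀ k, -η ≤ d k) (hdl : 0 < W → ∀ c < l, ∀ᶠ k in atTop, c < d k)
    {c : ℝ} (hc : c < l * W) : ∀ᶠ k in atTop, c < w k * d k := by
  rcases (ge_of_tendsto' hw hw0).eq_or_lt with rfl | hW
  · have hlim : Tendsto (fun k => w k * -η) atTop (𝓝 0) := by simpa using hw.mul_const (-η)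
    filter_upwards [hlim.eventually_const_lt (by simpa using hc)] with k hk
    exact hk.trans_le (mul_le_mul_of_nonneg_left (hd k) (hw0 k))
  · obtain ⟨m, hcm, hml⟩ := exists_between ((div_lt_iff₀ hW).mpr hc)
    have hlim := hw.mul_const m
    filter_upwards [hlim.eventually_const_lt ((div_lt_iff₀' hW).mp hcm), hdl hW m hml] with k hk hmk
    exact hk.trans_le (mul_le_mul_of_nonneg_left hmk.le (hw0 k))

namespace IsResonantSequence

variable {f : ℝ → ℝ → ℝ} {ω σ T : ℝ} {q : ℕ → ℝ} {Z : ℕ → ℝ → ℂ}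

lemma oscEnergy_pos (h : IsResonantSequence f ω σ T q Z) (k : ℕ) {t : ℝ} (ht : t ∈ Icc 0 T) :
    0 < oscEnergy 0 ω (Z k t) :=
  (pow_pos (one_pos.trans_le (h.one_le k)) 4).trans_le (h.pow_le_oscEnergy k t ht)

lemma one_le_oscEnergy (h : IsResonantSequence f ω σ T q Z) (k : ℕ) {t : ℝ} (ht : t ∈ Icc 0 T) :
    1 ≤ oscEnergy 0 ω (Z k t) :=
  (one_le_pow₀ (h.one_le k)).trans (h.pow_le_oscEnergy k t ht)

lemma ne_zero (h : IsResonantSequence f ω σ T q Z) (k : ℕ) : ∀ t ∈ Icc 0 T, Z k t ≠ 0 := by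
  intro t ht hz
  have := h.one_le_oscEnergy k ht
  norm_num [hz, oscEnergy, speedSq, posSq, regNorm] at this

lemma tendsto_oscEnergy (h : IsResonantSequence f ω σ T q Z) {t : ℝ} (ht : t ∈ Icc 0 T) :
    Tendsto (fun k => oscEnergy 0 ω (Z k t)) atTop atTop :=
  tendsto_atTop_mono (fun k => (le_self_pow₀ (h.one_le k) four_ne_zero).trans
    (h.pow_le_oscEnergy k t ht)) h.tendsto_atTop

lemma comp (h : IsResonantSequence f ω σ T q Z) {φ : ℕ → ℕ} (hφ : StrictMono φ) :
    IsResonantSequence f ω σ T (q ∘ φ) (Z ∘ φ) where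
  isWeakBounce k := h.isWeakBounce (φ k)
  one_le k := h.one_le (φ k)
  tendsto_atTop := h.tendsto_atTop.comp hφ.tendsto_atTop
  pow_le_oscEnergy k := h.pow_le_oscEnergy (φ k)
  integral_excess_nonpos k := h.integral_excess_nonpos (φ k)

lemma tendsto_position (h : IsResonantSequence f ω σ T q Z) (hω : 0 < ω) {t W : ℝ}
    (ht : t ∈ Icc 0 T) (hW : 0 < W)
    (hlim : Tendsto (fun k => ω * position 0 (Z k t) / √(oscEnergy 0 ω (Z k t))) atTop (𝓝 W)) :
    Tendsto (fun k => position 0 (Z k t)) atTop atTop := by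
  have hmul := ((tendsto_sqrt_atTop.comp (h.tendsto_oscEnergy ht)).atTop_mul_pos hW
    hlim).atTop_div_const hω
  refine hmul.congr fun k => ?_
  have := Real.sqrt_pos.mpr (h.oscEnergy_pos k ht)
  simp only [Function.comp_apply]
  field_simp

variable (hf : Continuous (Function.uncurry f)) (hσ : |σ| = 1) (hω : 0 < ω)

section Phase

variable {η : ℝ} (hη : 0 ≤ η) (hlow : ∀ t x, 0 ≤ x → -η ≤ deviation f ω σ t x)
include hf hω hη hlow

lemma tendsto_integral_excess (h : IsResonantSequence f ω σ T q Z) {t : ℝ} (ht : t ∈ Icc 0 T) :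
    Tendsto (fun k => ∫ s in 0..t, excess f ω σ s (Z k s)) atTop (𝓝 0) := by
  have hlim : Tendsto (fun k => η / (ω * q k ^ 2) * (T - 0)) atTop (𝓝 0) := by
    have hq := ((tendsto_pow_atTop two_ne_zero).comp h.tendsto_atTop).const_mul_atTop hω
    simpa using (hq.const_div_atTop η).mul_const (T - 0)
  refine squeeze_zero_norm (fun k => ?_) hlim
  have hq : 0 < q k := one_pos.trans_le (h.one_le k)
  have hT : (0 : ℝ) ≤ T := ht.1.trans ht.2
  exact abs_integral_le_of_integral_nonpos ht
    (continuousOn_excess hf ω σ hω.ne' (h.isWeakBounce k).continuous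
      (uIcc_of_le hT ▸ h.ne_zero k)).intervalIntegrable
    (fun s hs => neg_div_le_excess hω hη hq (h.pow_le_oscEnergy k s hs) (hlow s))
    (h.integral_excess_nonpos k) (by positivity)

include hσ

lemma tendsto_integral_angularSpeed (h : IsResonantSequence f ω σ T q Z) {t : ℝ}
    (ht : t ∈ Icc 0 T) :
    Tendsto (fun k => ∫ s in 0..t, angularSpeed f ω s (Z k s)) atTop (𝓝 (2 * ω * t)) := by
  have hlim := (((h.tendsto_integral_excess hf hω hη hlow ht).const_mul σ).const_add t).const_mul
    (2 * ω)
  rw [mul_zero, add_zero] at hlim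
  refine hlim.congr fun k => ?_
  rw [integral_angularSpeed_eq hf hσ hω.ne' (h.isWeakBounce k).continuous ht.1
    fun s hs => h.ne_zero k s ⟨hs.1, hs.2.trans ht.2⟩, sub_zero]

lemma exists_subseq_tendsto_phase (h : IsResonantSequence f ω σ T q Z) (hT : 0 ≤ T) :
    ∃ θ ∈ Ico (0 : ℝ) (2 * π), ∃ φ : ℕ → ℕ, StrictMono φ ∧ ∀ t ∈ Icc 0 T,
      Tendsto (fun k => phase ω (Z (φ k) t)) atTop
        (𝓝 (Complex.exp ((θ + 2 * ω * t : ℝ) * Complex.I))) := by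
  obtain ⟨u, hu, φ, hφ, hlim⟩ := (isCompact_sphere (0 : ℂ) 1).tendsto_subseq fun k =>
    mem_sphere_zero_iff_norm.mpr (norm_phase hω.ne' (h.ne_zero k 0 (left_mem_Icc.mpr hT)))
  obtain ⟨θ, hθ, rfl⟩ := exists_cexp_mul_I_eq (mem_sphere_zero_iff_norm.mp hu)
  refine ⟨θ, hθ, φ, hφ, fun t ht => ?_⟩
  have hangle := (h.comp hφ).tendsto_integral_angularSpeed hf hσ hω hη hlow ht
  have hexp : Continuous fun x : ℝ => Complex.exp (x * Complex.I) := by fun_prop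
  rw [Complex.ofReal_add, add_mul, Complex.exp_add]
  exact (hlim.mul ((hexp.tendsto _).comp hangle)).congr fun k =>
    (phase_eq_phase_mul_exp hf (h.isWeakBounce _) hω.ne' (h.ne_zero _) ht).symm

lemma exists_subseq_tendsto_mul_position_div (h : IsResonantSequence f ω σ T q Z) (hT : 0 ≤ T) :
    ∃ β ∈ Icc 0 π, ∃ φ : ℕ → ℕ, StrictMono φ ∧ ∀ t ∈ Icc 0 T,
      Tendsto (fun k => ω * position 0 (Z (φ k) t) / √(oscEnergy 0 ω (Z (φ k) t))) atTop
        (𝓝 |sin (ω * t + β)|) := by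
  obtain ⟨θ, hθ, φ, hφ, hlim⟩ := h.exists_subseq_tendsto_phase hf hσ hω hη hlow hT
  refine ⟨θ / 2, ⟨by linarith [hθ.1], by linarith [hθ.2]⟩, φ, hφ, fun t ht => ?_⟩
  have hre := (((Complex.continuous_re.tendsto _).comp (hlim t ht)).const_sub 1).div_const 2
  have hsin : (1 - cos (θ + 2 * ω * t)) / 2 = sin (ω * t + θ / 2) ^ 2 := by
    rw [Real.sin_sq_eq_half_sub]; ring_nf
  rw [Complex.exp_ofReal_mul_I_re, hsin] at hre
  rw [← Real.sqrt_sq_eq_abs]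
  refine hre.sqrt.congr fun k => ?_
  exact (mul_position_div_sqrt_oscEnergy hω (h.ne_zero _ t ht)).symm

end Phase

section Energy

variable {η K : ℝ} (hη : 0 ≤ η) (hlow : ∀ t x, 0 ≤ x → -η ≤ deviation f ω σ t x)
  (hup : ∀ t x, 0 ≤ x → |deviation f ω σ t x| ≤ K * (1 + x))
include hf hσ hω hη hlow hup

lemma tendsto_sqrt_energy_ratio (h : IsResonantSequence f ω σ T q Z) {t : ℝ} (ht : t ∈ Icc 0 T) :
    Tendsto (fun k => √((oscEnergy 0 ω (Z k 0) + 1) / oscEnergy 0 ω (Z k t))) atTop (𝓝 1) := by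
  have hlog : Tendsto (fun k => Real.log (oscEnergy 0 ω (Z k t) + 1) -
      Real.log (oscEnergy 0 ω (Z k 0) + 1)) atTop (𝓝 0) :=
    squeeze_zero_norm (fun k => abs_log_oscEnergy_sub_le_of_integral_excess_nonpos hf hσ hω hη hlow
      hup (h.isWeakBounce k) (h.ne_zero k) (h.one_le k) (h.pow_le_oscEnergy k)
      (h.integral_excess_nonpos k) ht) (h.tendsto_atTop.const_div_atTop _)
  have hinv := (tendsto_inv_atTop_zero.comp (h.tendsto_oscEnergy ht)).const_add 1
  have hlim := (((Real.continuous_exp.tendsto _).comp hlog.neg).mul hinv).sqrt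
  simp only [neg_zero, Real.exp_zero, add_zero, mul_one, Real.sqrt_one] at hlim
  refine hlim.congr fun k => ?_
  simp only [Function.comp_apply, neg_sub]
  rw [add_one_div_eq_exp_mul (oscEnergy_nonneg 0 _ ω) (h.oscEnergy_pos k ht)]

lemma sqrt_energy_ratio_le (h : IsResonantSequence f ω σ T q Z) (k : ℕ) {t : ℝ}
    (ht : t ∈ Icc 0 T) :
    √((oscEnergy 0 ω (Z k 0) + 1) / oscEnergy 0 ω (Z k t)) ≤
      √(Real.exp (4 * (η / ω + K) * T) * 2) := by
  have hlog := abs_log_oscEnergy_sub_le_of_integral_excess_nonpos hf hσ hω hη hlow hup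
    (h.isWeakBounce k) (h.ne_zero k) (h.one_le k) (h.pow_le_oscEnergy k)
    (h.integral_excess_nonpos k) ht
  have hK : 0 ≤ K := by simpa using (abs_nonneg _).trans (hup 0 0 le_rfl)
  have hT : 0 ≤ T := ht.1.trans ht.2
  have hS := h.oscEnergy_pos k ht
  rw [sub_zero] at hlog
  have hlog' := hlog.trans (div_le_self (by positivity) (h.one_le k))
  rw [add_one_div_eq_exp_mul (oscEnergy_nonneg 0 _ ω) hS]
  gcongr √(Real.exp ?_ * ?_)
  · linarith [neg_le_of_abs_le hlog']
  · linarith [inv_le_one_of_one_le₀ (h.one_le_oscEnergy k ht)]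

lemma exists_integral_mul_abs_sin_nonpos (h : IsResonantSequence f ω σ T q Z) (hT : 0 ≤ T)
    {ℓ : ℝ → ℝ} (hℓ : ∀ t ∈ Icc 0 T, ∀ c < ℓ t, ∀ᶠ x in atTop, c < deviation f ω σ t x) :
    ∃ β ∈ Icc 0 π, ∫ t in 0..T, ℓ t * |sin (ω * t + β)| ≤ 0 := by
  obtain ⟨β, hβ, φ, hφ, hlim⟩ := h.exists_subseq_tendsto_mul_position_div hf hσ hω hη hlow hT
  replace h := h.comp hφ
  let w : ℕ → ℝ → ℝ := fun k t =>
    √((oscEnergy 0 ω (Z (φ k) 0) + 1) / oscEnergy 0 ω (Z (φ k) t)) *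
      (ω * position 0 (Z (φ k) t) / √(oscEnergy 0 ω (Z (φ k) t)))
  have hw0 : ∀ k t, 0 ≤ w k t := fun k t => by
    have := position_nonneg 0 (Z (φ k) t)
    positivity
  have hw : ∀ t ∈ Icc 0 T, Tendsto (fun k => w k t) atTop (𝓝 |sin (ω * t + β)|) := fun t ht => by
    simpa using (h.tendsto_sqrt_energy_ratio hf hσ hω hη hlow hup ht).mul (hlim t ht)
  have hwle : ∀ k, ∀ t ∈ Icc 0 T, w k t ≤ √(Real.exp (4 * (η / ω + K) * T) * 2) := fun k t ht =>
    (mul_le_of_le_one_right (Real.sqrt_nonneg _) (div_le_one_of_le₀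
      (mul_position_le_sqrt_oscEnergy ω _) (Real.sqrt_nonneg _))).trans
      (h.sqrt_energy_ratio_le hf hσ hω hη hlow hup k ht)
  have hd : ∀ k t, -η ≤ deviation f ω σ t (position 0 (Z (φ k) t)) := fun k t =>
    hlow t _ (position_nonneg 0 _)
  have heq : ∀ k, ∀ t ∈ Icc 0 T,
      ω * √(oscEnergy 0 ω (Z (φ k) 0) + 1) * excess f ω σ t (Z (φ k) t) =
        w k t * deviation f ω σ t (position 0 (Z (φ k) t)) := fun k t ht =>
    mul_sqrt_mul_excess (by linarith [oscEnergy_nonneg 0 (Z (φ k) 0) ω]) (h.oscEnergy_pos k ht)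
  refine ⟨β, hβ, integral_nonpos_of_eventually_lt hT
    (h := fun k t => ω * √(oscEnergy 0 ω (Z (φ k) 0) + 1) * excess f ω σ t (Z (φ k) t))
    (C := √(Real.exp (4 * (η / ω + K) * T) * 2) * η) (fun k => ?_) (fun k t ht => ?_)
    (fun k => ?_) (fun t ht c hc => ?_)⟩
  · exact ((continuousOn_excess hf ω σ hω.ne' (h.isWeakBounce k).continuous
      (uIcc_of_le hT ▸ h.ne_zero k)).intervalIntegrable).const_mul _
  · rw [heq k t ht]
    nlinarith [mul_le_mul_of_nonneg_left (hd k t) (hw0 k t),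
      mul_le_mul_of_nonneg_right (hwle k t ht) hη]
  · rw [intervalIntegral.integral_const_mul]
    exact mul_nonpos_of_nonneg_of_nonpos (by positivity) (h.integral_excess_nonpos k)
  · simp only [heq _ t ht]
    exact eventually_lt_mul (hw t ht) (hw0 · t) (hd · t) (fun hpos c hc =>
      (h.tendsto_position hω ht hpos (hlim t ht)).eventually (hℓ t ht c hc)) hc

end Energy

end IsResonantSequence

end ResonantSequence

section LandesmanLazer

variable {f : ℝ → ℝ → ℝ} {ω T K : ℝ}

lemma min_one_sq_mul_norm_le_oscEnergy (ω : ℝ) (z : ℂ) :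
    min 1 (ω ^ 2) * ‖z‖ ≤ oscEnergy 0 ω z := by
  rw [← regNorm_zero, ← speedSq_add_posSq, mul_add]
  exact add_le_add (mul_le_of_le_one_left (speedSq_nonneg 0 z) (min_le_left _ _))
    (mul_le_mul_of_nonneg_right (min_le_right _ _) (posSq_nonneg 0 z))

lemma exists_forall_le_oscEnergy (hK : ∀ t x, 0 ≤ x → |f t x| ≤ K * (1 + x)) (hω : ω ≠ 0) (q : ℝ) :
    ∃ R, ∀ Z, IsWeakBounce f 0 0 T Z → R ≤ ‖Z 0‖ → ∀ t ∈ Icc 0 T, q ≤ oscEnergy 0 ω (Z t) := by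
  have hc : 0 < min 1 (ω ^ 2) := lt_min one_pos (by positivity)
  refine ⟨Real.exp (2 * (K + 1) * (T - 0)) * (q / min 1 (ω ^ 2) + 1), fun Z hZ hR t ht => ?_⟩
  have hgrowth := regNorm_left_add_one_le hK hZ ht
  simp only [regNorm_zero] at hgrowth
  have hle := le_of_mul_le_mul_left ((hR.trans (by linarith)).trans hgrowth) (Real.exp_pos _)
  calc q ≤ ‖Z t‖ * min 1 (ω ^ 2) := (div_le_iff₀ hc).mp (by linarith)
    _ ≤ oscEnergy 0 ω (Z t) := by
      rw [mul_comm]; exact min_one_sq_mul_norm_le_oscEnergy ω (Z t)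

theorem exists_forall_integral_excess_pos (hf : Continuous (Function.uncurry f))
    (hK : ∀ t x, 0 ≤ x → |f t x| ≤ K * (1 + x)) (hT : 0 ≤ T) {σ η : ℝ} (hσ : |σ| = 1) (hω : 0 < ω)
    (hlow : ∀ t x, 0 ≤ x → -η ≤ deviation f ω σ t x) {ℓ : ℝ → ℝ}
    (hℓ : ∀ t ∈ Icc 0 T, ∀ c < ℓ t, ∀ᶠ x in atTop, c < deviation f ω σ t x)
    (hint : ∀ β ∈ Icc 0 π, 0 < ∫ t in 0..T, ℓ t * |sin (ω * t + β)|) :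
    ∃ R > 0, ∀ Z, IsWeakBounce f 0 0 T Z → R ≤ ‖Z 0‖ →
      (∀ t ∈ Icc 0 T, Z t ≠ 0) ∧ 0 < ∫ t in 0..T, excess f ω σ t (Z t) := by
  by_contra! hcon
  have hseq : ∀ k : ℕ, ∃ Z, IsWeakBounce f 0 0 T Z ∧
      (∀ t ∈ Icc 0 T, ((k : ℝ) + 1) ^ 4 ≤ oscEnergy 0 ω (Z t)) ∧
      ∫ t in 0..T, excess f ω σ t (Z t) ≤ 0 := fun k => by
    obtain ⟨R, hR⟩ := exists_forall_le_oscEnergy (T := T) hK hω.ne' (((k : ℝ) + 1) ^ 4)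
    obtain ⟨Z, hZ, hZR, hexc⟩ := hcon (max R 1) (lt_max_of_lt_right one_pos)
    have hlarge := hR Z hZ ((le_max_left R 1).trans hZR)
    refine ⟨Z, hZ, hlarge, hexc fun t ht hzero => ?_⟩
    have hpos : 0 < oscEnergy 0 ω (Z t) := lt_of_lt_of_le (by positivity) (hlarge t ht)
    simp [hzero, oscEnergy, speedSq, posSq, regNorm] at hpos
  choose Z hZ hlarge hexc using hseq
  have hres : IsResonantSequence f ω σ T (fun k => (k : ℝ) + 1) Z :=
    { isWeakBounce := hZ
      one_le := fun k => by simp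
      tendsto_atTop := tendsto_natCast_atTop_atTop.atTop_add tendsto_const_nhds
      pow_le_oscEnergy := hlarge
      integral_excess_nonpos := hexc }
  have hlow' : ∀ t x, 0 ≤ x → -max η 0 ≤ deviation f ω σ t x := fun t x hx =>
    (neg_le_neg (le_max_left η 0)).trans (hlow t x hx)
  obtain ⟨β, hβ, hle⟩ := hres.exists_integral_mul_abs_sin_nonpos hf hσ hω (le_max_right η 0) hlow'
    (fun t x hx => abs_deviation_le hσ hx (hK t x hx)) hT hℓ
  exact hle.not_gt (hint β hβ)

end LandesmanLazer

section Bounces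

variable {f : ℝ → ℝ → ℝ} {Z : ℝ → ℂ}

lemma hasDerivAt_position_of_isWeakBounce {a b t : ℝ} (hZ : IsWeakBounce f 0 a b Z)
    (ht : t ∈ Ioo a b) (hpos : 0 < position 0 (Z t)) :
    HasDerivAt (fun t => position 0 (Z t)) ((Z t).im / (2 * position 0 (Z t))) t :=
  (hasDerivAt_posSq_of_isWeakBounce hZ ht).sqrt (Real.sqrt_pos.mp hpos).ne'

variable (hf : Continuous (Function.uncurry f))
include hf

lemma hasDerivAt_velocity_of_isWeakBounce {a b t : ℝ} (hZ : IsWeakBounce f 0 a b Z)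
    (ht : t ∈ Ioo a b) (hpos : 0 < position 0 (Z t)) :
    HasDerivAt (fun t => (Z t).im / (2 * position 0 (Z t))) (-f t (position 0 (Z t))) t := by
  refine ((hasDerivAt_im_of_isWeakBounce hf hZ ht).div
    ((hasDerivAt_position_of_isWeakBounce hZ ht hpos).const_mul 2) (by positivity)).congr_deriv ?_
  have him := im_sq_eq (Z t)
  rw [← position_sq] at him
  field_simp
  linear_combination -him

-- Convexity of `x + ∬ f` persists through the weak limit; where `x = 0` it says `f t 0 ≥ 0`.
lemma force_nonneg_of_position_eq_zero {a b t : ℝ} (hZ : IsWeakBounce f 0 a b Z)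
    (hzero : ∀ t ∈ Ioo a b, position 0 (Z t) = 0) (ht : t ∈ Ioo a b) : 0 ≤ f t 0 := by
  have hZc := hZ.continuous
  have hforce : Continuous fun r => f r (position 0 (Z r)) := by fun_prop
  have hconv : ConvexOn ℝ (Ioo a b) fun t => ∫ r in a..t, (t - r) * f r (position 0 (Z r)) :=
    (hZ.convexOn.subset Ioo_subset_Icc_self (convex_Ioo a b)).congr fun s hs => by
      simp only [hzero s hs, zero_add]
  have hderiv := hasDerivAt_integral_sub_mul hforce a
  have hmono := hconv.monotoneOn_deriv fun s _ => (hderiv s).differentiableAt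
  rw [funext fun s => (hderiv s).deriv] at hmono
  have hnonneg := hmono.derivWithin_nonneg (x := t)
  rwa [(hforce.integral_hasStrictDerivAt a t).hasDerivAt.hasDerivWithinAt.derivWithin
    (isOpen_Ioo.uniqueDiffWithinAt ht), hzero t ht] at hnonneg

variable (hZ : ∀ a b, IsWeakBounce f 0 a b Z)
include hZ

lemma tendsto_posSq_div_sq {t₀ : ℝ} (hzero : position 0 (Z t₀) = 0) :
    Tendsto (fun t => posSq 0 (Z t) / (t - t₀) ^ 2) (𝓝[≠] t₀) (𝓝 (speedSq 0 (Z t₀))) := by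
  have hderiv : ∀ t, HasDerivAt (fun t => posSq 0 (Z t)) (Z t).im t := fun t =>
    hasDerivAt_posSq_of_isWeakBounce (hZ (t - 1) (t + 1)) ⟨by linarith, by linarith⟩
  have hderiv_im := hasDerivAt_im_of_isWeakBounce hf (hZ (t₀ - 1) (t₀ + 1)) (t := t₀)
    ⟨by linarith, by linarith⟩
  rw [hzero, zero_mul, mul_zero, sub_zero, hasDerivAt_iff_tendsto_slope] at hderiv_im
  have hposSq : posSq 0 (Z t₀) = 0 := by rw [← position_sq, hzero, sq, zero_mul]
  have him : (Z t₀).im = 0 := by simpa [hposSq] using im_sq_eq (Z t₀)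
  refine HasDerivAt.lhopital_zero_nhdsNE (f' := fun t => (Z t).im) (g' := fun t => 2 * (t - t₀))
    (.of_forall hderiv) (.of_forall fun t => ?_) ?_ ?_ ?_ ?_
  · exact (((hasDerivAt_id t).sub_const t₀).pow 2).congr_deriv (by simp)
  · filter_upwards [self_mem_nhdsWithin] with t ht
    exact mul_ne_zero two_ne_zero (sub_ne_zero.mpr ht)
  · simpa only [hposSq] using (hderiv t₀).continuousAt.tendsto.mono_left nhdsWithin_le_nhds
  · have hsq : Continuous fun t : ℝ => (t - t₀) ^ 2 := by fun_prop
    simpa using (hsq.tendsto t₀).mono_left (nhdsWithin_le_nhds (s := {t₀}ᶜ))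
  · have hhalf := hderiv_im.div_const 2
    rw [mul_div_cancel_left₀ _ two_ne_zero] at hhalf
    exact hhalf.congr fun t => by rw [slope_def_field, him, sub_zero, div_div, mul_comm]

lemma tendsto_position_div_abs_sub {t₀ : ℝ} (hzero : position 0 (Z t₀) = 0) :
    Tendsto (fun t => position 0 (Z t) / |t - t₀|) (𝓝[≠] t₀) (𝓝 √(speedSq 0 (Z t₀))) :=
  (tendsto_posSq_div_sq hf hZ hzero).sqrt.congr fun t => by
    rw [Real.sqrt_div (posSq_nonneg 0 _), Real.sqrt_sq_eq_abs, position]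

lemma hasDerivWithinAt_position_Iic {t₀ : ℝ} (hzero : position 0 (Z t₀) = 0) :
    HasDerivWithinAt (fun t => position 0 (Z t)) (-√(speedSq 0 (Z t₀))) (Iic t₀) t₀ := by
  rw [hasDerivWithinAt_iff_tendsto_slope, Iic_sdiff_right]
  refine ((tendsto_position_div_abs_sub hf hZ hzero).mono_left
    (nhdsWithin_mono t₀ fun t (ht : t < t₀) => ht.ne)).neg.congr' ?_
  filter_upwards [self_mem_nhdsWithin] with t ht
  rw [slope_def_field, hzero, sub_zero, abs_of_neg (sub_neg.mpr ht), div_neg, neg_neg]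

lemma hasDerivWithinAt_position_Ici {t₀ : ℝ} (hzero : position 0 (Z t₀) = 0) :
    HasDerivWithinAt (fun t => position 0 (Z t)) √(speedSq 0 (Z t₀)) (Ici t₀) t₀ := by
  rw [hasDerivWithinAt_iff_tendsto_slope, Ici_sdiff_left]
  refine ((tendsto_position_div_abs_sub hf hZ hzero).mono_left
    (nhdsWithin_mono t₀ fun t (ht : t₀ < t) => ht.ne')).congr' ?_
  filter_upwards [self_mem_nhdsWithin] with t ht
  rw [slope_def_field, hzero, sub_zero, abs_of_pos (sub_pos.mpr ht)]

lemma eventually_position_pos {t₀ v : ℝ} (hzero : position 0 (Z t₀) = 0) (hv : v ≠ 0)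
    (hderiv : HasDerivWithinAt (fun t => position 0 (Z t)) v (Iic t₀) t₀ ∨
      HasDerivWithinAt (fun t => position 0 (Z t)) v (Ici t₀) t₀) :
    ∀ᶠ t in 𝓝[≠] t₀, 0 < position 0 (Z t) := by
  have hspeed : √(speedSq 0 (Z t₀)) ≠ 0 := fun hspeed => hv <| by
    have hleft := hasDerivWithinAt_position_Iic hf hZ hzero
    have hright := hasDerivWithinAt_position_Ici hf hZ hzero
    rw [hspeed] at hleft hright
    rcases hderiv with h | h
    · simpa using (uniqueDiffWithinAt_Iic t₀).eq_deriv _ h hleft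
    · exact (uniqueDiffWithinAt_Ici t₀).eq_deriv _ h hright
  filter_upwards [(tendsto_position_div_abs_sub hf hZ hzero).eventually_const_lt
    ((Real.sqrt_nonneg _).lt_of_ne' hspeed)] with t ht
  exact (position_nonneg 0 (Z t)).lt_of_ne' fun h => by simp [h] at ht

theorem isBouncingSolution_position : IsBouncingSolution 0 f fun t => position 0 (Z t) := by
  have hZc := (hZ 0 0).continuous
  have hcont : Continuous fun t => position 0 (Z t) := by fun_prop
  have hmem : ∀ t : ℝ, t ∈ Ioo (t - 1) (t + 1) := fun t => ⟨by linarith, by linarith⟩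
  refine ⟨hcont, fun t => position_nonneg 0 (Z t), fun t₀ hpos => ⟨_, ?_,
    hasDerivAt_velocity_of_isWeakBounce hf (hZ _ _) (hmem t₀) hpos⟩, fun t₀ hzero _ => ⟨_,
      hasDerivWithinAt_position_Iic hf hZ hzero, ?_⟩,
    fun t₀ v hzero hv => eventually_position_pos hf hZ hzero hv,
    fun a b _ hzero t => force_nonneg_of_position_eq_zero hf (hZ a b) hzero⟩
  · filter_upwards [hcont.continuousAt.eventually_const_lt hpos] with t ht
    exact hasDerivAt_position_of_isWeakBounce (hZ _ _) (hmem t) ht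
  · rw [neg_neg]
    exact hasDerivWithinAt_position_Ici hf hZ hzero

end Bounces

lemma IsBouncingSolution.congr {w : ℝ} {p q : ℝ → ℝ → ℝ} {x : ℝ → ℝ}
    (h : IsBouncingSolution w p x) (hpq : ∀ t, ∀ y ≥ w, p t y = q t y) :
    IsBouncingSolution w q x := by
  obtain ⟨hcont, hge, hode, hbounce, hnonzero, hrest⟩ := h
  refine ⟨hcont, hge, fun t₀ ht₀ => ?_, hbounce, hnonzero, fun a b hab hx t ht => ?_⟩
  · rw [← hpq t₀ _ (hge t₀)]
    exact hode t₀ ht₀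
  · rw [← hpq t w le_rfl]
    exact hrest a b hab hx t ht

section ClampedForce

/-- The extension of a force from `x ≥ 0` to the whole line by its value at `x = 0`. -/
def clampedForce (g : ℝ → ℝ → ℝ) (t x : ℝ) : ℝ := g t (max x 0)

variable {g : ℝ → ℝ → ℝ}

lemma clampedForce_of_nonneg (t : ℝ) {x : ℝ} (hx : 0 ≤ x) : clampedForce g t x = g t x := by
  rw [clampedForce, max_eq_left hx]

lemma continuous_clampedForce
    (hg : ContinuousOn (fun q : ℝ × ℝ => g q.1 q.2) (univ ×ˢ Ici (0 : ℝ))) :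
    Continuous (Function.uncurry (clampedForce g)) :=
  hg.comp_continuous (f := fun q : ℝ × ℝ => (q.1, max q.2 0)) (by fun_prop)
    fun q => ⟨mem_univ _, mem_Ici.mpr (le_max_right q.2 0)⟩

lemma clampedForce_mem_Icc {T m M η : ℝ} (hT : 0 < T)
    (hg : ContinuousOn (fun q : ℝ × ℝ => g q.1 q.2) (univ ×ˢ Ici (0 : ℝ)))
    (hper : ∀ t x, g (t + T) x = g t x)
    (hbound : ∀ t ∈ Icc (0 : ℝ) T, ∀ x : ℝ, 0 < x → m * x - η ≤ g t x ∧ g t x ≤ M * x + η)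
    (t : ℝ) {x : ℝ} (hx : 0 ≤ x) : clampedForce g t x ∈ Icc (m * x - η) (M * x + η) := by
  have hperx : Function.Periodic (fun t => clampedForce g t x) T := fun t => hper t _
  obtain ⟨s, hs, (hts : clampedForce g t x = clampedForce g s x)⟩ := hperx.exists_mem_Ico₀ hT t
  rw [hts]
  have hcont : Continuous (clampedForce g s) :=
    (continuous_clampedForce hg).comp (Continuous.prodMk_right s)
  have hclosed : IsClosed {y | clampedForce g s y ∈ Icc (m * y - η) (M * y + η)} :=
    (isClosed_le (by fun_prop) hcont).inter (isClosed_le hcont (by fun_prop))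
  refine closure_minimal (fun y hy => ?_) hclosed ((closure_Ioi (0 : ℝ)).ge hx)
  rw [mem_ofPred_eq, clampedForce_of_nonneg s (le_of_lt hy)]
  exact hbound s (Ico_subset_Icc_self hs) y hy

end ClampedForce

section DoubleResonance

/-- The frequency `√μ_j = j π / T`. -/
noncomputable def freq (T : ℝ) (j : ℕ) : ℝ := j * π / T

lemma muEig_eq_freq_sq (T : ℝ) (j : ℕ) : muEig T j = freq T j ^ 2 := rfl

variable {T : ℝ}

lemma abs_le_of_mem_Icc_muEig {f : ℝ → ℝ → ℝ} {N : ℕ} {η : ℝ}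
    (hbound : ∀ t x, 0 ≤ x → f t x ∈ Icc (muEig T N * x - η) (muEig T (N + 1) * x + η))
    (t : ℝ) {x : ℝ} (hx : 0 ≤ x) : |f t x| ≤ (muEig T (N + 1) + η) * (1 + x) := by
  have hη : 0 ≤ η := by
    have hzero := hbound 0 0 le_rfl
    rw [mul_zero, mul_zero] at hzero
    linarith [hzero.1, hzero.2]
  obtain ⟨hlow, hup⟩ := hbound t x hx
  have hμN : 0 ≤ muEig T N := sq_nonneg _
  have hμ : 0 ≤ muEig T (N + 1) := sq_nonneg _
  rw [abs_le]
  constructor <;> nlinarith [mul_nonneg hη hx, mul_nonneg hμN hx, mul_nonneg hμ hx]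

variable (hT : 0 < T)
include hT

lemma freq_pos {j : ℕ} (hj : 0 < j) : 0 < freq T j := by unfold freq; positivity

lemma freq_mul (j : ℕ) : freq T j * T = j * π := div_mul_cancel₀ _ hT.ne'

lemma psiEig_add_div_freq {j : ℕ} (hj : 0 < j) (t β : ℝ) :
    psiEig T j (t + β / freq T j) = |sin (freq T j * t + β)| := by
  have hfreq := freq_pos hT hj
  set u := (t + β / freq T j) / (T / j) with hu
  have hperiod : freq T j * (T / j) = π := by unfold freq; field_simp
  have hangle : freq T j * t + β = π * Int.fract u + ⌊u⌋ * π := by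
    have hmul : π * u = freq T j * t + β := by rw [hu, ← hperiod]; field_simp
    linear_combination -hmul - π * Int.floor_add_fract u
  have hsin : 0 ≤ sin (π * Int.fract u) := Real.sin_nonneg_of_nonneg_of_le_pi
    (mul_nonneg pi_pos.le (Int.fract_nonneg u))
    (mul_le_of_le_one_right pi_pos.le (Int.fract_lt_one u).le)
  rw [psiEig, muEig_eq_freq_sq, Real.sqrt_sq hfreq.le, ← hu, mul_left_comm, hperiod,
    mul_comm (Int.fract u), hangle, Real.sin_add_int_mul_pi, abs_mul, abs_neg_one_zpow, one_mul,
    abs_of_nonneg hsin]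

variable {f : ℝ → ℝ → ℝ} (hf : Continuous (Function.uncurry f))
include hf

theorem exists_forall_integral_excess_freq_pos {K σ η : ℝ} {j : ℕ} (hj : 0 < j)
    (hK : ∀ t x, 0 ≤ x → |f t x| ≤ K * (1 + x)) (hσ : |σ| = 1)
    (hlow : ∀ t x, 0 ≤ x → -η ≤ deviation f (freq T j) σ t x) {ℓ : ℝ → ℝ}
    (hℓ : ∀ t ∈ Icc 0 T, ∀ c < ℓ t, ∀ᶠ x in atTop, c < deviation f (freq T j) σ t x)
    (hint : ∀ τ ∈ Icc 0 T, 0 < ∫ t in 0..T, ℓ t * psiEig T j (t + τ)) :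
    ∃ R > 0, ∀ Z, IsWeakBounce f 0 0 T Z → R ≤ ‖Z 0‖ →
      (∀ t ∈ Icc 0 T, Z t ≠ 0) ∧ 0 < ∫ t in 0..T, excess f (freq T j) σ t (Z t) := by
  have hfreq := freq_pos hT hj
  refine exists_forall_integral_excess_pos hf hK hT.le hσ hfreq hlow hℓ fun β hβ => ?_
  have hτ : β / freq T j ∈ Icc 0 T := by
    refine ⟨div_nonneg hβ.1 hfreq.le, (div_le_iff₀' hfreq).mpr (hβ.2.trans ?_)⟩
    rw [freq_mul hT]
    exact le_mul_of_one_le_left pi_pos.le (Nat.one_le_cast.mpr hj)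
  simpa only [psiEig_add_div_freq hT hj] using hint _ hτ

-- The total rotation is a multiple of `2 * π` lying strictly between `2 * π * N` and
-- `2 * π * (N + 1)`.
theorem not_mem_outwardPairs_of_integral_excess_pos {N : ℕ} (hN : 0 < N) {Z : ℝ → ℂ}
    (hZ : IsWeakBounce f 0 0 T Z) (hne : ∀ t ∈ Icc 0 T, Z t ≠ 0)
    (hfast : 0 < ∫ t in 0..T, excess f (freq T N) 1 t (Z t))
    (hslow : 0 < ∫ t in 0..T, excess f (freq T (N + 1)) (-1) t (Z t)) {R : ℝ} (hR : 0 < R) :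
    (Z 0, Z T) ∉ outwardPairs R := by
  intro hout
  obtain ⟨l, hl, hlZ⟩ := exists_eq_mul_of_mem_outwardPairs hR hout
  obtain ⟨n, hn⟩ := exists_integral_angularSpeed_eq hf hZ hT.le hne (one_pos.trans_le hl) hlZ
  have hfreq := freq_pos hT hN
  have hfreq' := freq_pos hT N.succ_pos
  have hrot := hn _ hfreq
  have hrot' := hn _ hfreq'
  rw [integral_angularSpeed_eq hf (by simp) hfreq.ne' hZ.continuous hT.le hne (σ := 1)] at hrot
  rw [integral_angularSpeed_eq hf (by simp) hfreq'.ne' hZ.continuous hT.le hne (σ := -1)] at hrot'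
  have hlower : π * N < π * n := by nlinarith [freq_mul hT N, mul_pos hfreq hfast]
  have hupper : π * n < π * (N + 1 : ℕ) := by
    nlinarith [freq_mul hT (N + 1), mul_pos hfreq' hslow]
  have hNn : (N : ℤ) < n := by exact_mod_cast lt_of_mul_lt_mul_left hlower pi_pos.le
  have hnN : n < (N + 1 : ℕ) := by exact_mod_cast lt_of_mul_lt_mul_left hupper pi_pos.le
  omega

section Bounds

variable {N : ℕ} {η : ℝ} (hbound : ∀ t x, 0 ≤ x →
  f t x ∈ Icc (muEig T N * x - η) (muEig T (N + 1) * x + η))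
include hbound

theorem exists_forall_integral_excess_pos_of_liminf (hN : 0 < N)
    (hLL : ∀ τ ∈ Icc (0 : ℝ) T, (∫ t in (0 : ℝ)..T,
      (liminf (fun x : ℝ => f t x - muEig T N * x) atTop) * psiEig T N (t + τ)) > 0) :
    ∃ R > 0, ∀ Z, IsWeakBounce f 0 0 T Z → R ≤ ‖Z 0‖ →
      (∀ t ∈ Icc 0 T, Z t ≠ 0) ∧ 0 < ∫ t in 0..T, excess f (freq T N) 1 t (Z t) := by
  have hdev : ∀ t x, deviation f (freq T N) 1 t x = f t x - muEig T N * x := fun t x => one_mul _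
  have hlow : ∀ t x, 0 ≤ x → -η ≤ deviation f (freq T N) 1 t x := fun t x hx => by
    linarith [hdev t x, (hbound t x hx).1]
  refine exists_forall_integral_excess_freq_pos hT hf hN
    (fun t x => abs_le_of_mem_Icc_muEig hbound t) (by simp) hlow (fun t _ c hc => ?_) hLL
  simp only [← hdev] at hc
  exact eventually_lt_of_lt_liminf hc ⟨-η, eventually_map.mpr <|
    (eventually_ge_atTop 0).mono (hlow t)⟩

theorem exists_forall_integral_excess_pos_of_limsup
    (hLL : ∀ τ ∈ Icc (0 : ℝ) T, (∫ t in (0 : ℝ)..T,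
      (limsup (fun x : ℝ => f t x - muEig T (N + 1) * x) atTop) * psiEig T (N + 1) (t + τ)) < 0) :
    ∃ R > 0, ∀ Z, IsWeakBounce f 0 0 T Z → R ≤ ‖Z 0‖ →
      (∀ t ∈ Icc 0 T, Z t ≠ 0) ∧ 0 < ∫ t in 0..T, excess f (freq T (N + 1)) (-1) t (Z t) := by
  have hdev : ∀ t x, f t x - muEig T (N + 1) * x = -deviation f (freq T (N + 1)) (-1) t x :=
    fun t x => by rw [deviation, neg_one_mul, neg_neg, muEig_eq_freq_sq]
  have hlow : ∀ t x, 0 ≤ x → -η ≤ deviation f (freq T (N + 1)) (-1) t x := fun t x hx => by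
    linarith [hdev t x, (hbound t x hx).2]
  refine exists_forall_integral_excess_freq_pos hT hf N.succ_pos
    (fun t x => abs_le_of_mem_Icc_muEig hbound t) (by simp) hlow
    (ℓ := fun t => -limsup (fun x => f t x - muEig T (N + 1) * x) atTop)
    (fun t _ c hc => ?_) fun τ hτ => ?_
  · have hlimsup := eventually_lt_of_limsup_lt (lt_neg.mp hc) ⟨η, eventually_map.mpr <|
      (eventually_ge_atTop 0).mono fun x hx => by linarith [hdev t x, hlow t x hx]⟩
    simpa only [hdev, neg_lt_neg_iff] using hlimsup
  · simpa only [neg_mul, intervalIntegral.integral_neg, neg_pos] using hLL τ hτ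

end Bounds

end DoubleResonance

theorem statement2
    (T : ℝ) (hT : 0 < T)
    (g : ℝ → ℝ → ℝ)
    (hg_cont : ContinuousOn (fun q : ℝ × ℝ => g q.1 q.2) (univ ×ˢ Ici (0 : ℝ)))
    (hg_per : ∀ t x, g (t + T) x = g t x)
    (N : ℕ) (hN : 0 < N) (η : ℝ)
    (hη : ∀ t ∈ Icc (0 : ℝ) T, ∀ x : ℝ, 0 < x →
      muEig T N * x - η ≤ g t x ∧ g t x ≤ muEig T (N + 1) * x + η)
    (hLL1 : ∀ τ ∈ Icc (0 : ℝ) T,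
      (∫ t in (0 : ℝ)..T,
        (limsup (fun x : ℝ => g t x - muEig T (N + 1) * x) atTop) *
          psiEig T (N + 1) (t + τ)) < 0)
    (hLL2 : ∀ τ ∈ Icc (0 : ℝ) T,
      (∫ t in (0 : ℝ)..T,
        (liminf (fun x : ℝ => g t x - muEig T N * x) atTop) *
          psiEig T N (t + τ)) > 0) :
    ∃ x : ℝ → ℝ, IsBouncingSolution 0 g x ∧ ∀ t, x (t + T) = x t := by
  have hf := continuous_clampedForce hg_cont
  have hbound := fun t x => clampedForce_mem_Icc hT hg_cont hg_per hη t (x := x)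
  have hclamp : ∀ t μ, (fun x => clampedForce g t x - μ * x) =ᶠ[atTop] fun x => g t x - μ * x :=
    fun t μ => (eventually_ge_atTop 0).mono fun x hx => by simp only [clampedForce_of_nonneg t hx]
  simp only [← limsup_congr (hclamp _ _)] at hLL1
  simp only [← liminf_congr (hclamp _ _)] at hLL2
  obtain ⟨R₁, hR₁, hfast⟩ := exists_forall_integral_excess_pos_of_liminf hT hf hbound hN hLL2
  obtain ⟨R₂, -, hslow⟩ := exists_forall_integral_excess_pos_of_limsup hT hf hbound hLL1
  have hR : 0 < max R₁ R₂ := lt_max_of_lt_left hR₁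
  obtain ⟨Z, hper, hZ⟩ := exists_periodic_isWeakBounce hf
    (fun t x => abs_le_of_mem_Icc_muEig hbound t) hT hR (fun t x => hg_per t _) fun Z hZ hout =>
      have ⟨hne, hexc⟩ := hfast Z hZ (hout.1 ▸ le_max_left R₁ R₂)
      have ⟨_, hexc'⟩ := hslow Z hZ (hout.1 ▸ le_max_right R₁ R₂)
      not_mem_outwardPairs_of_integral_excess_pos hT hf hN hZ hne hexc hexc' hR hout
  exact ⟨fun t => position 0 (Z t), (isBouncingSolution_position hf hZ).congr
    fun t x => clampedForce_of_nonneg t, fun t => by simp only [hper t]⟩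
end

section
/- Let R0 > 0, T > 0, L0 > 0, δ > 0 and let f : ℝ × [R0,∞) → ℝ be continuous and T-periodic in its first variable, satisfying: there exist constants μ̌ ≤ μ̂ and a nonnegative integer N with (Nπ/T)² < μ̌, μ̂ < ((N+1)π/T)², and μ̌ ≤ liminf_{ρ→+∞} f(t,ρ)/ρ ≤ limsup_{ρ→+∞} f(t,ρ)/ρ ≤ μ̂ uniformly in t. Then there exist a positive integer n̄ and an open bounded set Ξ ⊂ (−R0/2, +∞) × ℝ such that every T-periodic solution x of x'' + g_n(L,t,x) = 0 with n > n̄ and L ∈ [0,L0] satisfies (x(t),x'(t)) ∈ Ξ for every t ∈ [0,T]. -/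
open Real Filter Set

/-- `g(L,t,r) = −L²/(r+R0)³ + f(t, r+R0)`. -/
noncomputable def gFun (R0 : ℝ) (f : ℝ → ℝ → ℝ) (L t r : ℝ) : ℝ :=
  -(L ^ 2) / (r + R0) ^ 3 + f t (r + R0)

/-- The approximating nonlinearity `g_n`. -/
noncomputable def gApprox (R0 δ : ℝ) (f : ℝ → ℝ → ℝ) (n : ℕ) (L t x : ℝ) : ℝ :=
  if 1 / (n : ℝ) ≤ x then gFun R0 f L t x
  else if 0 < x then (n : ℝ) * x * (gFun R0 f L t x + δ) - δ
  else (n : ℝ) * x - δ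

/-!
For `1/n ≤ x` the force `g_n` grows at least like `lo * x` and at most like `hi * x`, with
`(Nπ/T)² < lo` and `hi < ((N+1)π/T)²`, and for `x ≤ 0` it is the stiff spring `n x - δ`. So, up to
a bounded error `B` independent of `n`, it lies between two Fučík forces `a x⁺ - n x⁻`. In units of
the period `π/√a + π/√n` of such an oscillator, the angular speed of a solution becomes
`(x'² + x g_n(L, t, x)) / (x'² + a (x⁺)² + n (x⁻)²)`, whose integral along a closed orbit is the
number `k` of clockwise turns times that period. If the energy `E = x'² + (x⁺)² + n (x⁻)²` stayed
large on `[0, T]`, the error `B` would be negligible, and comparing with `a = lo` and `a = hi` would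
force `N < k < N + 1` as soon as `n` is large, since `π/√n` tends to `0`.

Hence `E` is bounded at some time, uniformly in `n`. In `E'` the stiff terms cancel, so
`|E'| ≤ (1 + hi + B) (E + 1)` with a constant independent of `n`, and Grönwall's inequality yields
`E + 1 ≤ K` at all times, with the same `K` for all large `n`. Finally `n (x⁻)² < K` keeps `x` above
`-R0 / 2` once `K ≤ n (R0 / 2)²`.
-/

noncomputable section

/-- The restoring force `a x⁺ - b x⁻` of the asymmetric (Fučík) oscillator; note `min x 0 = -x⁻`. -/
def fucikForce (a b x : ℝ) : ℝ := a * max x 0 + b * min x 0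

/-- Twice the energy of `x'' + a x⁺ - b x⁻ = 0` at position `x` and velocity `y`, because
`x * fucikForce a b x = a (x⁺)² + b (x⁻)²`. -/
def fucikEnergy (a b x y : ℝ) : ℝ := y ^ 2 + x * fucikForce a b x

/-- The minimal period of the nonzero solutions of `x'' + a x⁺ - b x⁻ = 0`: a half-turn takes time
`π / √a` where `x > 0` and `π / √b` where `x < 0`. -/
def fucikPeriod (a b : ℝ) : ℝ := π / √a + π / √b

/-- The time in which a solution of `x'' + a x⁺ - b x⁻ = 0` turns clockwise around the origin of the
phase plane from the polar angle `θ` to the polar angle `0`. -/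
def fucikPhase (a b θ : ℝ) : ℝ := ∫ φ in (0 : ℝ)..θ, (fucikEnergy a b (cos φ) (sin φ))⁻¹

/-- `x` solves `x'' + F(t, x) = 0` on `[0, T]` with velocity `x'` and `T`-periodic boundary
conditions. Derivatives at the endpoints are one-sided. -/
structure IsPeriodicSolution (T : ℝ) (F : ℝ → ℝ → ℝ) (x x' : ℝ → ℝ) : Prop where
  hasDerivWithinAt : ∀ t ∈ Icc 0 T, HasDerivWithinAt x (x' t) (Icc 0 T) t
  hasDerivWithinAt_velocity : ∀ t ∈ Icc 0 T, HasDerivWithinAt x' (-F t (x t)) (Icc 0 T) t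
  position_eq : x 0 = x T
  velocity_eq : x' 0 = x' T

end

section FucikEnergy

variable {a b c m r x y : ℝ}

lemma fucikForce_of_nonneg (hx : 0 ≤ x) : fucikForce a b x = a * x := by
  rw [fucikForce, max_eq_left hx, min_eq_right hx, mul_zero, add_zero]

lemma fucikForce_of_nonpos (hx : x ≤ 0) : fucikForce a b x = b * x := by
  rw [fucikForce, max_eq_right hx, min_eq_left hx, mul_zero, zero_add]

@[fun_prop]
lemma continuous_fucikForce : Continuous (fucikForce a b) := by
  unfold fucikForce
  fun_prop

lemma hasDerivAt_mul_fucikForce (a b x : ℝ) :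
    HasDerivAt (fun z => z * fucikForce a b z) (2 * fucikForce a b x) x := by
  have hasDerivAt_quadratic (c z : ℝ) : HasDerivAt (fun w : ℝ => w * (c * w)) (2 * (c * z)) z :=
    ((hasDerivAt_id z).mul ((hasDerivAt_id z).const_mul c)).congr_deriv (by simp only [id]; ring)
  refine hasDerivAt_of_hasDerivAt_of_ne' (x := 0) (g := fun z => 2 * fucikForce a b z)
    (fun z hz => ?_) (by fun_prop) (by fun_prop) x
  rcases lt_or_gt_of_ne hz with hz | hz
  · rw [fucikForce_of_nonpos hz.le]
    refine (hasDerivAt_quadratic b z).congr_of_eventuallyEq ?_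
    filter_upwards [gt_mem_nhds hz] with w hw
    rw [fucikForce_of_nonpos (le_of_lt hw)]
  · rw [fucikForce_of_nonneg hz.le]
    refine (hasDerivAt_quadratic a z).congr_of_eventuallyEq ?_
    filter_upwards [lt_mem_nhds hz] with w hw
    rw [fucikForce_of_nonneg (le_of_lt hw)]

lemma fucikEnergy_of_nonneg (hx : 0 ≤ x) : fucikEnergy a b x y = y ^ 2 + a * x ^ 2 := by
  rw [fucikEnergy, fucikForce_of_nonneg hx]
  ring

lemma fucikEnergy_of_nonpos (hx : x ≤ 0) : fucikEnergy a b x y = y ^ 2 + b * x ^ 2 := by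
  rw [fucikEnergy, fucikForce_of_nonpos hx]
  ring

lemma fucikEnergy_self : fucikEnergy a a x y = y ^ 2 + a * x ^ 2 :=
  (le_total 0 x).elim fucikEnergy_of_nonneg fucikEnergy_of_nonpos

lemma fucikEnergy_mul_mul (hr : 0 ≤ r) :
    fucikEnergy a b (r * x) (r * y) = r ^ 2 * fucikEnergy a b x y := by
  rcases le_total 0 x with hx | hx
  · rw [fucikEnergy_of_nonneg hx, fucikEnergy_of_nonneg (mul_nonneg hr hx)]
    ring
  · rw [fucikEnergy_of_nonpos hx, fucikEnergy_of_nonpos (mul_nonpos_of_nonneg_of_nonpos hr hx)]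
    ring

lemma fucikEnergy_periodic :
    Function.Periodic (fun θ => fucikEnergy a b (cos θ) (sin θ)) (2 * π) := fun θ => by
  simp only [cos_add_two_pi, sin_add_two_pi]

lemma mul_sq_add_sq_le_fucikEnergy (hm : m ≤ 1) (ha : m ≤ a) (hb : m ≤ b) :
    m * (x ^ 2 + y ^ 2) ≤ fucikEnergy a b x y := by
  have hy : m * y ^ 2 ≤ y ^ 2 := mul_le_of_le_one_left (sq_nonneg y) hm
  rcases le_total 0 x with hx | hx
  · rw [fucikEnergy_of_nonneg hx]
    linarith [mul_le_mul_of_nonneg_right ha (sq_nonneg x)]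
  · rw [fucikEnergy_of_nonpos hx]
    linarith [mul_le_mul_of_nonneg_right hb (sq_nonneg x)]

lemma fucikEnergy_pos (ha : 0 < a) (hb : 0 < b) (hxy : 0 < x ^ 2 + y ^ 2) :
    0 < fucikEnergy a b x y :=
  have hm : 0 < min 1 (min a b) := lt_min one_pos (lt_min ha hb)
  (mul_pos hm hxy).trans_le <| mul_sq_add_sq_le_fucikEnergy (min_le_left _ _)
    ((min_le_right _ _).trans (min_le_left _ _)) ((min_le_right _ _).trans (min_le_right _ _))

lemma fucikEnergy_cos_sin_pos (ha : 0 < a) (hb : 0 < b) (θ : ℝ) :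
    0 < fucikEnergy a b (cos θ) (sin θ) :=
  fucikEnergy_pos ha hb (by rw [cos_sq_add_sin_sq]; exact one_pos)

lemma mul_fucikEnergy_le (hm : m ≤ 1) (hc : m * c ≤ a) (hb : 0 ≤ b) :
    m * fucikEnergy c b x y ≤ fucikEnergy a b x y := by
  have hy : m * y ^ 2 ≤ y ^ 2 := mul_le_of_le_one_left (sq_nonneg y) hm
  rcases le_total 0 x with hx | hx
  · rw [fucikEnergy_of_nonneg hx, fucikEnergy_of_nonneg hx]
    linarith [mul_le_mul_of_nonneg_right hc (sq_nonneg x)]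
  · rw [fucikEnergy_of_nonpos hx, fucikEnergy_of_nonpos hx]
    linarith [mul_le_of_le_one_left (mul_nonneg hb (sq_nonneg x)) hm]

end FucikEnergy

section FucikPhase

variable {a b : ℝ}

lemma hasDerivAt_arctan_tan_div_sqrt (ha : 0 < a) {θ : ℝ} (hθ : cos θ ≠ 0) :
    HasDerivAt (fun φ => arctan (tan φ / √a) / √a) (sin θ ^ 2 + a * cos θ ^ 2)⁻¹ θ := by
  refine (((hasDerivAt_tan hθ).div_const (√a)).arctan.div_const (√a)).congr_deriv ?_
  have hden : 1 + (tan θ / √a) ^ 2 = (sin θ ^ 2 + a * cos θ ^ 2) / (a * cos θ ^ 2) := by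
    rw [tan_eq_sin_div_cos, div_pow, div_pow, sq_sqrt ha.le]
    field_simp
    ring
  rw [hden]
  field_simp
  rw [sq_sqrt ha.le]

lemma continuous_inv_fucikEnergy_cos_sin (ha : 0 < a) (hb : 0 < b) :
    Continuous fun θ => (fucikEnergy a b (cos θ) (sin θ))⁻¹ := by
  refine Continuous.inv₀ ?_ fun θ => (fucikEnergy_cos_sin_pos ha hb θ).ne'
  unfold fucikEnergy
  fun_prop

lemma intervalIntegrable_inv_fucikEnergy_cos_sin (ha : 0 < a) (hb : 0 < b) (α β : ℝ) :
    IntervalIntegrable (fun θ => (fucikEnergy a b (cos θ) (sin θ))⁻¹) MeasureTheory.volume α β :=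
  (continuous_inv_fucikEnergy_cos_sin ha hb).intervalIntegrable α β

lemma integral_inv_sin_sq_add_mul_cos_sq (ha : 0 < a) :
    ∫ θ in (-(π / 2))..(π / 2), (sin θ ^ 2 + a * cos θ ^ 2)⁻¹ = π / √a := by
  have hs : 0 < √a := sqrt_pos.2 ha
  have hint := intervalIntegrable_inv_fucikEnergy_cos_sin ha ha (-(π / 2)) (π / 2)
  simp only [fucikEnergy_self] at hint
  rw [intervalIntegral.integral_eq_sub_of_hasDerivAt_of_tendsto (by linarith [pi_pos])
    (fun θ hθ => hasDerivAt_arctan_tan_div_sqrt ha (cos_pos_of_mem_Ioo hθ).ne')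
    hint
    (((tendsto_arctan_atBot.mono_right nhdsWithin_le_nhds).comp
      (tendsto_tan_neg_pi_div_two.atBot_div_const hs)).div_const _)
    (((tendsto_arctan_atTop.mono_right nhdsWithin_le_nhds).comp
      (tendsto_tan_pi_div_two.atTop_div_const hs)).div_const _)]
  ring

lemma integral_inv_fucikEnergy_cos_sin (ha : 0 < a) (hb : 0 < b) :
    ∫ θ in (-(π / 2))..(-(π / 2) + 2 * π), (fucikEnergy a b (cos θ) (sin θ))⁻¹ =
      fucikPeriod a b := by
  have hint := intervalIntegrable_inv_fucikEnergy_cos_sin ha hb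
  have hcos {θ : ℝ} (hθ : θ ∈ uIcc (-(π / 2)) (π / 2)) : 0 ≤ cos θ :=
    cos_nonneg_of_mem_Icc (by rwa [uIcc_of_le (by linarith [pi_pos])] at hθ)
  have hright : ∫ θ in (-(π / 2))..(π / 2), (fucikEnergy a b (cos θ) (sin θ))⁻¹ = π / √a := by
    rw [← integral_inv_sin_sq_add_mul_cos_sq ha]
    refine intervalIntegral.integral_congr fun θ hθ => ?_
    simp only [fucikEnergy_of_nonneg (hcos hθ)]
  have hleft : ∫ θ in (π / 2)..(-(π / 2) + 2 * π), (fucikEnergy a b (cos θ) (sin θ))⁻¹ =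
      π / √b := by
    rw [← integral_inv_sin_sq_add_mul_cos_sq hb, show π / 2 = -(π / 2) + π by ring,
      show -(-(π / 2) + π) + 2 * π = -(π / 2) + π + π by ring,
      ← intervalIntegral.integral_comp_add_right
        (fun θ => (fucikEnergy a b (cos θ) (sin θ))⁻¹) π,
      show -(π / 2) + π = π / 2 by ring]
    refine intervalIntegral.integral_congr fun θ hθ => ?_
    simp only [cos_add_pi, sin_add_pi,
      fucikEnergy_of_nonpos (neg_nonpos.2 (hcos hθ)), neg_sq]
  rw [← intervalIntegral.integral_add_adjacent_intervals (hint _ _) (hint _ _), hright, hleft,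
    fucikPeriod]

lemma hasDerivAt_fucikPhase (ha : 0 < a) (hb : 0 < b) (θ : ℝ) :
    HasDerivAt (fucikPhase a b) (fucikEnergy a b (cos θ) (sin θ))⁻¹ θ :=
  ((continuous_inv_fucikEnergy_cos_sin ha hb).integral_hasStrictDerivAt 0 θ).hasDerivAt

lemma fucikPhase_add_int_mul_two_pi (ha : 0 < a) (hb : 0 < b) (θ : ℝ) (k : ℤ) :
    fucikPhase a b (θ + k * (2 * π)) = fucikPhase a b θ + k * fucikPeriod a b := by
  have hint := intervalIntegrable_inv_fucikEnergy_cos_sin ha hb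
  have hper : Function.Periodic (fun φ => (fucikEnergy a b (cos φ) (sin φ))⁻¹) (2 * π) :=
    fucikEnergy_periodic.comp (·⁻¹)
  have hturns := hper.intervalIntegral_add_zsmul_eq k θ fun _ _ => hint _ _
  rw [hper.intervalIntegral_add_eq θ (-(π / 2)), integral_inv_fucikEnergy_cos_sin ha hb,
    zsmul_eq_mul, zsmul_eq_mul] at hturns
  rw [fucikPhase, fucikPhase, ← hturns,
    intervalIntegral.integral_add_adjacent_intervals (hint _ _) (hint _ _)]

end FucikPhase

section PlaneCurves

variable {t₀ t₁ : ℝ}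

lemma exists_log_lift {z z' : ℝ → ℂ} (hz : ∀ t ∈ Icc t₀ t₁, HasDerivWithinAt z (z' t) (Icc t₀ t₁) t)
    (hz' : ContinuousOn z' (Icc t₀ t₁)) (hne : ∀ t ∈ Icc t₀ t₁, z t ≠ 0) :
    ∃ w : ℝ → ℂ, ∀ t ∈ Icc t₀ t₁,
      z t = Complex.exp (w t) ∧ HasDerivWithinAt w (z' t / z t) (Icc t₀ t₁) t := by
  have hq : ContinuousOn (fun t => z' t / z t) (Icc t₀ t₁) :=
    hz'.div (fun t ht => (hz t ht).continuousWithinAt) hne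
  set w : ℝ → ℂ := fun t => Complex.log (z t₀) + ∫ s in t₀..t, z' s / z s with hw
  have hwd : ∀ t ∈ Icc t₀ t₁, HasDerivWithinAt w (z' t / z t) (Icc t₀ t₁) t := fun t ht => by
    have : Fact (t ∈ Icc t₀ t₁) := ⟨ht⟩
    exact (intervalIntegral.integral_hasDerivWithinAt_right
      (hq.mono (Icc_subset_Icc_right ht.2) |>.intervalIntegrable_of_Icc ht.1)
      (hq.stronglyMeasurableAtFilter_nhdsWithin measurableSet_Icc t) (hq t ht)).const_add _
  refine ⟨w, fun t ht => ⟨?_, hwd t ht⟩⟩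
  have hd : ∀ s ∈ Icc t₀ t₁,
      HasDerivWithinAt (fun u => z u * Complex.exp (-w u)) 0 (Icc t₀ t₁) s := fun s hs => by
    refine ((hz s hs).mul (hwd s hs).neg.cexp).congr_deriv ?_
    field_simp [hne s hs]
    ring
  have ht₀ : t₀ ∈ Icc t₀ t₁ := ⟨le_rfl, ht.1.trans ht.2⟩
  have hconst : z t * Complex.exp (-w t) = z t₀ * Complex.exp (-w t₀) := by
    have := (convex_Icc t₀ t₁).norm_image_sub_le_of_norm_hasDerivWithin_le hd
      (fun _ _ => norm_zero.le) ht₀ ht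
    rwa [zero_mul, norm_le_zero_iff, sub_eq_zero] at this
  have hinit : Complex.exp (w t₀) = z t₀ := by
    simp only [hw, intervalIntegral.integral_same, add_zero, Complex.exp_log (hne t₀ ht₀)]
  rw [← hinit, ← Complex.exp_add, add_neg_cancel, Complex.exp_zero] at hconst
  rwa [Complex.exp_neg, mul_inv_eq_one₀ (Complex.exp_ne_zero _)] at hconst

variable {x y x' y' : ℝ → ℝ}

lemma exists_polar_lift
    (hx : ∀ t ∈ Icc t₀ t₁, HasDerivWithinAt x (x' t) (Icc t₀ t₁) t)
    (hy : ∀ t ∈ Icc t₀ t₁, HasDerivWithinAt y (y' t) (Icc t₀ t₁) t)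
    (hx' : ContinuousOn x' (Icc t₀ t₁)) (hy' : ContinuousOn y' (Icc t₀ t₁))
    (hne : ∀ t ∈ Icc t₀ t₁, 0 < x t ^ 2 + y t ^ 2) :
    ∃ r θ : ℝ → ℝ, ∀ t ∈ Icc t₀ t₁, 0 < r t ∧ x t = r t * cos (θ t) ∧ y t = r t * sin (θ t) ∧
      HasDerivWithinAt θ ((x t * y' t - y t * x' t) / r t ^ 2) (Icc t₀ t₁) t := by
  obtain ⟨w, hw⟩ := exists_log_lift
    (z := fun t => x t + y t * Complex.I) (z' := fun t => x' t + y' t * Complex.I)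
    (fun t ht => (hx t ht).ofReal_comp.add ((hy t ht).ofReal_comp.mul_const _)) (by fun_prop)
    fun t ht h => by
      have hre : x t = 0 := by simpa using congrArg Complex.re h
      have him : y t = 0 := by simpa using congrArg Complex.im h
      simpa [hre, him] using hne t ht
  refine ⟨fun t => Real.exp (w t).re, fun t => (w t).im, fun t ht => ?_⟩
  obtain ⟨hexp, hderiv⟩ := hw t ht
  have hxt : x t = Real.exp (w t).re * cos (w t).im := by
    simpa [Complex.exp_re] using congrArg Complex.re hexp
  have hyt : y t = Real.exp (w t).re * sin (w t).im := by
    simpa [Complex.exp_im] using congrArg Complex.im hexp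
  refine ⟨Real.exp_pos _, hxt, hyt,
    (Complex.imCLM.hasFDerivAt.comp_hasDerivWithinAt t hderiv).congr_deriv ?_⟩
  have hnorm : x t ^ 2 + y t ^ 2 = Real.exp (w t).re ^ 2 := by
    rw [hxt, hyt]
    linear_combination Real.exp (w t).re ^ 2 * cos_sq_add_sin_sq (w t).im
  rw [← hnorm]
  simp only [Complex.imCLM_apply, Complex.div_im, Complex.add_im, Complex.ofReal_im,
    Complex.mul_im, Complex.ofReal_re, Complex.I_im, mul_one, Complex.I_re, mul_zero, add_zero,
    zero_add, Complex.add_re, Complex.mul_re, sub_self, Complex.normSq_apply]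
  ring

lemma exists_int_mul_two_pi_of_polar_eq {r₀ r₁ θ₀ θ₁ : ℝ} (hr₀ : 0 < r₀) (hr₁ : 0 < r₁)
    (hcos : r₁ * cos θ₁ = r₀ * cos θ₀) (hsin : r₁ * sin θ₁ = r₀ * sin θ₀) :
    ∃ k : ℤ, θ₁ = θ₀ + k * (2 * π) := by
  have hr : r₁ = r₀ := by
    have hsq : r₁ ^ 2 = r₀ ^ 2 := by
      linear_combination (r₁ * cos θ₁ + r₀ * cos θ₀) * hcos + (r₁ * sin θ₁ + r₀ * sin θ₀) * hsin
        - r₁ ^ 2 * cos_sq_add_sin_sq θ₁ + r₀ ^ 2 * cos_sq_add_sin_sq θ₀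
    exact (pow_left_inj₀ hr₁.le hr₀.le two_ne_zero).1 hsq
  subst hr
  obtain ⟨k, hk⟩ := Real.Angle.angle_eq_iff_two_pi_dvd_sub.1 <| Real.Angle.cos_sin_inj
    (mul_left_cancel₀ hr₁.ne' hcos) (mul_left_cancel₀ hr₁.ne' hsin)
  exact ⟨k, by linear_combination hk⟩

/-- For every `a` and `b`, minus `fucikPhase a b` along a continuous polar angle of the curve is a
primitive of the integrand. The integer `k` is the number of clockwise turns around the origin,
which is why one `k` serves all `a` and `b`. -/
lemma exists_integral_div_fucikEnergy_eq_mul_fucikPeriod (h₀₁ : t₀ ≤ t₁)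
    (hx : ∀ t ∈ Icc t₀ t₁, HasDerivWithinAt x (x' t) (Icc t₀ t₁) t)
    (hy : ∀ t ∈ Icc t₀ t₁, HasDerivWithinAt y (y' t) (Icc t₀ t₁) t)
    (hx' : ContinuousOn x' (Icc t₀ t₁)) (hy' : ContinuousOn y' (Icc t₀ t₁))
    (hne : ∀ t ∈ Icc t₀ t₁, 0 < x t ^ 2 + y t ^ 2) (hxx : x t₀ = x t₁) (hyy : y t₀ = y t₁) :
    ∃ k : ℤ, ∀ a b : ℝ, 0 < a → 0 < b →
      IntervalIntegrable (fun t => (y t * x' t - x t * y' t) / fucikEnergy a b (x t) (y t))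
        MeasureTheory.volume t₀ t₁ ∧
      ∫ t in t₀..t₁, (y t * x' t - x t * y' t) / fucikEnergy a b (x t) (y t) =
        k * fucikPeriod a b := by
  obtain ⟨r, θ, hpolar⟩ := exists_polar_lift hx hy hx' hy' hne
  choose! hr hxr hyr hθ using hpolar
  have ht₀ : t₀ ∈ Icc t₀ t₁ := left_mem_Icc.2 h₀₁
  have ht₁ : t₁ ∈ Icc t₀ t₁ := right_mem_Icc.2 h₀₁
  obtain ⟨k, hk⟩ := exists_int_mul_two_pi_of_polar_eq (hr t₁ ht₁) (hr t₀ ht₀)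
    (by rw [← hxr t₀ ht₀, ← hxr t₁ ht₁, hxx]) (by rw [← hyr t₀ ht₀, ← hyr t₁ ht₁, hyy])
  refine ⟨k, fun a b ha hb => ?_⟩
  have hpos : ∀ t ∈ Icc t₀ t₁, 0 < fucikEnergy a b (x t) (y t) := fun t ht =>
    fucikEnergy_pos ha hb (hne t ht)
  have hint : IntervalIntegrable (fun t => (y t * x' t - x t * y' t) / fucikEnergy a b (x t) (y t))
      MeasureTheory.volume t₀ t₁ := by
    have hxc : ContinuousOn x (Icc t₀ t₁) := fun t ht => (hx t ht).continuousWithinAt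
    have hyc : ContinuousOn y (Icc t₀ t₁) := fun t ht => (hy t ht).continuousWithinAt
    refine (ContinuousOn.div (by fun_prop) ?_ fun t ht => (hpos t ht).ne').intervalIntegrable_of_Icc
      h₀₁
    unfold fucikEnergy
    fun_prop
  have hphase : ∀ t ∈ Icc t₀ t₁, HasDerivWithinAt (fun s => -fucikPhase a b (θ s))
      ((y t * x' t - x t * y' t) / fucikEnergy a b (x t) (y t)) (Icc t₀ t₁) t := fun t ht => by
    refine ((hasDerivAt_fucikPhase ha hb (θ t)).comp_hasDerivWithinAt t (hθ t ht)).neg.congr_deriv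
      ?_
    have henergy : fucikEnergy a b (x t) (y t) =
        r t ^ 2 * fucikEnergy a b (cos (θ t)) (sin (θ t)) := by
      rw [← fucikEnergy_mul_mul (hr t ht).le, ← hxr t ht, ← hyr t ht]
    rw [henergy, ← neg_sub (x t * y' t), neg_div, div_mul_eq_div_div]
    ring
  refine ⟨hint, ?_⟩
  rw [intervalIntegral.integral_eq_sub_of_hasDerivAt_of_le h₀₁
    (fun t ht => (hphase t ht).continuousWithinAt)
    (fun t ht => (hphase t (Ioo_subset_Icc_self ht)).hasDerivAt (Icc_mem_nhds ht.1 ht.2)) hint,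
    hk, fucikPhase_add_int_mul_two_pi ha hb]
  ring

end PlaneCurves

lemma le_mul_exp_of_abs_deriv_le {s : Set ℝ} (hs : Convex ℝ s) {u u' : ℝ → ℝ} {C : ℝ}
    (hu : ∀ t ∈ s, HasDerivWithinAt u (u' t) s t) (hpos : ∀ t ∈ s, 0 < u t)
    (hbound : ∀ t ∈ s, |u' t| ≤ C * u t) {t₁ t₂ : ℝ} (ht₁ : t₁ ∈ s) (ht₂ : t₂ ∈ s) :
    u t₂ ≤ u t₁ * Real.exp (C * |t₂ - t₁|) := by
  have hlog : |Real.log (u t₂) - Real.log (u t₁)| ≤ C * |t₂ - t₁| :=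
    hs.norm_image_sub_le_of_norm_hasDerivWithin_le
      (fun t ht => (hu t ht).log (hpos t ht).ne')
      (fun t ht => by
        rw [norm_eq_abs, abs_div, abs_of_pos (hpos t ht), div_le_iff₀ (hpos t ht)]
        exact hbound t ht) ht₁ ht₂
  rw [← log_le_log_iff (hpos t₂ ht₂) (mul_pos (hpos t₁ ht₁) (Real.exp_pos _)),
    log_mul (hpos t₁ ht₁).ne' (Real.exp_ne_zero _), Real.log_exp]
  linarith [le_of_abs_le hlog]

section FucikBounds

variable {a b lo hi m ε B x y g : ℝ}

lemma sq_add_sq_le_fucikEnergy_one (hb : 1 ≤ b) : x ^ 2 + y ^ 2 ≤ fucikEnergy 1 b x y := by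
  simpa only [one_mul] using mul_sq_add_sq_le_fucikEnergy le_rfl le_rfl hb

lemma sq_add_sq_pos_of_fucikEnergy_pos (h : 0 < fucikEnergy a b x y) : 0 < x ^ 2 + y ^ 2 := by
  by_contra! hxy
  have hx : x = 0 := by nlinarith [sq_nonneg x, sq_nonneg y]
  have hy : y = 0 := by nlinarith [sq_nonneg x, sq_nonneg y]
  simp [fucikEnergy, hx, hy] at h

lemma mul_abs_le_mul_fucikEnergy (hB : 0 ≤ B) (hε : 0 < ε) (hm : 0 < m) (hm₁ : m ≤ 1) (hma : m ≤ a)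
    (hb : 1 ≤ b) (hlarge : (B / (ε * m)) ^ 2 ≤ fucikEnergy 1 b x y) :
    B * |x| ≤ ε * fucikEnergy a b x y := by
  set E := fucikEnergy 1 b x y
  have hxE : x ^ 2 ≤ E := by
    linarith [sq_add_sq_le_fucikEnergy_one (x := x) (y := y) hb, sq_nonneg y]
  have hBE : B ≤ √E * (ε * m) := by
    rw [← div_le_iff₀ (mul_pos hε hm)]
    exact (le_abs_self _).trans (abs_le_sqrt hlarge)
  calc B * |x| ≤ √E * (ε * m) * √E := mul_le_mul hBE (abs_le_sqrt hxE) (abs_nonneg x) (hB.trans hBE)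
    _ = ε * (m * E) := by rw [mul_right_comm, mul_self_sqrt ((sq_nonneg x).trans hxE)]; ring
    _ ≤ ε * fucikEnergy a b x y :=
      mul_le_mul_of_nonneg_left (mul_fucikEnergy_le hm₁ (by rwa [mul_one]) (by linarith)) hε.le

lemma sq_add_mul_mem_Icc_fucikEnergy
    (hg : g ∈ Icc (fucikForce lo b x - B) (fucikForce hi b x + B)) :
    y ^ 2 + x * g ∈ Icc (fucikEnergy lo b x y - B * |x|) (fucikEnergy hi b x y + B * |x|) := by
  obtain ⟨hlower, hupper⟩ := hg
  unfold fucikEnergy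
  rcases le_total 0 x with hx | hx
  · rw [abs_of_nonneg hx]
    constructor
    · linarith [mul_le_mul_of_nonneg_left hlower hx]
    · linarith [mul_le_mul_of_nonneg_left hupper hx]
  · rw [fucikForce_of_nonpos hx] at hlower hupper
    rw [fucikForce_of_nonpos hx, fucikForce_of_nonpos hx, abs_of_nonpos hx]
    constructor
    · linarith [mul_le_mul_of_nonpos_left hupper hx]
    · linarith [mul_le_mul_of_nonpos_left hlower hx]

lemma abs_fucikForce_one_sub_le (hlo : 0 ≤ lo) (hhi : 0 ≤ hi)
    (hg : g ∈ Icc (fucikForce lo b x - B) (fucikForce hi b x + B)) :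
    |fucikForce 1 b x - g| ≤ (1 + hi) * |x| + B := by
  obtain ⟨hlower, hupper⟩ := hg
  rcases le_total 0 x with hx | hx
  · rw [fucikForce_of_nonneg hx] at hlower hupper
    rw [fucikForce_of_nonneg hx, abs_of_nonneg hx, abs_le]
    constructor <;> linarith [mul_nonneg hlo hx, mul_nonneg hhi hx]
  · rw [fucikForce_of_nonpos hx] at hlower hupper
    have hslope : 0 ≤ (1 + hi) * |x| := by positivity
    rw [fucikForce_of_nonpos hx, abs_le]
    constructor <;> linarith

lemma abs_two_mul_mul_fucikForce_sub_le (hlo : 0 ≤ lo) (hhi : 0 ≤ hi) (hb : 1 ≤ b) (hB : 0 ≤ B)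
    (hg : g ∈ Icc (fucikForce lo b x - B) (fucikForce hi b x + B)) :
    |2 * y * (fucikForce 1 b x - g)| ≤ (1 + hi + B) * (fucikEnergy 1 b x y + 1) := by
  have hE := sq_add_sq_le_fucikEnergy_one (x := x) (y := y) hb
  have hxy : 2 * |y| * |x| ≤ fucikEnergy 1 b x y + 1 := by
    nlinarith [sq_nonneg (|y| - |x|), sq_abs x, sq_abs y]
  have hy : 2 * |y| ≤ fucikEnergy 1 b x y + 1 := by
    nlinarith [sq_nonneg (|y| - 1), sq_abs y, sq_nonneg x]
  calc |2 * y * (fucikForce 1 b x - g)| = 2 * |y| * |fucikForce 1 b x - g| := by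
        rw [abs_mul, abs_mul, abs_two]
    _ ≤ 2 * |y| * ((1 + hi) * |x| + B) :=
        mul_le_mul_of_nonneg_left (abs_fucikForce_one_sub_le hlo hhi hg) (by positivity)
    _ = (1 + hi) * (2 * |y| * |x|) + B * (2 * |y|) := by ring
    _ ≤ (1 + hi) * (fucikEnergy 1 b x y + 1) + B * (fucikEnergy 1 b x y + 1) := by gcongr
    _ = (1 + hi + B) * (fucikEnergy 1 b x y + 1) := by ring

end FucikBounds

lemma exists_nonresonance_margin {T lo hi : ℝ} {N : ℕ} (hT : 0 < T)
    (hlo : ((N : ℝ) * π / T) ^ 2 < lo) (hhi_pos : 0 < hi)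
    (hhi : hi < (((N : ℝ) + 1) * π / T) ^ 2) :
    ∃ ε > 0, ∀ᶠ b in atTop, N * fucikPeriod lo b < (1 - ε) * T ∧
      (1 + ε) * T < (N + 1) * fucikPeriod hi b := by
  have hlo_time : N * (π / √lo) < T := by
    have := (div_lt_iff₀ hT).1 (lt_sqrt_of_sq_lt hlo)
    rw [← mul_div_assoc, div_lt_iff₀ (sqrt_pos.2 ((sq_nonneg _).trans_lt hlo))]
    linarith
  have hhi_time : T < (N + 1) * (π / √hi) := by
    have := (lt_div_iff₀ hT).1 ((sqrt_lt' (by positivity)).2 hhi)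
    rw [← mul_div_assoc, lt_div_iff₀ (sqrt_pos.2 hhi_pos)]
    linarith
  obtain ⟨s, hs, hsT⟩ := exists_between hlo_time
  obtain ⟨s', hTs', hs'⟩ := exists_between hhi_time
  obtain ⟨ε, hε, hεmin⟩ : ∃ ε > 0, ε < min (1 - s / T) (s' / T - 1) := exists_between <|
    lt_min (sub_pos.2 ((div_lt_one hT).2 hsT)) (sub_pos.2 ((one_lt_div hT).2 hTs'))
  have hεs : s < (1 - ε) * T := (div_lt_iff₀ hT).1 (by linarith [lt_min_iff.1 hεmin])
  have hεs' : (1 + ε) * T < s' := (lt_div_iff₀ hT).1 (by linarith [lt_min_iff.1 hεmin])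
  have hlim : Tendsto (fun b => N * fucikPeriod lo b) atTop (nhds (N * (π / √lo + 0))) :=
    ((tendsto_sqrt_atTop.const_div_atTop π).const_add _).const_mul _
  rw [add_zero] at hlim
  refine ⟨ε, hε, ?_⟩
  filter_upwards [hlim.eventually_lt_const hs] with b hb
  refine ⟨hb.trans hεs, hεs'.trans (hs'.trans_le ?_)⟩
  rw [fucikPeriod, mul_add]
  exact le_add_of_nonneg_right (by positivity)

namespace IsPeriodicSolution

variable {T lo hi b B m ε : ℝ} {F : ℝ → ℝ → ℝ} {x x' : ℝ → ℝ}

lemma exists_turns (h : IsPeriodicSolution T F x x') (hT : 0 ≤ T)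
    (hF : ContinuousOn (fun q : ℝ × ℝ => F q.1 q.2) (Icc 0 T ×ˢ univ))
    (hne : ∀ t ∈ Icc 0 T, 0 < x t ^ 2 + x' t ^ 2) :
    ∃ k : ℤ, ∀ a b c : ℝ, 0 < a → 0 < b →
      ((∀ t ∈ Icc 0 T, c * fucikEnergy a b (x t) (x' t) ≤ x' t ^ 2 + x t * F t (x t)) →
        c * T ≤ k * fucikPeriod a b) ∧
      ((∀ t ∈ Icc 0 T, x' t ^ 2 + x t * F t (x t) ≤ c * fucikEnergy a b (x t) (x' t)) →
        k * fucikPeriod a b ≤ c * T) := by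
  have hx : ContinuousOn x (Icc 0 T) := fun t ht => (h.hasDerivWithinAt t ht).continuousWithinAt
  have hx' : ContinuousOn x' (Icc 0 T) := fun t ht =>
    (h.hasDerivWithinAt_velocity t ht).continuousWithinAt
  have hFx : ContinuousOn (fun t => F t (x t)) (Icc 0 T) :=
    hF.comp (continuousOn_id.prodMk hx) fun t ht => ⟨ht, mem_univ _⟩
  obtain ⟨k, hk⟩ := exists_integral_div_fucikEnergy_eq_mul_fucikPeriod hT h.hasDerivWithinAt
    h.hasDerivWithinAt_velocity hx' hFx.neg hne h.position_eq h.velocity_eq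
  refine ⟨k, fun a b c ha hb => ?_⟩
  obtain ⟨hint, hk⟩ := hk a b ha hb
  have hpos : ∀ t ∈ Icc 0 T, 0 < fucikEnergy a b (x t) (x' t) := fun t ht =>
    fucikEnergy_pos ha hb (hne t ht)
  have hconst : ∫ _ in (0 : ℝ)..T, c = c * T := by
    rw [intervalIntegral.integral_const, sub_zero, smul_eq_mul, mul_comm]
  rw [← hk, ← hconst]
  refine ⟨fun hle => intervalIntegral.integral_mono_on hT intervalIntegrable_const hint
    fun t ht => (le_div_iff₀ (hpos t ht)).2 ?_, fun hle => intervalIntegral.integral_mono_on hT hint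
    intervalIntegrable_const fun t ht => (div_le_iff₀ (hpos t ht)).2 ?_⟩
  all_goals linarith [hle t ht]

lemma exists_fucikEnergy_le (h : IsPeriodicSolution T F x x') (hT : 0 ≤ T)
    (hF : ContinuousOn (fun q : ℝ × ℝ => F q.1 q.2) (Icc 0 T ×ˢ univ)) (hB : 0 ≤ B)
    (hbound : ∀ t ∈ Icc 0 T, ∀ z, F t z ∈ Icc (fucikForce lo b z - B) (fucikForce hi b z + B))
    (hm : 0 < m) (hm₁ : m ≤ 1) (hmlo : m ≤ lo) (hmhi : m ≤ hi) (hb : 1 ≤ b) (hε : 0 < ε) {N : ℕ}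
    (hN : N * fucikPeriod lo b < (1 - ε) * T) (hN' : (1 + ε) * T < (N + 1) * fucikPeriod hi b) :
    ∃ t ∈ Icc 0 T, fucikEnergy 1 b (x t) (x' t) ≤ (B / (ε * m)) ^ 2 := by
  by_contra! hlarge
  have hne : ∀ t ∈ Icc 0 T, 0 < x t ^ 2 + x' t ^ 2 := fun t ht =>
    sq_add_sq_pos_of_fucikEnergy_pos ((sq_nonneg _).trans_lt (hlarge t ht))
  obtain ⟨k, hk⟩ := h.exists_turns hT hF hne
  have hlower : (1 - ε) * T ≤ k * fucikPeriod lo b :=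
    (hk lo b (1 - ε) (by linarith) (by linarith)).1 fun t ht => by
      linarith [(sq_add_mul_mem_Icc_fucikEnergy (y := x' t) (hbound t ht (x t))).1,
        mul_abs_le_mul_fucikEnergy hB hε hm hm₁ hmlo hb (hlarge t ht).le]
  have hupper : k * fucikPeriod hi b ≤ (1 + ε) * T :=
    (hk hi b (1 + ε) (by linarith) (by linarith)).2 fun t ht => by
      linarith [(sq_add_mul_mem_Icc_fucikEnergy (y := x' t) (hbound t ht (x t))).2,
        mul_abs_le_mul_fucikEnergy hB hε hm hm₁ hmhi hb (hlarge t ht).le]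
  have hNk : (N : ℝ) < k :=
    lt_of_mul_lt_mul_right (hN.trans_le hlower) (by unfold fucikPeriod; positivity)
  have hkN : (k : ℝ) < N + 1 :=
    lt_of_mul_lt_mul_right (hupper.trans_lt hN') (by unfold fucikPeriod; positivity)
  norm_cast at hNk hkN
  omega

lemma fucikEnergy_add_one_le_mul_exp (h : IsPeriodicSolution T F x x') (hlo : 0 ≤ lo) (hhi : 0 ≤ hi)
    (hb : 1 ≤ b) (hB : 0 ≤ B)
    (hbound : ∀ t ∈ Icc 0 T, ∀ z, F t z ∈ Icc (fucikForce lo b z - B) (fucikForce hi b z + B))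
    {s t : ℝ} (hs : s ∈ Icc 0 T) (ht : t ∈ Icc 0 T) :
    fucikEnergy 1 b (x t) (x' t) + 1 ≤
      (fucikEnergy 1 b (x s) (x' s) + 1) * Real.exp ((1 + hi + B) * T) := by
  have hpos (u : ℝ) : 0 < fucikEnergy 1 b (x u) (x' u) + 1 := by
    linarith [sq_add_sq_le_fucikEnergy_one (x := x u) (y := x' u) hb, sq_nonneg (x u),
      sq_nonneg (x' u)]
  have hderiv : ∀ u ∈ Icc 0 T, HasDerivWithinAt (fun u => fucikEnergy 1 b (x u) (x' u) + 1)
      (2 * x' u * (fucikForce 1 b (x u) - F u (x u))) (Icc 0 T) u := fun u hu => by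
    have hkinetic := (h.hasDerivWithinAt_velocity u hu).pow 2
    have hpotential :=
      (hasDerivAt_mul_fucikForce 1 b (x u)).comp_hasDerivWithinAt u (h.hasDerivWithinAt u hu)
    exact ((hkinetic.add hpotential).add_const 1).congr_deriv (by push_cast; ring)
  have hgrowth := le_mul_exp_of_abs_deriv_le (convex_Icc 0 T) hderiv (fun u _ => hpos u)
    (fun u hu => abs_two_mul_mul_fucikForce_sub_le hlo hhi hb hB (hbound u hu (x u))) hs ht
  refine hgrowth.trans (mul_le_mul_of_nonneg_left (Real.exp_le_exp.2 ?_) (hpos s).le)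
  exact mul_le_mul_of_nonneg_left (abs_sub_le_iff.2
    ⟨by linarith [ht.2, hs.1], by linarith [hs.2, ht.1]⟩) (by positivity)

end IsPeriodicSolution

lemma mem_prod_Ioo_of_fucikEnergy_add_one_le {b d K x y : ℝ} (hb : 1 ≤ b) (hd : 0 ≤ d)
    (hK : K ≤ b * d ^ 2) (hE : fucikEnergy 1 b x y + 1 ≤ K) :
    (x, y) ∈ Ioo (-d) K ×ˢ Ioo (-K) K := by
  have hxy := sq_add_sq_le_fucikEnergy_one (x := x) (y := y) hb
  refine ⟨⟨?_, by nlinarith⟩, by nlinarith, by nlinarith⟩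
  change -d < x
  by_contra! hxd
  rw [fucikEnergy_of_nonpos (by linarith)] at hE
  have hdx : b * d ^ 2 ≤ b * x ^ 2 := mul_le_mul_of_nonneg_left (by nlinarith) (by linarith)
  linarith [sq_nonneg y]

lemma exists_mem_prod_Ioo_of_nonresonance {T lo hi B d : ℝ} {N : ℕ} (hT : 0 < T)
    (hlo : ((N : ℝ) * π / T) ^ 2 < lo) (hhi_pos : 0 < hi)
    (hhi : hi < (((N : ℝ) + 1) * π / T) ^ 2) (hB : 0 ≤ B) (hd : 0 < d) :
    ∃ K, ∀ᶠ b in atTop, ∀ F : ℝ → ℝ → ℝ,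
      ContinuousOn (fun q : ℝ × ℝ => F q.1 q.2) (Icc 0 T ×ˢ univ) →
      (∀ t ∈ Icc 0 T, ∀ z, F t z ∈ Icc (fucikForce lo b z - B) (fucikForce hi b z + B)) →
      ∀ x x' : ℝ → ℝ, IsPeriodicSolution T F x x' →
        ∀ t ∈ Icc 0 T, (x t, x' t) ∈ Ioo (-d) K ×ˢ Ioo (-K) K := by
  obtain ⟨ε, hε, hmargin⟩ := exists_nonresonance_margin hT hlo hhi_pos hhi
  have hlo_pos : 0 < lo := (sq_nonneg _).trans_lt hlo
  set m := min 1 (min lo hi)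
  have hm : 0 < m := by positivity
  have hmlohi : m ≤ min lo hi := min_le_right _ _
  set K := ((B / (ε * m)) ^ 2 + 1) * Real.exp ((1 + hi + B) * T)
  have hstiff : ∀ᶠ b : ℝ in atTop, K ≤ b * d ^ 2 :=
    (tendsto_id.atTop_mul_const (by positivity)).eventually_ge_atTop K
  refine ⟨K, ?_⟩
  filter_upwards [hmargin, hstiff, eventually_ge_atTop 1]
    with b ⟨hN, hN'⟩ hbK hb F hF hbound x x' h t ht
  obtain ⟨s, hs, hsE⟩ := h.exists_fucikEnergy_le hT.le hF hB hbound hm (min_le_left _ _)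
    (hmlohi.trans (min_le_left _ _)) (hmlohi.trans (min_le_right _ _)) hb hε hN hN'
  refine mem_prod_Ioo_of_fucikEnergy_add_one_le hb hd.le hbK ?_
  calc fucikEnergy 1 b (x t) (x' t) + 1
      ≤ (fucikEnergy 1 b (x s) (x' s) + 1) * Real.exp ((1 + hi + B) * T) :=
        h.fucikEnergy_add_one_le_mul_exp hlo_pos.le hhi_pos.le hb hB hbound hs ht
    _ ≤ K := mul_le_mul_of_nonneg_right (by linarith) (Real.exp_pos _).le

lemma exists_neg_le_of_eventually_nonneg {X : Type*} [TopologicalSpace X] {S : Set X}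
    (hS : IsCompact S) {R : ℝ} {u : X → ℝ → ℝ}
    (hu : ContinuousOn (fun q : X × ℝ => u q.1 q.2) (S ×ˢ Ici R))
    (hnonneg : ∀ᶠ ρ in atTop, ∀ s ∈ S, 0 ≤ u s ρ) :
    ∃ C ≥ 0, ∀ s ∈ S, ∀ ρ ≥ R, -C ≤ u s ρ := by
  obtain ⟨M, hM⟩ := eventually_atTop.1 hnonneg
  obtain ⟨C, hC⟩ := (hS.prod isCompact_Icc).exists_bound_of_continuousOn
    (hu.mono (prod_mono_right (Icc_subset_Ici_self : Icc R M ⊆ Ici R)))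
  refine ⟨max C 0, le_max_right _ _, fun s hs ρ hρ => ?_⟩
  rcases le_total M ρ with h | h
  · exact (neg_nonpos.2 (le_max_right _ _)).trans (hM ρ h s hs)
  · exact (neg_le_neg (le_max_left _ _)).trans (neg_le_of_abs_le (hC (s, ρ) ⟨hs, hρ, h⟩))

lemma exists_mem_Icc_linear {X : Type*} [TopologicalSpace X] {S : Set X} (hS : IsCompact S)
    {R lo hi : ℝ} {f : X → ℝ → ℝ}
    (hf : ContinuousOn (fun q : X × ℝ => f q.1 q.2) (S ×ˢ Ici R))
    (hbound : ∀ᶠ ρ in atTop, ∀ s ∈ S, f s ρ ∈ Icc (lo * ρ) (hi * ρ)) :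
    ∃ C ≥ 0, ∀ s ∈ S, ∀ ρ ≥ R, f s ρ ∈ Icc (lo * ρ - C) (hi * ρ + C) := by
  obtain ⟨C₁, hC₁, hlower⟩ := exists_neg_le_of_eventually_nonneg hS
    (u := fun s ρ => f s ρ - lo * ρ) (by fun_prop)
    (hbound.mono fun ρ h s hs => sub_nonneg.2 (h s hs).1)
  obtain ⟨C₂, hC₂, hupper⟩ := exists_neg_le_of_eventually_nonneg hS
    (u := fun s ρ => hi * ρ - f s ρ) (by fun_prop)
    (hbound.mono fun ρ h s hs => sub_nonneg.2 (h s hs).2)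
  refine ⟨C₁ + C₂, add_nonneg hC₁ hC₂, fun s hs ρ hρ => ⟨?_, ?_⟩⟩
  · linarith [hlower s hs ρ hρ]
  · linarith [hupper s hs ρ hρ]

section Approximation

variable {R0 L0 δ lo hi C L t x : ℝ} {f : ℝ → ℝ → ℝ} {S : Set ℝ} {n : ℕ}

lemma exists_gFun_mem_Icc (hR0 : 0 < R0) (hlo : 0 ≤ lo) (hhi : 0 ≤ hi) (hS : IsCompact S)
    (hf : ContinuousOn (fun q : ℝ × ℝ => f q.1 q.2) (S ×ˢ Ici R0))
    (hbound : ∀ᶠ ρ in atTop, ∀ t ∈ S, f t ρ ∈ Icc (lo * ρ) (hi * ρ)) :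
    ∃ C ≥ 0, ∀ L, |L| ≤ L0 → ∀ t ∈ S, ∀ r ≥ 0,
      gFun R0 f L t r ∈ Icc (lo * r - C) (hi * r + C) := by
  obtain ⟨C, hC, hfC⟩ := exists_mem_Icc_linear hS hf hbound
  refine ⟨C + hi * R0 + L0 ^ 2 / R0 ^ 3, by positivity, fun L hL t ht r hr => ?_⟩
  obtain ⟨hlower, hupper⟩ := hfC t ht (r + R0) (le_add_of_nonneg_left hr)
  have hcentrifugal : 0 ≤ L ^ 2 / (r + R0) ^ 3 := by positivity
  have hcentrifugal_le : L ^ 2 / (r + R0) ^ 3 ≤ L0 ^ 2 / R0 ^ 3 :=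
    div_le_div₀ (sq_nonneg L0) (sq_le_sq' (neg_le_of_abs_le hL) (le_of_abs_le hL)) (by positivity)
      (pow_le_pow_left₀ hR0.le (le_add_of_nonneg_left hr) 3)
  rw [gFun, neg_div]
  constructor <;> linarith [mul_nonneg hlo hR0.le, mul_nonneg hhi hR0.le]

lemma gApprox_mem_Icc_fucikForce (hlo : 0 ≤ lo) (hhi : 0 ≤ hi) (hC : 0 ≤ C) (hn : 1 ≤ n)
    (hg : ∀ r ≥ 0, gFun R0 f L t r ∈ Icc (lo * r - C) (hi * r + C)) :
    gApprox R0 δ f n L t x ∈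
      Icc (fucikForce lo n x - (C + lo + |δ|)) (fucikForce hi n x + (C + lo + |δ|)) := by
  have hn' : (1 : ℝ) ≤ n := by exact_mod_cast hn
  have hδ := neg_abs_le δ
  have hδ' := le_abs_self δ
  unfold gApprox
  split_ifs with hlarge hpos
  · have hx : 0 ≤ x := (by positivity : 0 ≤ 1 / (n : ℝ)).trans hlarge
    rw [fucikForce_of_nonneg hx, fucikForce_of_nonneg hx]
    obtain ⟨hlower, hupper⟩ := hg x hx
    constructor <;> linarith [abs_nonneg δ]
  · have hs : n * x < 1 := by rwa [not_le, lt_div_iff₀ (by linarith), mul_comm] at hlarge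
    have hx₁ : x ≤ 1 := by nlinarith
    have hlox : lo * x ≤ lo := mul_le_of_le_one_right hlo hx₁
    have hhix : 0 ≤ hi * x := mul_nonneg hhi hpos.le
    rw [fucikForce_of_nonneg hpos.le, fucikForce_of_nonneg hpos.le]
    obtain ⟨hlower, hupper⟩ := hg x hpos.le
    have hgmem : gFun R0 f L t x ∈ Icc (lo * x - (C + lo + |δ|)) (hi * x + (C + lo + |δ|)) :=
      ⟨by linarith, by linarith⟩
    have hδmem : -δ ∈ Icc (lo * x - (C + lo + |δ|)) (hi * x + (C + lo + |δ|)) :=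
      ⟨by linarith, by linarith⟩
    have hconvex := convex_Icc _ _ hgmem hδmem (by positivity : 0 ≤ n * x) (sub_nonneg.2 hs.le)
      (add_sub_cancel _ _)
    convert hconvex using 1
    simp only [smul_eq_mul]
    ring
  · rw [fucikForce_of_nonpos (not_lt.1 hpos), fucikForce_of_nonpos (not_lt.1 hpos)]
    constructor <;> linarith

lemma gApprox_eq_min_max (hn : 1 ≤ n) :
    gApprox R0 δ f n L t x =
      max 0 (min 1 (n * x)) * (gFun R0 f L t (max x 0) + δ) - δ + n * min x 0 := by
  have hn₀ : (0 : ℝ) < n := by exact_mod_cast hn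
  unfold gApprox
  split_ifs with hlarge hpos
  · have hx : 0 ≤ x := (by positivity : 0 ≤ 1 / (n : ℝ)).trans hlarge
    rw [min_eq_left ((div_le_iff₀' hn₀).1 hlarge), max_eq_right zero_le_one, max_eq_left hx,
      min_eq_right hx]
    ring
  · rw [min_eq_right ((lt_div_iff₀' hn₀).1 (not_le.1 hlarge)).le, max_eq_right (by positivity),
      max_eq_left hpos.le, min_eq_right hpos.le]
    ring
  · have hx : x ≤ 0 := not_lt.1 hpos
    rw [max_eq_left ((min_le_right _ _).trans (mul_nonpos_of_nonneg_of_nonpos hn₀.le hx)),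
      min_eq_left hx]
    ring

lemma continuousOn_gApprox (hR0 : 0 < R0) (hn : 1 ≤ n)
    (hf : ContinuousOn (fun q : ℝ × ℝ => f q.1 q.2) (S ×ˢ Ici R0)) :
    ContinuousOn (fun q : ℝ × ℝ => gApprox R0 δ f n L q.1 q.2) (S ×ˢ univ) := by
  have hfcomp : ContinuousOn (fun q : ℝ × ℝ => f q.1 (max q.2 0 + R0)) (S ×ˢ univ) :=
    hf.comp (f := fun q : ℝ × ℝ => (q.1, max q.2 0 + R0)) (by fun_prop) fun q hq =>
      ⟨hq.1, mem_Ici.2 (le_add_of_nonneg_left (le_max_right _ _))⟩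
  have hcentrifugal : Continuous fun q : ℝ × ℝ => -(L ^ 2) / (max q.2 0 + R0) ^ 3 :=
    continuous_const.div (by fun_prop) fun q =>
      (pow_pos (add_pos_of_nonneg_of_pos (le_max_right _ _) hR0) 3).ne'
  have hgcomp : ContinuousOn (fun q : ℝ × ℝ => gFun R0 f L q.1 (max q.2 0)) (S ×ˢ univ) :=
    hcentrifugal.continuousOn.add hfcomp
  simp only [gApprox_eq_min_max hn]
  fun_prop

end Approximation

theorem statement6_general {R0 T L0 δ : ℝ} (hR0 : 0 < R0) (hT : 0 < T) {f : ℝ → ℝ → ℝ}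
    (hf : ContinuousOn (fun q : ℝ × ℝ => f q.1 q.2) (Icc 0 T ×ˢ Ici R0))
    {μlo μhi : ℝ} {N : ℕ} (hμlo : ((N : ℝ) * π / T) ^ 2 < μlo)
    (hμhi : μhi < (((N : ℝ) + 1) * π / T) ^ 2)
    (hliminf : ∀ ε > 0, ∀ᶠ ρ in atTop, ∀ t ∈ Icc 0 T, μlo - ε < f t ρ / ρ)
    (hlimsup : ∀ ε > 0, ∀ᶠ ρ in atTop, ∀ t ∈ Icc 0 T, f t ρ / ρ < μhi + ε) :
    ∃ nbar : ℕ, 0 < nbar ∧ ∃ Ξ : Set (ℝ × ℝ),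
      IsOpen Ξ ∧ Bornology.IsBounded Ξ ∧ Ξ ⊆ Ioi (-R0 / 2) ×ˢ (univ : Set ℝ) ∧
      ∀ n : ℕ, nbar < n → ∀ L, |L| ≤ L0 → ∀ x x' : ℝ → ℝ,
        IsPeriodicSolution T (gApprox R0 δ f n L) x x' →
        ∀ t ∈ Icc (0 : ℝ) T, (x t, x' t) ∈ Ξ := by
  obtain ⟨lo, hlo, hloμ⟩ := exists_between hμlo
  obtain ⟨hi, hμhi', hhi⟩ := exists_between (max_lt hμhi (by positivity))
  obtain ⟨hμhi', hhi₀⟩ := max_lt_iff.1 hμhi'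
  have hlo₀ : 0 < lo := (sq_nonneg _).trans_lt hlo
  have hflin : ∀ᶠ ρ in atTop, ∀ t ∈ Icc 0 T, f t ρ ∈ Icc (lo * ρ) (hi * ρ) := by
    filter_upwards [hliminf _ (sub_pos.2 hloμ), hlimsup _ (sub_pos.2 hμhi'), eventually_gt_atTop 0]
      with ρ hlower hupper hρ t ht
    exact ⟨(le_div_iff₀ hρ).1 (by linarith [hlower t ht]),
      (div_le_iff₀ hρ).1 (by linarith [hupper t ht])⟩
  obtain ⟨C, hC, hg⟩ := exists_gFun_mem_Icc (L0 := L0) hR0 hlo₀.le hhi₀.le isCompact_Icc hf hflin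
  obtain ⟨K, hK⟩ := exists_mem_prod_Ioo_of_nonresonance (B := C + lo + |δ|) hT hlo hhi₀ hhi
    (by positivity) (half_pos hR0)
  obtain ⟨n₀, hn₀⟩ := eventually_atTop.1 (tendsto_natCast_atTop_atTop.eventually hK)
  refine ⟨n₀ + 1, n₀.succ_pos, Ioo (-(R0 / 2)) K ×ˢ Ioo (-K) K, isOpen_Ioo.prod isOpen_Ioo,
    (Metric.isBounded_Ioo _ _).prod (Metric.isBounded_Ioo _ _), ?_, fun n hn L hL x x' h => ?_⟩
  · rw [neg_div]
    exact prod_mono Ioo_subset_Ioi_self (subset_univ _)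
  · have hn₁ : 1 ≤ n := by omega
    exact hn₀ n (by omega) _ (continuousOn_gApprox hR0 hn₁ hf) (fun t ht z =>
      gApprox_mem_Icc_fucikForce hlo₀.le hhi₀.le hC hn₁ (hg L hL t ht)) x x' h

theorem statement6
    (R0 T L0 δ : ℝ) (hR0 : 0 < R0) (hT : 0 < T) (hL0 : 0 < L0) (hδ : 0 < δ)
    (f : ℝ → ℝ → ℝ)
    (hf_cont : ContinuousOn (fun q : ℝ × ℝ => f q.1 q.2) (univ ×ˢ Ici R0))
    (hf_per : ∀ t ρ, f (t + T) ρ = f t ρ)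
    (μlo μhi : ℝ) (N : ℕ) (hμ : μlo ≤ μhi)
    (h1 : ((N : ℝ) * π / T) ^ 2 < μlo)
    (h2 : μhi < (((N : ℝ) + 1) * π / T) ^ 2)
    (hlo : ∀ ε > (0 : ℝ), ∃ M : ℝ, R0 ≤ M ∧ ∀ t ρ : ℝ, M ≤ ρ → μlo - ε < f t ρ / ρ)
    (hhi : ∀ ε > (0 : ℝ), ∃ M : ℝ, R0 ≤ M ∧ ∀ t ρ : ℝ, M ≤ ρ → f t ρ / ρ < μhi + ε) :
    ∃ nbar : ℕ, 0 < nbar ∧ ∃ Ξ : Set (ℝ × ℝ),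
      IsOpen Ξ ∧ Bornology.IsBounded Ξ ∧ Ξ ⊆ Ioi (-R0 / 2) ×ˢ (univ : Set ℝ) ∧
      ∀ n : ℕ, nbar < n → ∀ L ∈ Icc (0 : ℝ) L0, ∀ x x' : ℝ → ℝ,
        (∀ t ∈ Icc (0 : ℝ) T,
          HasDerivWithinAt x (x' t) (Icc (0 : ℝ) T) t ∧
          HasDerivWithinAt x' (-(gApprox R0 δ f n L t (x t))) (Icc (0 : ℝ) T) t) →
        x 0 = x T → x' 0 = x' T →
        ∀ t ∈ Icc (0 : ℝ) T, (x t, x' t) ∈ Ξ := by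
  obtain ⟨nbar, hnbar, Ξ, hopen, hbdd, hsub, hΞ⟩ := statement6_general hR0 hT
    (hf_cont.mono (prod_mono_left (subset_univ _))) h1 h2
    (fun ε hε => let ⟨M, _, hM⟩ := hlo ε hε; eventually_atTop.2 ⟨M, fun ρ hρ t _ => hM t ρ hρ⟩)
    (fun ε hε => let ⟨M, _, hM⟩ := hhi ε hε; eventually_atTop.2 ⟨M, fun ρ hρ t _ => hM t ρ hρ⟩)
  exact ⟨nbar, hnbar, Ξ, hopen, hbdd, hsub, fun n hn L hL x x' hsol hx hx' =>
    hΞ n hn L ((abs_of_nonneg hL.1).trans_le hL.2) x x'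
      ⟨fun t ht => (hsol t ht).1, fun t ht => (hsol t ht).2, hx, hx'⟩⟩
end
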